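/- Let p be an odd prime. If p ≡ 1 (mod 4), write p = x^2 + 4y^2 with integers x, y; then (−1)^{⌊p/4⌋}·Σ_{k=0}^{p−1} k^2·C(2k,k)^3/(−512)^k ≡ x^2/27 − p/18 + p^2/(216x^2) (mod p^3) and (−1)^{⌊p/4⌋}·Σ_{k=0}^{p−1} k^3·C(2k,k)^3/(−512)^k ≡ −x^2/162 − p/216 − p^2/(1296x^2) (mod p^3). If p ≡ 3 (mod 4) and p ≠ 3, then (−1)^{⌊p/4⌋}·Σ_{k=0}^{p−1} k^2·C(2k,k)^3/(−512)^k ≡ −(1/18)R_1(p) − p/27 (mod p^2) and (−1)^{⌊p/4⌋}·Σ_{k=0}^{p−1} k^3·C(2k,k)^3/(−512)^k ≡ (1/108)R_1(p) − (5/648)p (mod p^2). -/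

import Mathlib

/-- `a ≡ b (mod p^r)` for rationals: the numerator of `a - b` in lowest terms
is divisible by `p^r`. -/
def ratCongr (p r : ℕ) (a b : ℚ) : Prop := (p : ℤ)^r ∣ (a - b).num
/-- `R_1(p) = (2p + 2 - 2^(p-1)) * C((p-1)/2, ⌊p/4⌋)^2`. -/
def R1 (p : ℕ) : ℚ :=
  (2*(p:ℚ) + 2 - 2^(p-1)) * (((p-1)/2).choose (p/4) : ℚ)^2

/-!
The terms `C(2k, k)^3 / (-512)^k` are the case `u = 0` of those of the series
`₃F₂(1/2 + 3u, 1/2 + u, 1/2 - u; 1 + 2u, 1 + u; -1/8)`. The moments of its first `(p + 1) / 2` terms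
are power series in `u` with `p`-integral coefficients, so for `u = p y` they are quadratic in `y`
modulo `p ^ 3` and their values at `y = 0` can be interpolated from those at `y = 1/2, -1/2, -1/6`.
At these nodes the series terminates, and the contiguous relations `u ↦ u + 1` evaluate its moments
in closed form.

For `p ≡ 3 (mod 4)` the closed forms are expanded modulo `p ^ 2` by means of harmonic sums. For
`p ≡ 1 (mod 4)` they are values of Morita's `p`-adic gamma function. So is a quartic Jacobi sum `J`
over the Teichmüller character, which is evaluated modulo `p ^ 3` in the style of Chowla, Dwork and
Evans. As `J` comes from an element of `ℤ[i]` of norm `p`, it satisfies `(2x)^2 = (J + p / J)^2`.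
-/

open Finset

/-! ### Reduction of rational numbers -/

/-- `ReducesTo N q z` says that the rational `q` has a denominator prime to `N` and that its residue
class modulo `N` is `z`. It is the graph of the ring homomorphism `ℤ_(N) → ZMod N`, encoded as a
relation so that it can be applied to rationals without bundling their integrality. -/
def ReducesTo (N : ℕ) (q : ℚ) (z : ZMod N) : Prop :=
  ∃ a b : ℤ, b ≠ 0 ∧ IsUnit (b : ZMod N) ∧ q * b = a ∧ z * b = a

namespace ReducesTo

variable {N : ℕ} {q r : ℚ} {z w : ZMod N}

theorem intCast (a : ℤ) : ReducesTo N a a := ⟨a, 1, by simp⟩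

theorem natCast (a : ℕ) : ReducesTo N a a := by simpa using intCast (N := N) a

theorem one : ReducesTo N 1 1 := by simpa using natCast (N := N) 1

theorem zero : ReducesTo N 0 0 := by simpa using natCast (N := N) 0

theorem ofNat (a : ℕ) [a.AtLeastTwo] : ReducesTo N (OfNat.ofNat a) (OfNat.ofNat a) := by
  simpa using natCast (N := N) (OfNat.ofNat a)

theorem add (hq : ReducesTo N q z) (hr : ReducesTo N r w) : ReducesTo N (q + r) (z + w) := by
  obtain ⟨a, b, hb, ub, hqa, hza⟩ := hq
  obtain ⟨c, d, hd, ud, hrc, hwc⟩ := hr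
  refine ⟨a * d + c * b, b * d, mul_ne_zero hb hd, by exact_mod_cast ub.mul ud, ?_, ?_⟩
  · push_cast; linear_combination (d : ℚ) * hqa + (b : ℚ) * hrc
  · push_cast; linear_combination (d : ZMod N) * hza + (b : ZMod N) * hwc

theorem mul (hq : ReducesTo N q z) (hr : ReducesTo N r w) : ReducesTo N (q * r) (z * w) := by
  obtain ⟨a, b, hb, ub, hqa, hza⟩ := hq
  obtain ⟨c, d, hd, ud, hrc, hwc⟩ := hr
  refine ⟨a * c, b * d, mul_ne_zero hb hd, by exact_mod_cast ub.mul ud, ?_, ?_⟩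
  · push_cast; linear_combination (r * d : ℚ) * hqa + (a : ℚ) * hrc
  · push_cast; linear_combination (w * d : ZMod N) * hza + (a : ZMod N) * hwc

theorem neg (hq : ReducesTo N q z) : ReducesTo N (-q) (-z) := by
  simpa using (intCast (N := N) (-1)).mul hq

theorem sub (hq : ReducesTo N q z) (hr : ReducesTo N r w) : ReducesTo N (q - r) (z - w) := by
  simpa only [sub_eq_add_neg] using hq.add hr.neg

theorem sum {ι : Type*} (s : Finset ι) {f : ι → ℚ} {g : ι → ZMod N}
    (h : ∀ i ∈ s, ReducesTo N (f i) (g i)) : ReducesTo N (∑ i ∈ s, f i) (∑ i ∈ s, g i) := by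
  induction s using Finset.cons_induction with
  | empty => simpa using zero
  | cons a s ha ih =>
    rw [sum_cons, sum_cons]
    exact (h a (mem_cons_self a s)).add (ih fun i hi ↦ h i (mem_cons_of_mem hi))

theorem prod {ι : Type*} (s : Finset ι) {f : ι → ℚ} {g : ι → ZMod N}
    (h : ∀ i ∈ s, ReducesTo N (f i) (g i)) : ReducesTo N (∏ i ∈ s, f i) (∏ i ∈ s, g i) := by
  induction s using Finset.cons_induction with
  | empty => simpa using one
  | cons a s ha ih =>
    rw [prod_cons, prod_cons]
    exact (h a (mem_cons_self a s)).mul (ih fun i hi ↦ h i (mem_cons_of_mem hi))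

theorem pow (hq : ReducesTo N q z) (k : ℕ) : ReducesTo N (q ^ k) (z ^ k) := by
  simpa using prod (range k) fun _ _ ↦ hq

theorem unique (hz : ReducesTo N q z) (hw : ReducesTo N q w) : z = w := by
  obtain ⟨a, b, -, ub, hqa, hza⟩ := hz
  obtain ⟨c, d, -, ud, hqc, hwc⟩ := hw
  have cross : a * d = c * b := by
    have : (a * d : ℚ) = c * b := by rw [← hqa, ← hqc]; ring
    exact_mod_cast this
  have cross' : (a * d : ZMod N) = c * b := by exact_mod_cast congrArg (Int.cast : ℤ → ZMod N) cross
  apply (ub.mul ud).mul_right_cancel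
  linear_combination d * hza - b * hwc + cross'

theorem inv (hq : ReducesTo N q z) (uz : IsUnit z) : ReducesTo N q⁻¹ z⁻¹ := by
  rcases eq_or_ne q 0 with rfl | hq0
  · obtain rfl : z = 0 := hq.unique zero
    have := subsingleton_of_zero_eq_one (isUnit_zero_iff.1 uz)
    exact ⟨0, 1, one_ne_zero, by simp, by simp, Subsingleton.elim _ _⟩
  · obtain ⟨a, b, hb, ub, hqa, hza⟩ := hq
    have ha : (a : ℚ) ≠ 0 := hqa ▸ mul_ne_zero hq0 (by exact_mod_cast hb)
    refine ⟨b, a, by exact_mod_cast ha, hza ▸ uz.mul ub, ?_, ?_⟩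
    · rw [← hqa]; field_simp
    · rw [← hza]; linear_combination (b : ZMod N) * ZMod.mul_inv_of_unit z uz

theorem div (hq : ReducesTo N q z) (hr : ReducesTo N r w) (uw : IsUnit w) :
    ReducesTo N (q / r) (z * w⁻¹) := by
  simpa only [div_eq_mul_inv] using hq.mul (hr.inv uw)

theorem dvd_num (hq : ReducesTo N q 0) : (N : ℤ) ∣ q.num := by
  obtain ⟨a, b, -, ub, hqa, hza⟩ := hq
  have dvd_a : (N : ℤ) ∣ a := by
    rw [← ZMod.intCast_zmod_eq_zero_iff_dvd, ← hza, zero_mul]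
  have cross : q.num * b = a * q.den := by
    have : (q.num * b : ℚ) = a * q.den := by
      rw [← hqa, ← Rat.mul_den_eq_num]; ring
    exact_mod_cast this
  exact ((ZMod.coe_int_isUnit_iff_isCoprime _ _).1 ub).dvd_of_dvd_mul_right
    (cross ▸ dvd_a.mul_right _)

end ReducesTo

/-! ### A contiguous family of hypergeometric sums -/

section Contiguity

variable {F : Type*} [Field F]

/-- The ratio of consecutive terms of the series
`₃F₂(1/2 + 3u, 1/2 + u, 1/2 - u; 1 + 2u, 1 + u; -1/8)`. -/
def hyperRatio (u : F) (k : ℕ) : F :=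
  (1 / 2 + 3 * u + k) * (1 / 2 + u + k) * (1 / 2 - u + k) /
    ((1 + k) * (1 + 2 * u + k) * (1 + u + k)) * (-1 / 8)

/-- The terms of the series `₃F₂(1/2 + 3u, 1/2 + u, 1/2 - u; 1 + 2u, 1 + u; -1/8)`, a deformation
of the terms `C(2k, k)^3 / (-512)^k`, to which they specialize at `u = 0`. -/
def hyperTerm (u : F) (k : ℕ) : F := ∏ j ∈ range k, hyperRatio u j

/-- The partial sum up to index `n` of the hypergeometric series. -/
def moment₀ (u : F) (n : ℕ) : F := ∑ k ∈ range (n + 1), hyperTerm u k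

/-- A linear moment of the hypergeometric terms up to index `n`; its weight is the one for which
`u ↦ u + 1` multiplies the moment by a rational function. -/
def moment₁ (u : F) (n : ℕ) : F := ∑ k ∈ range (n + 1), (k + (u + 1 / 6)) * hyperTerm u k

/-- A quadratic moment of the hypergeometric terms up to index `n`; its weight is the one for which
`u ↦ u + 1` swaps it with `moment₀`, up to rational functions. -/
def moment₂ (u : F) (n : ℕ) : F :=
  ∑ k ∈ range (n + 1),
    ((k : F) ^ 2 + (2 * u + 2 / 9) * k + (2 * u + 1) * (6 * u + 1) / 36) * hyperTerm u k

theorem hyperTerm_succ (u : F) (k : ℕ) : hyperTerm u (k + 1) = hyperTerm u k * hyperRatio u k :=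
  prod_range_succ _ _

theorem hyperTerm_eq_zero {u : F} {n k : ℕ} (hn : hyperRatio u n = 0) (hk : n < k) :
    hyperTerm u k = 0 :=
  prod_eq_zero (mem_range.2 hk) hn

theorem sum_hyperTerm_of_le {u : F} {n m : ℕ} (hn : hyperRatio u n = 0) (h : n ≤ m) (w : ℕ → F) :
    ∑ k ∈ range (m + 1), w k * hyperTerm u k = ∑ k ∈ range (n + 1), w k * hyperTerm u k := by
  refine (sum_subset (range_subset_range.2 (by lia)) fun k _ hk ↦ ?_).symm
  rw [hyperTerm_eq_zero hn (by simpa using hk), mul_zero]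

theorem moment₀_of_le {u : F} {n m : ℕ} (hn : hyperRatio u n = 0) (h : n ≤ m) :
    moment₀ u m = moment₀ u n := by
  simpa only [moment₀, one_mul] using sum_hyperTerm_of_le hn h fun _ ↦ 1

theorem moment₁_of_le {u : F} {n m : ℕ} (hn : hyperRatio u n = 0) (h : n ≤ m) :
    moment₁ u m = moment₁ u n := sum_hyperTerm_of_le hn h _

theorem moment₂_of_le {u : F} {n m : ℕ} (hn : hyperRatio u n = 0) (h : n ≤ m) :
    moment₂ u m = moment₂ u n := sum_hyperTerm_of_le hn h _

/-- The ratio of consecutive terms of `bridgeTerm`. -/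
def bridgeRatio (u : F) (k : ℕ) : F :=
  (1 / 2 + 3 * u + k) * (1 / 2 + u + k) * (-1 / 2 - u + k) /
    ((1 + k) * (3 + 2 * u + k) * (2 + u + k)) * (-1 / 8)

/-- A common divisor of `hyperTerm u k` and `hyperTerm (u + 1) k`: both are polynomial multiples of
it, so certificates for relations between the two can be written without dividing by quantities
that vanish when the series terminates. -/
def bridgeTerm (u : F) (k : ℕ) : F := ∏ j ∈ range k, bridgeRatio u j

theorem bridgeTerm_succ (u : F) (k : ℕ) :
    bridgeTerm u (k + 1) = bridgeTerm u k * bridgeRatio u k :=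
  prod_range_succ _ _

/-- The conditions under which the moments at `u` and at `u + 1`, summed up to `n`, are related: no
denominator of a term up to index `n` vanishes, and `bridgeTerm u` vanishes beyond index `n`. -/
structure Contiguous (u : F) (n : ℕ) : Prop where
  two_mul_ne : ∀ j ≤ n + 1, 1 + 2 * u + j ≠ 0
  add_ne : ∀ j ≤ n + 1, 1 + u + j ≠ 0
  terminates : (1 / 2 + 3 * u + n) * (1 / 2 + u + n) * (-1 / 2 - u + n) = 0

namespace Contiguous

variable {u : F} {n k : ℕ}

theorem bridge_two_mul_ne (h : Contiguous u n) (hk : k < n) : 3 + 2 * u + k ≠ 0 := by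
  have := h.two_mul_ne (k + 2) (by lia)
  contrapose! this
  push_cast
  linear_combination this

theorem bridge_add_ne (h : Contiguous u n) (hk : k < n) : 2 + u + k ≠ 0 := by
  have := h.add_ne (k + 1) (by lia)
  contrapose! this
  push_cast
  linear_combination this

theorem bridgeTerm_eq_zero (h : Contiguous u n) : bridgeTerm u (n + 1) = 0 := by
  rw [bridgeTerm_succ, bridgeRatio, h.terminates]
  simp

variable [CharZero F]

theorem mul_hyperTerm (h : Contiguous u n) (hk : k ≤ n) :
    (1 + 2 * u) ^ 2 * (1 + u) ^ 2 * hyperTerm u k =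
      -(bridgeTerm u k * ((1 + 2 * u + k) * (2 + 2 * u + k) * (1 + u + k) * (k - 1 / 2 - u))) := by
  induction k with
  | zero =>
    simp only [hyperTerm, bridgeTerm, range_zero, prod_empty, Nat.cast_zero]
    ring
  | succ k ih =>
    have := h.two_mul_ne k (by lia)
    have := h.add_ne k (by lia)
    have := h.bridge_two_mul_ne hk
    have := h.bridge_add_ne hk
    have : 1 + (k : F) ≠ 0 := by rw [add_comm]; exact Nat.cast_add_one_ne_zero k
    rw [hyperTerm_succ, ← mul_assoc, ih (by lia), bridgeTerm_succ, hyperRatio,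
      bridgeRatio]
    push_cast
    field_simp
    ring

theorem mul_hyperTerm_add_one (h : Contiguous u n) (hk : k ≤ n) :
    3 / 16 * (6 * u + 1) * (6 * u + 5) * (1 + 2 * u) ^ 2 * hyperTerm (u + 1) k =
      bridgeTerm u k *
        ((1 / 2 + 3 * u + k) * (3 / 2 + 3 * u + k) * (5 / 2 + 3 * u + k) * (1 / 2 + u + k)) := by
  induction k with
  | zero =>
    simp only [hyperTerm, bridgeTerm, range_zero, prod_empty, Nat.cast_zero]
    ring
  | succ k ih =>
    have := h.bridge_two_mul_ne hk
    have := h.bridge_add_ne hk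
    have : 1 + (k : F) ≠ 0 := by rw [add_comm]; exact Nat.cast_add_one_ne_zero k
    rw [hyperTerm_succ, ← mul_assoc, ih (by lia), bridgeTerm_succ, hyperRatio,
      bridgeRatio, show 1 + 2 * (u + 1) + (k : F) = 3 + 2 * u + k by ring,
      show 1 + (u + 1) + (k : F) = 2 + u + k by ring]
    push_cast
    field_simp
    ring

theorem bridgeTerm_recurrence (h : Contiguous u n) (hk : k ≤ n) :
    (k + 1) * (k + 3 + 2 * u) * (k + 2 + u) * bridgeTerm u (k + 1) =
      -(1 / 8) * (1 / 2 + 3 * u + k) * (1 / 2 + u + k) * (k - 1 / 2 - u) * bridgeTerm u k := by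
  rw [bridgeTerm_succ, bridgeRatio]
  rcases hk.eq_or_lt with rfl | hk
  · rw [h.terminates]
    linear_combination (1 / 8) * bridgeTerm u k * h.terminates
  · have := h.bridge_two_mul_ne hk
    have := h.bridge_add_ne hk
    have : 1 + (k : F) ≠ 0 := by rw [add_comm]; exact Nat.cast_add_one_ne_zero k
    field_simp
    ring

/-- Zeilberger's method: `q` is a polynomial certificate, for which the difference of the two
summands telescopes. -/
theorem sum_hyperTerm_add_one (h : Contiguous u n) (q : F → F) {f g : ℕ → F}
    (cert : ∀ k : ℕ,
      f k * ((1 / 2 + 3 * u + k) * (3 / 2 + 3 * u + k) * (5 / 2 + 3 * u + k) * (1 / 2 + u + k)) +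
        g k * ((1 + 2 * u + k) * (2 + 2 * u + k) * (1 + u + k) * (k - 1 / 2 - u)) =
      q (k + 1) * (-(1 / 8) * (1 / 2 + 3 * u + k) * (1 / 2 + u + k) * (k - 1 / 2 - u)) -
        q k * (k * (k + 2 + 2 * u) * (k + 1 + u))) :
    3 / 16 * (6 * u + 1) * (6 * u + 5) * ∑ k ∈ range (n + 1), f k * hyperTerm (u + 1) k =
      (1 + u) ^ 2 * ∑ k ∈ range (n + 1), g k * hyperTerm u k := by
  let G (k : ℕ) : F := q k * (k * (k + 2 + 2 * u) * (k + 1 + u)) * bridgeTerm u k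
  have telescope : ∀ k ∈ range (n + 1),
      (1 + 2 * u) ^ 2 * (3 / 16 * (6 * u + 1) * (6 * u + 5) * (f k * hyperTerm (u + 1) k) -
        (1 + u) ^ 2 * (g k * hyperTerm u k)) = G (k + 1) - G k := by
    intro k hk
    have hk : k ≤ n := mem_range_succ_iff.1 hk
    simp only [G]
    push_cast
    linear_combination bridgeTerm u k * cert k + f k * h.mul_hyperTerm_add_one hk -
      g k * h.mul_hyperTerm hk - q (k + 1) * h.bridgeTerm_recurrence hk
  have ne : 1 + 2 * u ≠ 0 := by simpa using h.two_mul_ne 0 (Nat.zero_le _)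
  rw [← sub_eq_zero, ← mul_right_inj' (pow_ne_zero 2 ne), mul_zero, mul_sum, mul_sum,
    ← sum_sub_distrib, mul_sum, sum_congr rfl telescope, sum_range_sub]
  simp [G, h.bridgeTerm_eq_zero]

theorem moment₀_add_one (h : Contiguous u n) :
    (6 * u + 1) ^ 2 * (6 * u + 5) ^ 2 * moment₀ (u + 1) n =
      2304 * (1 + u) ^ 2 * moment₂ u n := by
  have := h.sum_hyperTerm_add_one (f := fun _ ↦ (6 * u + 1) * (6 * u + 5))
    (g := fun k ↦
      432 * ((k : F) ^ 2 + (2 * u + 2 / 9) * k + (2 * u + 1) * (6 * u + 1) / 36))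
    (fun k ↦ 4 * (264 * u ^ 3 + 300 * u ^ 2 + 94 * u + 5 + 2 * (19 + 28 * u - 36 * u ^ 2) * k -
      32 * (9 * u + 2) * k ^ 2 - 96 * k ^ 3)) fun k ↦ by ring
  simp only [mul_assoc (432 : F), ← mul_sum] at this
  rw [moment₀, moment₂]
  linear_combination (16 / 3) * this

theorem moment₂_add_one (h : Contiguous u n) (h₁ : 6 * u + 1 ≠ 0) (h₅ : 6 * u + 5 ≠ 0) :
    81 * moment₂ (u + 1) n = 64 * (1 + u) ^ 2 * moment₀ u n := by
  have := h.sum_hyperTerm_add_one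
    (f := fun k ↦ 27 * ((k : F) ^ 2 + (2 * (u + 1) + 2 / 9) * k +
      (2 * (u + 1) + 1) * (6 * (u + 1) + 1) / 36))
    (g := fun _ ↦ 4 * ((6 * u + 1) * (6 * u + 5)))
    (fun k ↦ -(888 * u ^ 3 + 1292 * u ^ 2 + 562 * u + 69 + (792 * u ^ 2 + 744 * u + 142) * k +
      (216 * u + 100) * k ^ 2 + 24 * k ^ 3)) fun k ↦ by ring
  simp only [mul_assoc (27 : F), ← mul_sum] at this
  rw [moment₀, moment₂]
  apply mul_left_cancel₀ (mul_ne_zero h₁ h₅)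
  linear_combination 16 * this

theorem moment₁_add_one (h : Contiguous u n) :
    3 * ((6 * u + 1) * (6 * u + 5)) * moment₁ (u + 1) n =
      128 * (1 + u) ^ 2 * moment₁ u n := by
  have := h.sum_hyperTerm_add_one (f := fun k ↦ (k : F) + (u + 1 + 1 / 6))
    (g := fun k ↦ 8 * ((k : F) + (u + 1 / 6)))
    (fun k ↦ -(2 / 3) * (20 * u ^ 2 + 8 * u - 1 + 4 * (8 * u + 3) * k + 12 * k ^ 2))
    fun k ↦ by ring
  simp only [mul_assoc (8 : F), ← mul_sum] at this
  rw [moment₁, moment₁]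
  linear_combination 16 * this

end Contiguous

end Contiguity

/-! ### The moments at three nodes -/

section Nodes

/-- The node `u = p / 2`, where `p = 2 * n + 1`. -/
def halfNode (n : ℕ) : ℚ := (2 * n + 1) / 2

/-- The node `u = -p / 2`, where `p = 2 * n + 1`. -/
def negHalfNode (n : ℕ) : ℚ := -(2 * n + 1) / 2

/-- The node `u = -p / 6`, where `p = 2 * n + 1`. -/
def negSixthNode (n : ℕ) : ℚ := -(2 * n + 1) / 6

theorem hyperRatio_halfNode (n : ℕ) : hyperRatio (halfNode n) n = 0 := by
  rw [hyperRatio, halfNode, show (1 / 2 - (2 * (n : ℚ) + 1) / 2 + n) = 0 by ring]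
  simp only [mul_zero, zero_div, zero_mul]

theorem hyperRatio_negHalfNode (n : ℕ) : hyperRatio (negHalfNode n) n = 0 := by
  rw [hyperRatio, negHalfNode, show (1 / 2 + -(2 * (n : ℚ) + 1) / 2 + n) = 0 by ring]
  simp only [mul_zero, zero_div, zero_mul]

theorem hyperRatio_negSixthNode (n : ℕ) : hyperRatio (negSixthNode n) n = 0 := by
  rw [hyperRatio, negSixthNode, show (1 / 2 + 3 * (-(2 * (n : ℚ) + 1) / 6) + n) = 0 by ring]
  simp only [zero_mul, zero_div]

theorem contiguous_halfNode (n : ℕ) : Contiguous (halfNode n) (n + 1) where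
  two_mul_ne j _ := by rw [halfNode]; positivity
  add_ne j _ := by rw [halfNode]; positivity
  terminates := by rw [halfNode]; push_cast; ring

theorem contiguous_negHalfNode (n : ℕ) : Contiguous (negHalfNode (n + 2)) (n + 2) where
  two_mul_ne j hj h := by
    have : (j : ℤ) - 2 * n - 4 = 0 := by
      have : ((j : ℤ) - 2 * n - 4 : ℚ) = 0 := by
        rw [negHalfNode] at h; push_cast at h ⊢; linarith
      exact_mod_cast this
    omega
  add_ne j _ h := by
    have : 2 * (j : ℤ) - 2 * n - 3 = 0 := by
      have : (2 * (j : ℤ) - 2 * n - 3 : ℚ) = 0 := by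
        rw [negHalfNode] at h; push_cast at h ⊢; linarith
      exact_mod_cast this
    omega
  terminates := by rw [negHalfNode]; push_cast; ring

theorem contiguous_negSixthNode {n : ℕ} (hn : n % 3 ≠ 1) :
    Contiguous (negSixthNode (n + 3)) (n + 3) where
  two_mul_ne j _ h := by
    have : 3 * (j : ℤ) - 2 * n - 4 = 0 := by
      have : (3 * (j : ℤ) - 2 * n - 4 : ℚ) = 0 := by
        rw [negSixthNode] at h; push_cast at h ⊢; linarith
      exact_mod_cast this
    omega
  add_ne j _ h := by
    have : 6 * (j : ℤ) - 2 * n - 1 = 0 := by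
      have : (6 * (j : ℤ) - 2 * n - 1 : ℚ) = 0 := by
        rw [negSixthNode] at h; push_cast at h ⊢; linarith
      exact_mod_cast this
    omega
  terminates := by rw [negSixthNode]; push_cast; ring

theorem halfNode_succ (n : ℕ) : halfNode (n + 1) = halfNode n + 1 := by
  rw [halfNode, halfNode]; push_cast; ring

theorem negHalfNode_succ (n : ℕ) : negHalfNode n = negHalfNode (n + 1) + 1 := by
  rw [negHalfNode, negHalfNode]; push_cast; ring

theorem negSixthNode_add_three (n : ℕ) : negSixthNode n = negSixthNode (n + 3) + 1 := by
  rw [negSixthNode, negSixthNode]; push_cast; ring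

theorem cast_eq_halfNode (n : ℕ) : (n : ℚ) = halfNode n - 1 / 2 := by
  rw [halfNode]; ring

theorem cast_eq_negHalfNode (n : ℕ) : (n : ℚ) = -negHalfNode (n + 2) - 5 / 2 := by
  rw [negHalfNode]; push_cast; ring

theorem cast_eq_negSixthNode (n : ℕ) : (n : ℚ) = -3 * negSixthNode (n + 3) - 7 / 2 := by
  rw [negSixthNode]; push_cast; ring

theorem moment₀_halfNode_succ (n : ℕ) :
    moment₀ (halfNode (n + 1)) (n + 1) =
      (6 * (2 * n + 3) / ((3 * n + 2) * (3 * n + 4))) ^ 2 * moment₂ (halfNode n) n := by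
  have h := (contiguous_halfNode n).moment₀_add_one
  rw [moment₂_of_le (hyperRatio_halfNode n) (by lia), ← halfNode_succ] at h
  rw [div_pow, div_mul_eq_mul_div, eq_div_iff (by positivity), cast_eq_halfNode]
  linear_combination h / 16

theorem moment₂_halfNode_succ (n : ℕ) :
    moment₂ (halfNode (n + 1)) (n + 1) = (4 * (2 * n + 3) / 9) ^ 2 * moment₀ (halfNode n) n := by
  have h := (contiguous_halfNode n).moment₂_add_one
    (by rw [halfNode]; positivity) (by rw [halfNode]; positivity)
  rw [moment₀_of_le (hyperRatio_halfNode n) (by lia), ← halfNode_succ] at h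
  rw [cast_eq_halfNode]
  linear_combination h / 81

theorem moment₁_halfNode_succ (n : ℕ) :
    moment₁ (halfNode (n + 1)) (n + 1) =
      8 * (2 * n + 3) ^ 2 / (3 * ((3 * n + 2) * (3 * n + 4))) * moment₁ (halfNode n) n := by
  have h := (contiguous_halfNode n).moment₁_add_one
  rw [moment₁_of_le (hyperRatio_halfNode n) (by lia), ← halfNode_succ] at h
  rw [div_mul_eq_mul_div, eq_div_iff (by positivity), cast_eq_halfNode]
  linear_combination h / 4

theorem moment₀_halfNode_zero : moment₀ (halfNode 0) 0 = 1 := by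
  simp [moment₀, hyperTerm]

theorem moment₂_halfNode_zero : moment₂ (halfNode 0) 0 = 2 / 9 := by
  norm_num [moment₂, hyperTerm, halfNode]

theorem moment₁_halfNode_zero : moment₁ (halfNode 0) 0 = 2 / 3 := by
  norm_num [moment₁, hyperTerm, halfNode]

theorem moments_negHalfNode_zero : moment₀ (negHalfNode 0) 0 = 1 ∧
    moment₁ (negHalfNode 0) 0 = -1 / 3 ∧ moment₂ (negHalfNode 0) 0 = 0 := by
  norm_num [moment₀, moment₁, moment₂, hyperTerm, negHalfNode]

theorem moments_negHalfNode_one : moment₀ (negHalfNode 1) 1 = 0 ∧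
    moment₁ (negHalfNode 1) 1 = -1 ∧ moment₂ (negHalfNode 1) 1 = 16 / 9 := by
  norm_num [moment₀, moment₁, moment₂, hyperTerm, hyperRatio, negHalfNode, sum_range_succ]

theorem moment₂_negHalfNode_succ (n : ℕ) :
    moment₂ (negHalfNode (n + 1)) (n + 1) =
      ((3 * n + 4) * (3 * n + 2) / (6 * (2 * n + 1))) ^ 2 * moment₀ (negHalfNode n) n := by
  obtain _ | n := n
  · norm_num [moments_negHalfNode_zero, moments_negHalfNode_one]
  have h := (contiguous_negHalfNode n).moment₀_add_one
  rw [← negHalfNode_succ, moment₀_of_le (hyperRatio_negHalfNode _) (by lia)] at h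
  push_cast
  rw [div_pow, div_mul_eq_mul_div, eq_div_iff (by positivity), cast_eq_negHalfNode]
  linear_combination -h / 16

theorem moment₀_negHalfNode_succ (n : ℕ) :
    moment₀ (negHalfNode (n + 1)) (n + 1) =
      (9 / (4 * (2 * n + 1))) ^ 2 * moment₂ (negHalfNode n) n := by
  obtain _ | n := n
  · norm_num [moments_negHalfNode_zero, moments_negHalfNode_one]
  have h := (contiguous_negHalfNode n).moment₂_add_one
    (by rw [negHalfNode]; push_cast; apply ne_of_lt; linarith [(n.cast_nonneg : (0 : ℚ) ≤ n)])
    (by rw [negHalfNode]; push_cast; apply ne_of_lt; linarith [(n.cast_nonneg : (0 : ℚ) ≤ n)])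
  rw [← negHalfNode_succ, moment₂_of_le (hyperRatio_negHalfNode _) (by lia)] at h
  push_cast
  rw [div_pow, div_mul_eq_mul_div, eq_div_iff (by positivity), cast_eq_negHalfNode]
  linear_combination -h

theorem moment₁_negHalfNode_succ (n : ℕ) :
    moment₁ (negHalfNode (n + 1)) (n + 1) =
      3 * ((3 * n + 4) * (3 * n + 2)) / (8 * (2 * n + 1) ^ 2) * moment₁ (negHalfNode n) n := by
  obtain _ | n := n
  · norm_num [moments_negHalfNode_zero, moments_negHalfNode_one]
  have h := (contiguous_negHalfNode n).moment₁_add_one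
  rw [← negHalfNode_succ, moment₁_of_le (hyperRatio_negHalfNode _) (by lia)] at h
  push_cast
  rw [div_mul_eq_mul_div, eq_div_iff (by positivity), cast_eq_negHalfNode]
  linear_combination -h / 4

theorem moments_negSixthNode_zero : moment₀ (negSixthNode 0) 0 = 1 ∧
    moment₁ (negSixthNode 0) 0 = 0 ∧ moment₂ (negSixthNode 0) 0 = 0 := by
  norm_num [moment₀, moment₁, moment₂, hyperTerm, negSixthNode]

theorem moments_negSixthNode_two : moment₀ (negSixthNode 2) 2 = 9 / 4 ∧
    moment₁ (negSixthNode 2) 2 = 0 ∧ moment₂ (negSixthNode 2) 2 = 0 := by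
  norm_num [moment₀, moment₁, moment₂, hyperTerm, hyperRatio, negSixthNode, sum_range_succ,
    prod_range_succ]

theorem moment₂_negSixthNode_add_three {n : ℕ} (hn : n % 3 ≠ 1) :
    moment₂ (negSixthNode (n + 3)) (n + 3) =
      ((n + 3) * (n + 1) / (2 * (2 * n + 1))) ^ 2 * moment₀ (negSixthNode n) n := by
  have h := (contiguous_negSixthNode hn).moment₀_add_one
  rw [← negSixthNode_add_three, moment₀_of_le (hyperRatio_negSixthNode n) (by lia)] at h
  rw [div_pow, div_mul_eq_mul_div, eq_div_iff (by positivity), cast_eq_negSixthNode]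
  linear_combination -h / 16

theorem moment₀_negSixthNode_add_three {n : ℕ} (hn : n % 3 ≠ 1) :
    moment₀ (negSixthNode (n + 3)) (n + 3) =
      (27 / (4 * (2 * n + 1))) ^ 2 * moment₂ (negSixthNode n) n := by
  have h := (contiguous_negSixthNode hn).moment₂_add_one
    (by rw [negSixthNode]; push_cast; apply ne_of_lt; linarith [(n.cast_nonneg : (0 : ℚ) ≤ n)])
    (by rw [negSixthNode]; push_cast; apply ne_of_lt; linarith [(n.cast_nonneg : (0 : ℚ) ≤ n)])
  rw [← negSixthNode_add_three, moment₂_of_le (hyperRatio_negSixthNode n) (by lia)] at h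
  rw [div_pow, div_mul_eq_mul_div, eq_div_iff (by positivity), cast_eq_negSixthNode]
  linear_combination -9 * h

theorem moment₁_negSixthNode_add_three {n : ℕ} (hn : n % 3 ≠ 1) :
    8 * (2 * n + 1) ^ 2 * moment₁ (negSixthNode (n + 3)) (n + 3) =
      27 * ((n + 3) * (n + 1)) * moment₁ (negSixthNode n) n := by
  have h := (contiguous_negSixthNode hn).moment₁_add_one
  rw [← negSixthNode_add_three, moment₁_of_le (hyperRatio_negSixthNode n) (by lia)] at h
  rw [cast_eq_negSixthNode]
  linear_combination -(9 / 4) * h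

end Nodes

section ClosedForms

open Nat

/-- The product of the `k`-term arithmetic progression with first term `a` and common
difference `d`. -/
def progressionProd (d a k : ℕ) : ℕ := ∏ i ∈ range k, (a + d * i)

theorem progressionProd_succ (d a k : ℕ) :
    progressionProd d a (k + 1) = progressionProd d a k * (a + d * k) :=
  prod_range_succ _ _

theorem progressionProd_succ' (d a k : ℕ) :
    progressionProd d a (k + 1) = a * progressionProd d (a + d) k := by
  rw [progressionProd, prod_range_succ', mul_comm]
  exact congrArg (a * ·) (prod_congr rfl fun i _ ↦ by ring)

theorem progressionProd_one_one (k : ℕ) : progressionProd 1 1 k = k ! := by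
  simp only [progressionProd, one_mul, add_comm 1, prod_range_add_one_eq_factorial]

theorem progressionProd_ne_zero {d a k : ℕ} (ha : 0 < a) : progressionProd d a k ≠ 0 :=
  prod_ne_zero_iff.2 fun _ _ ↦ by positivity

theorem two_pow_mul_factorial_mul_progressionProd (n : ℕ) :
    2 ^ n * n ! * progressionProd 2 1 n = (2 * n)! := by
  induction n with
  | zero => simp [progressionProd]
  | succ n ih =>
    rw [progressionProd_succ, factorial_succ, pow_succ, show 2 * (n + 1) = 2 * n + 1 + 1 by ring,
      factorial_succ, factorial_succ, ← ih]
    ring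

theorem moment₀_halfNode_even (m : ℕ) : moment₀ (halfNode (2 * m)) (2 * m) =
    (8 ^ m * progressionProd 2 1 m / progressionProd 2 (4 * m + 3) m) ^ 2 := by
  induction m with
  | zero => simp [moment₀_halfNode_zero, progressionProd]
  | succ m ih =>
    have shift : progressionProd 2 (4 * m + 3) m * (6 * m + 3) * (6 * m + 5) * (6 * m + 7) =
        (4 * m + 3) * (4 * m + 5) * progressionProd 2 (4 * (m + 1) + 3) (m + 1) := by
      calc _ = progressionProd 2 (4 * m + 3) (m + 1 + 1 + 1) := by
            simp only [progressionProd_succ]; ring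
        _ = _ := by rw [progressionProd_succ', progressionProd_succ', ← mul_assoc]; ring_nf
    rw [show 2 * (m + 1) = 2 * m + 1 + 1 by ring, moment₀_halfNode_succ, moment₂_halfNode_succ, ih,
      ← mul_pow, ← mul_pow]
    congr 1
    have : (progressionProd 2 (4 * m + 3) m : ℚ) ≠ 0 :=
      mod_cast progressionProd_ne_zero (by positivity)
    have : (progressionProd 2 (4 * (m + 1) + 3) (m + 1) : ℚ) ≠ 0 :=
      mod_cast progressionProd_ne_zero (by positivity)
    have shift' := congrArg (Nat.cast : ℕ → ℚ) shift
    rw [progressionProd_succ 2 1]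
    push_cast at shift' ⊢
    field_simp
    linear_combination -24 * 8 ^ m * progressionProd 2 1 m * shift'

theorem moment₂_halfNode_even (m : ℕ) : moment₂ (halfNode (2 * m)) (2 * m) =
    2 / 9 * ((4 * m + 1)! * m ! / (2 ^ m * (2 * m)! * (3 * m)!)) ^ 2 := by
  induction m with
  | zero => simp [moment₂_halfNode_zero]
  | succ m ih =>
    rw [show 2 * (m + 1) = 2 * m + 1 + 1 by ring, moment₂_halfNode_succ, moment₀_halfNode_succ, ih,
      show 3 * (m + 1) = 3 * m + 1 + 1 + 1 by ring,
      show 4 * (m + 1) + 1 = 4 * m + 1 + 1 + 1 + 1 + 1 by ring]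
    simp only [factorial_succ]
    push_cast
    field_simp
    ring

theorem moment₀_halfNode_odd (m : ℕ) : moment₀ (halfNode (2 * m + 1)) (2 * m + 1) =
    1 / 2 * ((4 * m + 3) * ((4 * m + 1)! * m ! / (2 ^ m * (2 * m)! * (3 * m + 2)!))) ^ 2 := by
  rw [moment₀_halfNode_succ, moment₂_halfNode_even]
  simp only [factorial_succ]
  push_cast
  field_simp
  ring

theorem moment₂_halfNode_odd (m : ℕ) : moment₂ (halfNode (2 * m + 1)) (2 * m + 1) =
    (4 / 3 * (4 ^ m * (2 * m + 1)! / (m ! * progressionProd 2 (4 * m + 5) m))) ^ 2 := by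
  have shift : (4 * m + 3) * progressionProd 2 (4 * m + 5) m =
      progressionProd 2 (4 * m + 3) m * (6 * m + 3) := by
    rw [← progressionProd_succ' 2 (4 * m + 3), progressionProd_succ]; ring
  have odd := two_pow_mul_factorial_mul_progressionProd m
  rw [moment₂_halfNode_succ, moment₀_halfNode_even, ← mul_pow]
  congr 1
  have : (progressionProd 2 (4 * m + 3) m : ℚ) ≠ 0 :=
    mod_cast progressionProd_ne_zero (by positivity)
  have : (progressionProd 2 (4 * m + 5) m : ℚ) ≠ 0 :=
    mod_cast progressionProd_ne_zero (by positivity)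
  have shift' := congrArg (Nat.cast : ℕ → ℚ) shift
  rw [factorial_succ, ← odd]
  rw [show (8 : ℚ) ^ m = 4 ^ m * 2 ^ m by rw [← mul_pow]; norm_num]
  push_cast at shift' ⊢
  field_simp
  linear_combination 3 * (progressionProd 2 1 m : ℚ) * shift'

theorem moments_negHalfNode_even (m : ℕ) :
    moment₀ (negHalfNode (2 * m)) (2 * m) =
      ((3 * m)! / (2 ^ m * m ! * progressionProd 2 1 (2 * m))) ^ 2 ∧
    moment₂ (negHalfNode (2 * m)) (2 * m) = 0 := by
  induction m with
  | zero => simp [moments_negHalfNode_zero, progressionProd]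
  | succ m ih =>
    rw [show 2 * (m + 1) = 2 * m + 1 + 1 by ring, moment₀_negHalfNode_succ,
      moment₂_negHalfNode_succ, moment₂_negHalfNode_succ, moment₀_negHalfNode_succ, ih.1, ih.2]
    refine ⟨?_, by simp only [mul_zero]⟩
    have : (progressionProd 2 1 (2 * m) : ℚ) ≠ 0 := mod_cast progressionProd_ne_zero one_pos
    rw [progressionProd_succ, progressionProd_succ, show 3 * (m + 1) = 3 * m + 1 + 1 + 1 by ring]
    simp only [factorial_succ]
    push_cast
    field_simp
    ring

theorem moments_negHalfNode_odd (m : ℕ) :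
    moment₀ (negHalfNode (2 * m + 1)) (2 * m + 1) = 0 ∧
    moment₂ (negHalfNode (2 * m + 1)) (2 * m + 1) =
      (4 / 3 * (2 ^ m * (2 * m + 1)! / (m ! * (4 * m + 2).descFactorial m))) ^ 2 := by
  obtain ⟨h₀, h₂⟩ := moments_negHalfNode_even m
  rw [moment₀_negHalfNode_succ, moment₂_negHalfNode_succ, h₀, h₂, mul_zero, ← mul_pow]
  refine ⟨rfl, congrArg (· ^ 2) ?_⟩
  have odd : (2 : ℚ) ^ (2 * m) * (2 * m)! * progressionProd 2 1 (2 * m) = (4 * m)! := by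
    exact_mod_cast (two_pow_mul_factorial_mul_progressionProd (2 * m)).trans (by ring_nf)
  have desc : ((3 * m + 2)! * (4 * m + 2).descFactorial m : ℚ) = (4 * m + 2)! := by
    have := factorial_mul_descFactorial (n := 4 * m + 2) (k := m) (by lia)
    rw [show 4 * m + 2 - m = 3 * m + 2 by lia] at this
    exact_mod_cast this
  have : (progressionProd 2 1 (2 * m) : ℚ) ≠ 0 := mod_cast progressionProd_ne_zero one_pos
  have : ((4 * m + 2).descFactorial m : ℚ) ≠ 0 :=
    mod_cast (descFactorial_pos.2 (by lia : m ≤ 4 * m + 2)).ne'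
  simp only [factorial_succ] at desc ⊢
  push_cast at desc ⊢
  rw [← odd] at desc
  field_simp at desc ⊢
  linear_combination 12 * desc

theorem moment₁_negSixthNode_add_six {n : ℕ} (hn : n % 3 ≠ 1)
    (h : moment₁ (negSixthNode n) n = 0) : moment₁ (negSixthNode (n + 3 + 3)) (n + 3 + 3) = 0 := by
  have vanish {k : ℕ} (hk : k % 3 ≠ 1) (h : moment₁ (negSixthNode k) k = 0) :
      moment₁ (negSixthNode (k + 3)) (k + 3) = 0 := by
    have := moment₁_negSixthNode_add_three hk
    rw [h, mul_zero] at this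
    exact (mul_eq_zero.1 this).resolve_left (by positivity)
  exact vanish (by lia) (vanish hn h)

theorem moments_negSixthNode_six_mul (s : ℕ) :
    moment₀ (negSixthNode (6 * s)) (6 * s) =
      (27 ^ s * progressionProd 2 1 (3 * s) /
        (8 ^ s * progressionProd 6 1 (2 * s) * progressionProd 6 5 s)) ^ 2 ∧
    moment₁ (negSixthNode (6 * s)) (6 * s) = 0 ∧ moment₂ (negSixthNode (6 * s)) (6 * s) = 0 := by
  induction s with
  | zero => simp [moments_negSixthNode_zero, progressionProd]
  | succ s ih =>
    obtain ⟨h₀, h₁, h₂⟩ := ih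
    rw [show 6 * (s + 1) = 6 * s + 3 + 3 by ring, moment₁_negSixthNode_add_six (by lia) h₁,
      moment₀_negSixthNode_add_three (by lia), moment₂_negSixthNode_add_three (by lia),
      moment₂_negSixthNode_add_three (by lia), moment₀_negSixthNode_add_three (by lia), h₀, h₂]
    refine ⟨?_, rfl, by simp only [mul_zero]⟩
    have : (progressionProd 6 1 (2 * s) : ℚ) ≠ 0 := mod_cast progressionProd_ne_zero one_pos
    have : (progressionProd 6 5 s : ℚ) ≠ 0 := mod_cast progressionProd_ne_zero (by positivity)
    rw [show 3 * (s + 1) = 3 * s + 1 + 1 + 1 by ring, show 2 * (s + 1) = 2 * s + 1 + 1 by ring]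
    simp only [progressionProd_succ]
    push_cast
    field_simp
    ring

theorem moments_negSixthNode_six_mul_add_two (s : ℕ) :
    moment₀ (negSixthNode (6 * s + 2)) (6 * s + 2) =
      (3 / 2 * (27 ^ s * progressionProd 2 1 (3 * s + 1) /
        (8 ^ s * progressionProd 6 5 (2 * s) * progressionProd 6 1 (s + 1)))) ^ 2 ∧
    moment₁ (negSixthNode (6 * s + 2)) (6 * s + 2) = 0 ∧
    moment₂ (negSixthNode (6 * s + 2)) (6 * s + 2) = 0 := by
  induction s with
  | zero => norm_num [moments_negSixthNode_two, progressionProd]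
  | succ s ih =>
    obtain ⟨h₀, h₁, h₂⟩ := ih
    rw [show 6 * (s + 1) + 2 = 6 * s + 2 + 3 + 3 by ring,
      moment₁_negSixthNode_add_six (by lia) h₁,
      moment₀_negSixthNode_add_three (by lia), moment₂_negSixthNode_add_three (by lia),
      moment₂_negSixthNode_add_three (by lia), moment₀_negSixthNode_add_three (by lia), h₀, h₂]
    refine ⟨?_, rfl, by simp only [mul_zero]⟩
    have : (progressionProd 6 5 (2 * s) : ℚ) ≠ 0 :=
      mod_cast progressionProd_ne_zero (by positivity)
    have : (progressionProd 6 1 s : ℚ) ≠ 0 := mod_cast progressionProd_ne_zero one_pos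
    rw [show 3 * (s + 1) + 1 = 3 * s + 1 + 1 + 1 + 1 by ring,
      show 2 * (s + 1) = 2 * s + 1 + 1 by ring]
    simp only [progressionProd_succ]
    push_cast
    field_simp
    ring

theorem moment₁_halfNode_eq_factorial (n : ℕ) : moment₁ (halfNode n) n =
    2 / 3 * (2 ^ n * (2 * n + 1)! ^ 2 / (n ! * (3 * n + 1)!)) := by
  induction n with
  | zero => simp [moment₁_halfNode_zero]
  | succ n ih =>
    rw [moment₁_halfNode_succ, ih, show 2 * (n + 1) + 1 = 2 * n + 1 + 1 + 1 by ring,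
      show 3 * (n + 1) + 1 = 3 * n + 1 + 1 + 1 + 1 by ring]
    simp only [factorial_succ]
    push_cast
    field_simp
    ring

theorem moment₁_negHalfNode_eq_factorial (n : ℕ) : moment₁ (negHalfNode n) n =
    -1 / 3 * ((3 * n + 1)! * n ! / (2 ^ n * (2 * n)! ^ 2)) := by
  induction n with
  | zero => simp [moments_negHalfNode_zero]
  | succ n ih =>
    rw [moment₁_negHalfNode_succ, ih, show 2 * (n + 1) = 2 * n + 1 + 1 by ring,
      show 3 * (n + 1) + 1 = 3 * n + 1 + 1 + 1 + 1 by ring]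
    simp only [factorial_succ]
    push_cast
    field_simp
    ring

theorem moment₁_halfNode_and_negHalfNode (n : ℕ) :
    moment₁ (halfNode n) n =
      2 / 3 * ((2 * n + 1) * (2 ^ n * (2 * n).descFactorial n / (2 * n + 2).ascFactorial n)) ∧
    moment₁ (negHalfNode n) n =
      -1 / 3 * ((2 * n + 1) *
        (2 ^ n * (2 * n).descFactorial n / (2 * n + 2).ascFactorial n : ℚ)⁻¹) := by
  have asc : ((3 * n + 1)! : ℚ) = (2 * n + 1) * (2 * n)! * (2 * n + 2).ascFactorial n := by
    have := factorial_mul_ascFactorial (2 * n + 1) n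
    rw [show 2 * n + 1 + n = 3 * n + 1 by ring, factorial_succ] at this
    exact_mod_cast this.symm
  have desc : ((2 * n)! : ℚ) = n ! * (2 * n).descFactorial n := by
    have := factorial_mul_descFactorial (n := 2 * n) (k := n) (by lia)
    rw [show 2 * n - n = n by lia] at this
    exact_mod_cast this.symm
  have : ((2 * n + 2).ascFactorial n : ℚ) ≠ 0 := mod_cast (ascFactorial_pos _ _).ne'
  have : ((2 * n).descFactorial n : ℚ) ≠ 0 :=
    mod_cast (descFactorial_pos.2 (by lia : n ≤ 2 * n)).ne'
  rw [moment₁_halfNode_eq_factorial, moment₁_negHalfNode_eq_factorial, asc, factorial_succ]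
  push_cast
  rw [desc]
  constructor <;> field_simp

end ClosedForms

/-! ### Quadratic families modulo a power of a prime -/

/-- `IsQuadraticIn P f` says that `f` is a polynomial function of degree at most two in `P * y`.
When `P ^ 3 = 0` every rational function of `P * y` with invertible constant term is of this form,
and such functions are determined by three of their values. -/
def IsQuadraticIn {R : Type*} [CommRing R] (P : R) (f : R → R) : Prop :=
  ∃ c a b : R, ∀ y, f y = c + a * P * y + b * P ^ 2 * y ^ 2

namespace IsQuadraticIn

variable {R ι : Type*} [CommRing R] {P : R} {f g : R → R}

theorem linear (P c a : R) : IsQuadraticIn P fun y ↦ c + a * P * y := ⟨c, a, 0, fun y ↦ by ring⟩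

theorem const (P c : R) : IsQuadraticIn P fun _ ↦ c := ⟨c, 0, 0, fun y ↦ by ring⟩

theorem add (hf : IsQuadraticIn P f) (hg : IsQuadraticIn P g) :
    IsQuadraticIn P fun y ↦ f y + g y := by
  obtain ⟨c, a, b, h⟩ := hf
  obtain ⟨c', a', b', h'⟩ := hg
  exact ⟨c + c', a + a', b + b', fun y ↦ by simp only [h, h']; ring⟩

theorem mul (hP : P ^ 3 = 0) (hf : IsQuadraticIn P f) (hg : IsQuadraticIn P g) :
    IsQuadraticIn P fun y ↦ f y * g y := by
  obtain ⟨c, a, b, h⟩ := hf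
  obtain ⟨c', a', b', h'⟩ := hg
  refine ⟨c * c', a * c' + c * a', b * c' + a * a' + c * b', fun y ↦ ?_⟩
  simp only [h, h']
  linear_combination (a * b' * y ^ 3 + b * a' * y ^ 3 + b * b' * P * y ^ 4) * hP

theorem sum (s : Finset ι) {f : ι → R → R} (h : ∀ i ∈ s, IsQuadraticIn P (f i)) :
    IsQuadraticIn P fun y ↦ ∑ i ∈ s, f i y := by
  induction s using Finset.cons_induction with
  | empty => simpa using const P 0
  | cons i s hi ih =>
    simp only [sum_cons]
    exact (h i (mem_cons_self i s)).add (ih fun j hj ↦ h j (mem_cons_of_mem hj))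

theorem prod (hP : P ^ 3 = 0) (s : Finset ι) {f : ι → R → R}
    (h : ∀ i ∈ s, IsQuadraticIn P (f i)) : IsQuadraticIn P fun y ↦ ∏ i ∈ s, f i y := by
  induction s using Finset.cons_induction with
  | empty => simpa using const P 1
  | cons i s hi ih =>
    simp only [prod_cons]
    exact (h i (mem_cons_self i s)).mul hP (ih fun j hj ↦ h j (mem_cons_of_mem hj))

theorem comp_mul_left (hf : IsQuadraticIn P f) (k : R) : IsQuadraticIn P fun y ↦ f (k * y) := by
  obtain ⟨c, a, b, h⟩ := hf
  exact ⟨c, a * k, b * k ^ 2, fun y ↦ by simp only [h]; ring⟩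

theorem exists_mul_eq_one (hP : P ^ 3 = 0) (hf : IsQuadraticIn P f) (h0 : IsUnit (f 0)) :
    ∃ g, IsQuadraticIn P g ∧ ∀ y, f y * g y = 1 := by
  obtain ⟨c, a, b, h⟩ := hf
  obtain ⟨d, hd⟩ := h0.exists_right_inv
  replace hd : c * d = 1 := by simpa [h] using hd
  refine ⟨fun y ↦ d + (-a * d ^ 2) * P * y + (a ^ 2 * d ^ 3 - b * d ^ 2) * P ^ 2 * y ^ 2,
    ⟨_, _, _, fun y ↦ rfl⟩, fun y ↦ ?_⟩
  rw [h]
  linear_combination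
    (1 - a * d * P * y + a ^ 2 * d ^ 2 * P ^ 2 * y ^ 2 - b * d * P ^ 2 * y ^ 2) * hd
    + (a * (a ^ 2 * d ^ 3 - b * d ^ 2) * y ^ 3 - a * d ^ 2 * b * y ^ 3
      + b * (a ^ 2 * d ^ 3 - b * d ^ 2) * P * y ^ 4) * hP

theorem isUnit (hP : P ^ 3 = 0) (hf : IsQuadraticIn P f) (h0 : IsUnit (f 0)) (y : R) :
    IsUnit (f y) := by
  obtain ⟨g, -, h⟩ := hf.exists_mul_eq_one hP h0
  exact .of_mul_eq_one _ (h y)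

theorem inv {N : ℕ} {P : ZMod N} {f : ZMod N → ZMod N} (hP : P ^ 3 = 0) (hf : IsQuadraticIn P f)
    (h0 : IsUnit (f 0)) : IsQuadraticIn P fun y ↦ (f y)⁻¹ := by
  obtain ⟨g, hg, h⟩ := hf.exists_mul_eq_one hP h0
  convert hg using 2 with y
  exact (hf.isUnit hP h0 y).mul_left_cancel
    ((ZMod.mul_inv_of_unit _ (hf.isUnit hP h0 y)).trans (h y).symm)

/-- Lagrange interpolation at the nodes `1 / 2`, `-1 / 2` and `-1 / 6`. -/
theorem eight_mul_apply_zero (hf : IsQuadraticIn P f) {h g : R} (hh : 2 * h = 1) (hg : 6 * g = 1) :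
    8 * f 0 = f h - 2 * f (-h) + 9 * f (-g) := by
  obtain ⟨c, a, b, e⟩ := hf
  obtain rfl : h = 3 * g := by linear_combination 3 * g * hh - h * hg
  simp only [e]
  ring

theorem two_mul_apply_zero (hP : P ^ 2 = 0) (hf : IsQuadraticIn P f) (h : R) :
    2 * f 0 = f h + f (-h) := by
  obtain ⟨c, a, b, e⟩ := hf
  simp only [e]
  linear_combination (-2 * b * h ^ 2) * hP

end IsQuadraticIn

section PrimePower

variable {p r : ℕ}

theorem natCast_pow_eq_zero (p : ℕ) {r s : ℕ} (h : r ≤ s) : (p : ZMod (p ^ r)) ^ s = 0 :=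
  pow_eq_zero_of_le h (by rw [← Nat.cast_pow, ZMod.natCast_self])

theorem isUnit_natCast (hp : p.Prime) {a : ℕ} (h : ¬p ∣ a) : IsUnit (a : ZMod (p ^ r)) :=
  (ZMod.isUnit_iff_coprime _ _).2 ((hp.coprime_iff_not_dvd.2 h).symm.pow_right r)

theorem isUnit_natCast_of_lt (hp : p.Prime) {a : ℕ} (h0 : 0 < a) (h : a < p) :
    IsUnit (a : ZMod (p ^ r)) :=
  isUnit_natCast hp (Nat.not_dvd_of_pos_of_lt h0 h)

theorem isUnit_two (hp : p.Prime) (h : p ≠ 2) : IsUnit (2 : ZMod (p ^ r)) :=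
  isUnit_natCast (a := 2) hp fun h2 ↦ h ((Nat.prime_dvd_prime_iff_eq hp Nat.prime_two).1 h2)

theorem isUnit_three (hp : p.Prime) (h : p ≠ 3) : IsUnit (3 : ZMod (p ^ r)) :=
  isUnit_natCast (a := 3) hp fun h3 ↦ h ((Nat.prime_dvd_prime_iff_eq hp Nat.prime_three).1 h3)

end PrimePower

/-- A function of a rational number is a quadratic family at `p` modulo `N` if its values at `p * y`
with `y` integral at `N` reduce modulo `N` to a quadratic function of `p * y`. -/
def IsQuadraticFamily (p N : ℕ) (F : ℚ → ℚ) : Prop :=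
  ∃ f : ZMod N → ZMod N, IsQuadraticIn (p : ZMod N) f ∧
    ∀ q y, ReducesTo N q y → ReducesTo N (F (p * q)) (f y)

namespace IsQuadraticFamily

variable {p N : ℕ} {F G : ℚ → ℚ} {ι : Type*}

theorem const {c : ℚ} {z : ZMod N} (h : ReducesTo N c z) : IsQuadraticFamily p N fun _ ↦ c :=
  ⟨fun _ ↦ z, .const _ _, fun _ _ _ ↦ h⟩

theorem id : IsQuadraticFamily p N fun u ↦ u :=
  ⟨fun y ↦ 0 + 1 * p * y, .linear _ _ _, fun q y h ↦ by simpa using (ReducesTo.natCast p).mul h⟩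

theorem add (hF : IsQuadraticFamily p N F) (hG : IsQuadraticFamily p N G) :
    IsQuadraticFamily p N fun u ↦ F u + G u := by
  obtain ⟨f, hf, h⟩ := hF
  obtain ⟨g, hg, h'⟩ := hG
  exact ⟨_, hf.add hg, fun q y hq ↦ (h q y hq).add (h' q y hq)⟩

theorem sum (s : Finset ι) {F : ι → ℚ → ℚ} (h : ∀ i ∈ s, IsQuadraticFamily p N (F i)) :
    IsQuadraticFamily p N fun u ↦ ∑ i ∈ s, F i u := by
  choose! f hf hred using h
  exact ⟨_, .sum s hf, fun q y hq ↦ .sum s fun i hi ↦ hred i hi q y hq⟩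

variable (hP : (p : ZMod N) ^ 3 = 0)
include hP

theorem mul (hF : IsQuadraticFamily p N F) (hG : IsQuadraticFamily p N G) :
    IsQuadraticFamily p N fun u ↦ F u * G u := by
  obtain ⟨f, hf, h⟩ := hF
  obtain ⟨g, hg, h'⟩ := hG
  exact ⟨_, hf.mul hP hg, fun q y hq ↦ (h q y hq).mul (h' q y hq)⟩

theorem prod (s : Finset ι) {F : ι → ℚ → ℚ} (h : ∀ i ∈ s, IsQuadraticFamily p N (F i)) :
    IsQuadraticFamily p N fun u ↦ ∏ i ∈ s, F i u := by
  choose! f hf hred using h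
  exact ⟨_, .prod hP s hf, fun q y hq ↦ .prod s fun i hi ↦ hred i hi q y hq⟩

theorem linear {c a : ℚ} {z w : ZMod N} (hc : ReducesTo N c z) (ha : ReducesTo N a w) :
    IsQuadraticFamily p N fun u ↦ c + a * u :=
  (const hc).add ((const ha).mul hP id)

theorem inv (hF : IsQuadraticFamily p N F) {z : ZMod N} (hz : ReducesTo N (F 0) z) (uz : IsUnit z) :
    IsQuadraticFamily p N fun u ↦ (F u)⁻¹ := by
  obtain ⟨f, hf, h⟩ := hF
  have unit_zero : IsUnit (f 0) := by
    have := h 0 0 .zero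
    rw [mul_zero] at this
    rwa [this.unique hz]
  exact ⟨_, hf.inv hP unit_zero, fun q y hq ↦ (h q y hq).inv (hf.isUnit hP unit_zero y)⟩

end IsQuadraticFamily

section HypergeometricFamily

variable {p N : ℕ} (hP : (p : ZMod N) ^ 3 = 0) (h2 : IsUnit (2 : ZMod N))

include h2 in
theorem reducesTo_half : ReducesTo N (1 / 2) 2⁻¹ := by
  simpa only [one_mul] using ReducesTo.one.div (.ofNat 2) h2

include hP h2

theorem isQuadraticFamily_hyperRatio {k : ℕ} (hk : IsUnit ((k + 1 : ℕ) : ZMod N)) :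
    IsQuadraticFamily p N fun u ↦ hyperRatio u k := by
  have reducesTo_succ : ReducesTo N (1 + k) ((k + 1 : ℕ) : ZMod N) := by
    simpa [add_comm] using ReducesTo.natCast (N := N) (k + 1)
  have half_add := (reducesTo_half h2).add (.natCast k)
  have numerator := ((IsQuadraticFamily.linear hP half_add (.ofNat 3)).mul hP
    (.linear hP half_add .one)).mul hP (.linear hP half_add ReducesTo.one.neg)
  have denominator := ((IsQuadraticFamily.const reducesTo_succ).mul hP
    (.linear hP reducesTo_succ (.ofNat 2))).mul hP (.linear hP reducesTo_succ .one)
  have neg_eighth := ((reducesTo_half h2).pow 3).neg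
  have unit_zero := ((reducesTo_succ.mul reducesTo_succ).mul reducesTo_succ)
  convert (numerator.mul hP (denominator.inv hP (by simpa using unit_zero)
    ((hk.mul hk).mul hk))).mul hP (.const neg_eighth) using 2 with u
  rw [hyperRatio, div_eq_mul_inv]
  congr 1
  · congr 2 <;> ring
  · norm_num

theorem isQuadraticFamily_hyperTerm {n : ℕ} (hn : ∀ k < n, IsUnit ((k + 1 : ℕ) : ZMod N)) :
    IsQuadraticFamily p N fun u ↦ hyperTerm u n :=
  .prod hP _ fun k hk ↦ isQuadraticFamily_hyperRatio hP h2 (hn k (mem_range.1 hk))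

theorem isQuadraticFamily_sum {n : ℕ} (hn : ∀ k < n, IsUnit ((k + 1 : ℕ) : ZMod N))
    {w : ℕ → ℚ → ℚ} (hw : ∀ k, IsQuadraticFamily p N (w k)) :
    IsQuadraticFamily p N fun u ↦ ∑ k ∈ range (n + 1), w k u * hyperTerm u k :=
  .sum _ fun k hk ↦ (hw k).mul hP (isQuadraticFamily_hyperTerm hP h2
    fun j hj ↦ hn j (by have := mem_range.1 hk; lia))

theorem isQuadraticFamily_moment₀ {n : ℕ} (hn : ∀ k < n, IsUnit ((k + 1 : ℕ) : ZMod N)) :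
    IsQuadraticFamily p N fun u ↦ moment₀ u n := by
  simpa only [moment₀, one_mul] using isQuadraticFamily_sum hP h2 hn fun _ ↦ .const .one

variable (h3 : IsUnit (3 : ZMod N))
include h3

theorem isQuadraticFamily_moment₁ {n : ℕ} (hn : ∀ k < n, IsUnit ((k + 1 : ℕ) : ZMod N)) :
    IsQuadraticFamily p N fun u ↦ moment₁ u n := by
  have h6 : IsUnit (6 : ZMod N) := by convert h2.mul h3; norm_num
  exact isQuadraticFamily_sum hP h2 hn fun k ↦ (IsQuadraticFamily.const (.natCast k)).add
    (IsQuadraticFamily.id.add (.const (ReducesTo.one.div (.ofNat 6) h6)))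

theorem isQuadraticFamily_moment₂ {n : ℕ} (hn : ∀ k < n, IsUnit ((k + 1 : ℕ) : ZMod N)) :
    IsQuadraticFamily p N fun u ↦ moment₂ u n := by
  have linear (a : ℕ) [a.AtLeastTwo] {c : ℚ} {z : ZMod N} (hc : ReducesTo N c z) :
      IsQuadraticFamily p N fun u ↦ OfNat.ofNat a * u + c := by
    simpa only [add_comm] using IsQuadraticFamily.linear hP hc (.ofNat a)
  have h9 : IsUnit (9 : ZMod N) := by convert h3.mul h3; norm_num
  have h36 : IsUnit (36 : ZMod N) := by convert (h2.mul h2).mul (h3.mul h3); norm_num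
  refine isQuadraticFamily_sum hP h2 hn fun k ↦ ?_
  simp only [div_eq_mul_inv _ (36 : ℚ)]
  exact ((IsQuadraticFamily.const ((ReducesTo.natCast k).pow 2)).add
    ((linear 2 ((ReducesTo.ofNat 2).div (.ofNat 9) h9)).mul hP (.const (.natCast k)))).add
    (((linear 2 .one).mul hP (linear 6 .one)).mul hP (.const ((ReducesTo.ofNat 36).inv h36)))

end HypergeometricFamily

section Interpolation

variable {p n : ℕ} (hp : p.Prime) (hn : p = 2 * n + 1)
include hp hn

theorem IsQuadraticFamily.exists_reducesTo_sq {F : ℚ → ℚ} (hF : IsQuadraticFamily p (p ^ 2) F)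
    {za zb : ZMod (p ^ 2)} (ha : ReducesTo (p ^ 2) (F (halfNode n)) za)
    (hb : ReducesTo (p ^ 2) (F (negHalfNode n)) zb) :
    ∃ z, ReducesTo (p ^ 2) (F 0) z ∧ 2 * z = za + zb := by
  obtain ⟨f, hf, h⟩ := hF
  have hhalf := reducesTo_half (isUnit_two (r := 2) hp (by lia))
  have nodeA : halfNode n = p * (1 / 2) := by rw [halfNode, hn]; push_cast; ring
  have nodeB : negHalfNode n = p * -(1 / 2) := by rw [negHalfNode, hn]; push_cast; ring
  refine ⟨f 0, by simpa using h 0 0 .zero, ?_⟩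
  rw [hf.two_mul_apply_zero (natCast_pow_eq_zero p le_rfl) 2⁻¹,
    (h _ _ hhalf).unique (nodeA ▸ ha), (h _ _ hhalf.neg).unique (nodeB ▸ hb)]

variable (hp3 : 3 < p)
include hp3

theorem IsQuadraticFamily.exists_reducesTo_cube {F : ℚ → ℚ} (hF : IsQuadraticFamily p (p ^ 3) F)
    {za zb zc : ZMod (p ^ 3)} (ha : ReducesTo (p ^ 3) (F (halfNode n)) za)
    (hb : ReducesTo (p ^ 3) (F (negHalfNode n)) zb)
    (hc : ReducesTo (p ^ 3) (F (negSixthNode n)) zc) :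
    ∃ z, ReducesTo (p ^ 3) (F 0) z ∧ 8 * z = za - 2 * zb + 9 * zc := by
  obtain ⟨f, hf, h⟩ := hF
  have h2 := isUnit_two (r := 3) hp (by lia)
  have h6 : IsUnit (6 : ZMod (p ^ 3)) := by
    convert h2.mul (isUnit_three hp (by lia)); norm_num
  have hhalf := reducesTo_half h2
  have hsixth := ReducesTo.one.div (.ofNat 6) h6
  have nodeA : halfNode n = p * (1 / 2) := by rw [halfNode, hn]; push_cast; ring
  have nodeB : negHalfNode n = p * -(1 / 2) := by rw [negHalfNode, hn]; push_cast; ring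
  have nodeC : negSixthNode n = p * -(1 / 6) := by rw [negSixthNode, hn]; push_cast; ring
  refine ⟨f 0, by simpa using h 0 0 .zero, ?_⟩
  rw [hf.eight_mul_apply_zero (ZMod.mul_inv_of_unit _ h2)
      ((congrArg _ (one_mul _)).trans (ZMod.mul_inv_of_unit _ h6)),
    (h _ _ hhalf).unique (nodeA ▸ ha), (h _ _ hhalf.neg).unique (nodeB ▸ hb),
    (h _ _ hsixth.neg).unique (nodeC ▸ hc)]

theorem isQuadraticFamily_moments {r : ℕ} (hr : r ≤ 3) :
    IsQuadraticFamily p (p ^ r) (moment₀ · n) ∧ IsQuadraticFamily p (p ^ r) (moment₁ · n) ∧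
      IsQuadraticFamily p (p ^ r) (moment₂ · n) := by
  have hP : (p : ZMod (p ^ r)) ^ 3 = 0 := natCast_pow_eq_zero p hr
  have h2 : IsUnit (2 : ZMod (p ^ r)) := isUnit_two hp (by lia)
  have h3 : IsUnit (3 : ZMod (p ^ r)) := isUnit_three hp (by lia)
  have hk : ∀ k < n, IsUnit ((k + 1 : ℕ) : ZMod (p ^ r)) := fun k hk ↦
    isUnit_natCast_of_lt hp k.succ_pos (by lia)
  exact ⟨isQuadraticFamily_moment₀ hP h2 hk, isQuadraticFamily_moment₁ hP h2 h3 hk,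
    isQuadraticFamily_moment₂ hP h2 h3 hk⟩

end Interpolation

/-! ### From the moments at the origin to the binomial sums -/

section BinomialSums

/-- The sum `∑ k^j C(2k, k)^3 / (-512)^k` over `0 ≤ k < p`. -/
def binomialSum (p j : ℕ) : ℚ :=
  ∑ k ∈ range p, (k : ℚ) ^ j * ((2 * k).choose k : ℚ) ^ 3 / (-512) ^ k

theorem hyperTerm_origin (k : ℕ) : hyperTerm 0 k = ((2 * k).choose k : ℚ) ^ 3 / (-512) ^ k := by
  induction k with
  | zero => simp [hyperTerm]
  | succ k ih =>
    have central : ((k : ℚ) + 1) * (2 * (k + 1)).choose (k + 1)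
        = 2 * (2 * k + 1) * (2 * k).choose k := by
      exact_mod_cast k.succ_mul_centralBinom_succ
    replace central := eq_div_of_mul_eq (by positivity) ((mul_comm _ _).trans central)
    rw [hyperTerm_succ, ih, hyperRatio, central, pow_succ (-512 : ℚ)]
    field_simp
    ring

theorem binomialSum_eq_sum_hyperTerm (p j : ℕ) :
    binomialSum p j = ∑ k ∈ range p, (k : ℚ) ^ j * hyperTerm 0 k :=
  sum_congr rfl fun k _ ↦ by rw [hyperTerm_origin, mul_div_assoc]

theorem sum_hyperTerm_origin_telescope (K : ℕ) :
    ∑ k ∈ range K, (72 * (k : ℚ) ^ 3 + 12 * (k : ℚ) ^ 2 + 6 * k + 1) * hyperTerm 0 k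
      = -64 * (K : ℚ) ^ 3 * hyperTerm 0 K := by
  induction K with
  | zero => simp
  | succ K ih =>
    rw [sum_range_succ, ih, hyperTerm_succ, hyperRatio]
    push_cast
    field_simp
    ring

variable {p r : ℕ} (hp : p.Prime)
include hp

theorem exists_reducesTo_hyperTerm_origin (hp2 : p ≠ 2) (k : ℕ) :
    ∃ z : ZMod (p ^ r), ReducesTo (p ^ r) (hyperTerm 0 k) (((2 * k).choose k) ^ 3 * z) := by
  have unit : IsUnit ((-512 : ℤ) : ZMod (p ^ r)) := by
    convert ((isUnit_two (r := r) hp hp2).pow 9).neg using 1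
    norm_num
  have quotient := ((ReducesTo.natCast ((2 * k).choose k)).pow 3).div
    ((ReducesTo.intCast (-512)).pow k) (unit.pow k)
  exact ⟨_, by simpa only [hyperTerm_origin, Int.cast_neg, Int.cast_ofNat] using quotient⟩

theorem reducesTo_hyperTerm_origin_zero (hp2 : p ≠ 2) (hr : r ≤ 3) {k : ℕ} (hk : p < 2 * k)
    (hkp : k < p) : ReducesTo (p ^ r) (hyperTerm 0 k) 0 := by
  obtain ⟨z, hz⟩ := exists_reducesTo_hyperTerm_origin (r := r) hp hp2 k
  obtain ⟨c, hc⟩ : p ∣ (2 * k).choose k :=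
    two_mul k ▸ hp.dvd_choose_add hkp hkp (two_mul k ▸ hk.le)
  rwa [hc, Nat.cast_mul, mul_pow, natCast_pow_eq_zero p hr, zero_mul, zero_mul] at hz

theorem exists_reducesTo_binomialSum {n : ℕ} (hn : p = 2 * n + 1) (hr : r ≤ 3) (j : ℕ) :
    ∃ s : ZMod (p ^ r), ReducesTo (p ^ r) (binomialSum p j) s ∧
      ReducesTo (p ^ r) (∑ k ∈ range (n + 1), (k : ℚ) ^ j * hyperTerm 0 k) s := by
  have hp2 : p ≠ 2 := by lia
  choose z hz using exists_reducesTo_hyperTerm_origin (r := r) hp hp2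
  have head := ReducesTo.sum (range (n + 1)) fun k _ ↦ ((ReducesTo.natCast k).pow j).mul (hz k)
  have tail := ReducesTo.sum (Ico (n + 1) p) (f := fun k ↦ (k : ℚ) ^ j * hyperTerm 0 k)
    fun k hk ↦ ((ReducesTo.natCast k).pow j).mul (reducesTo_hyperTerm_origin_zero hp hp2 hr
      (by have := mem_Ico.1 hk; lia) (mem_Ico.1 hk).2)
  refine ⟨_, ?_, head⟩
  rw [binomialSum_eq_sum_hyperTerm, ← sum_range_add_sum_Ico _ (by lia : n + 1 ≤ p)]
  simpa using head.add tail

theorem exists_reducesTo_binomialSum_two_three {n : ℕ} (hn : p = 2 * n + 1) (hr : r ≤ 3)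
    {z₀ z₁ z₂ : ZMod (p ^ r)} (h₀ : ReducesTo (p ^ r) (moment₀ 0 n) z₀)
    (h₁ : ReducesTo (p ^ r) (moment₁ 0 n) z₁) (h₂ : ReducesTo (p ^ r) (moment₂ 0 n) z₂) :
    ∃ s₂ s₃ : ZMod (p ^ r),
      ReducesTo (p ^ r) (binomialSum p 2) s₂ ∧ ReducesTo (p ^ r) (binomialSum p 3) s₃ ∧
      108 * s₂ = 108 * z₂ - 24 * z₁ + z₀ ∧ 72 * s₃ = -12 * s₂ - 6 * z₁ := by
  choose s hs hs' using exists_reducesTo_binomialSum hp hn hr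
  have eq_moment₀ : s 0 = z₀ := (hs' 0).unique (by simpa [moment₀] using h₀)
  have eq_moment₁ : 6 * z₁ = 6 * s 1 + s 0 := by
    apply ((ReducesTo.ofNat 6).mul h₁).unique
    convert ((ReducesTo.ofNat 6).mul (hs' 1)).add (hs' 0) using 1
    simp only [moment₁, mul_sum, ← sum_add_distrib]
    exact sum_congr rfl fun k _ ↦ by ring
  have eq_moment₂ : 36 * z₂ = 36 * s 2 + 8 * s 1 + s 0 := by
    apply ((ReducesTo.ofNat 36).mul h₂).unique
    convert (((ReducesTo.ofNat 36).mul (hs' 2)).add ((ReducesTo.ofNat 8).mul (hs' 1))).add (hs' 0)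
      using 1
    simp only [moment₂, mul_sum, ← sum_add_distrib]
    exact sum_congr rfl fun k _ ↦ by ring
  have telescoped : 72 * s 3 + 12 * s 2 + 6 * s 1 + s 0 = 0 := by
    apply ((((((ReducesTo.ofNat 72).mul (hs 3)).add ((ReducesTo.ofNat 12).mul (hs 2))).add
      ((ReducesTo.ofNat 6).mul (hs 1))).add (hs 0))).unique
    obtain ⟨z, hz⟩ := exists_reducesTo_hyperTerm_origin (r := r) hp (by lia) p
    convert ((ReducesTo.intCast (-64)).mul ((ReducesTo.natCast p).pow 3)).mul hz using 1
    · push_cast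
      rw [← sum_hyperTerm_origin_telescope]
      simp only [binomialSum_eq_sum_hyperTerm, mul_sum, ← sum_add_distrib]
      exact sum_congr rfl fun k _ ↦ by ring
    · rw [natCast_pow_eq_zero p hr, mul_zero, zero_mul]
  exact ⟨s 2, s 3, hs 2, hs 3, by linear_combination -3 * eq_moment₂ + 4 * eq_moment₁ + eq_moment₀,
    by linear_combination telescoped + eq_moment₁⟩

end BinomialSums

section LinearMoment

variable {p n : ℕ}

theorem neg_two_pow_eq (hp : p.Prime) (hn : p = 2 * n + 1) :
    (-2 : ZMod p) ^ n = (-1) ^ (n / 2) := by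
  have := Fact.mk hp
  have euler := legendreSym.eq_pow p (-2)
  rw [legendreSym.at_neg_two (by lia), ZMod.χ₈'_nat_eq_if_mod_eight, if_neg (by lia),
    show p / 2 = n by lia] at euler
  push_cast at euler
  rw [← euler]
  split_ifs with h8
  · rw [Even.neg_one_pow (by grind)]
  · rw [Odd.neg_one_pow (by grind)]

theorem dvd_two_pow_mul_descFactorial_sub (hp : p.Prime) (hn : p = 2 * n + 1) :
    (p : ℤ) ∣ 2 ^ n * (2 * n).descFactorial n - (-1) ^ (n / 2) * (2 * n + 2).ascFactorial n := by
  have two_n : (2 * n : ZMod p) = -1 := by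
    have := congrArg (Nat.cast : ℕ → ZMod p) hn
    push_cast [ZMod.natCast_self] at this
    linear_combination -this
  have desc : ((2 * n).descFactorial n : ZMod p) = (-1) ^ n * n.factorial := by
    rw [Nat.descFactorial_eq_prod_range, ← prod_range_add_one_eq_factorial, Nat.cast_prod,
      Nat.cast_prod, ← card_range n, ← prod_const, card_range, ← prod_mul_distrib]
    refine prod_congr rfl fun i hi ↦ ?_
    rw [Nat.cast_sub (by have := mem_range.1 hi; lia)]
    push_cast
    linear_combination two_n
  have asc : ((2 * n + 2).ascFactorial n : ZMod p) = n.factorial := by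
    rw [Nat.ascFactorial_eq_prod_range, ← prod_range_add_one_eq_factorial, Nat.cast_prod,
      Nat.cast_prod]
    refine prod_congr rfl fun i _ ↦ ?_
    push_cast
    linear_combination two_n
  rw [← ZMod.intCast_zmod_eq_zero_iff_dvd]
  push_cast
  rw [desc, asc, ← neg_two_pow_eq hp hn, neg_pow (2 : ZMod p)]
  ring

/-- Up to the factor `p`, the linear moments at `±p / 2` are inverse to each other, and modulo `p`
each is the sign `(-2 / p)`. -/
theorem exists_moment₁_eq_mul (hp : p.Prime) (hn : p = 2 * n + 1) (r : ℕ) :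
    ∃ (q : ℚ) (z w : ZMod (p ^ r)), moment₁ (halfNode n) n = 2 / 3 * (p * q) ∧
      moment₁ (negHalfNode n) n = -1 / 3 * (p * q⁻¹) ∧ ReducesTo (p ^ r) q z ∧ IsUnit z ∧
      z = (-1) ^ (n / 2) + p * w := by
  have two_ne : p ≠ 2 := by lia
  set D := (2 * n).descFactorial n with hD
  set A := (2 * n + 2).ascFactorial n with hA
  have p_not_dvd_A : ¬p ∣ A := by
    rw [hA, Nat.ascFactorial_eq_prod_range, hp.prime.dvd_finsetProd_iff]
    rintro ⟨i, hi, hdvd⟩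
    rw [show 2 * n + 2 + i = p + (i + 1) by lia, Nat.dvd_add_right (dvd_refl p)] at hdvd
    exact absurd (Nat.le_of_dvd i.succ_pos hdvd) (by have := mem_range.1 hi; lia)
  have p_not_dvd_D : ¬p ∣ D := fun h ↦ by
    have := (hp.dvd_factorial).1 (h.trans ⟨_, (Nat.factorial_mul_descFactorial
      (show n ≤ 2 * n by lia)).symm.trans (mul_comm _ _)⟩)
    lia
  have uA : IsUnit (A : ZMod (p ^ r)) := isUnit_natCast hp p_not_dvd_A
  have uD : IsUnit (D : ZMod (p ^ r)) := isUnit_natCast hp p_not_dvd_D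
  obtain ⟨c, hc⟩ := dvd_two_pow_mul_descFactorial_sub hp hn
  replace hc := congrArg (Int.cast : ℤ → ZMod (p ^ r)) hc
  push_cast [← hD, ← hA] at hc
  have node_values := moment₁_halfNode_and_negHalfNode n
  refine ⟨2 ^ n * D / A, 2 ^ n * D * (A : ZMod (p ^ r))⁻¹, c * (A : ZMod (p ^ r))⁻¹, ?_, ?_,
    (((ReducesTo.ofNat 2).pow n).mul (.natCast D)).div (.natCast A) uA, ?_, ?_⟩
  · rw [node_values.1, hn]; push_cast; rfl
  · rw [node_values.2, hn]; push_cast; rfl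
  · exact (((isUnit_two hp two_ne).pow n).mul uD).mul
      (.of_mul_eq_one _ (ZMod.inv_mul_of_unit _ uA))
  · linear_combination (A : ZMod (p ^ r))⁻¹ * hc
      + (-1) ^ (n / 2) * ZMod.mul_inv_of_unit _ uA

theorem reducesTo_moment₁_nodes (hp : p.Prime) (hn : p = 2 * n + 1) (hp3 : 3 < p) (r : ℕ) :
    ∃ a b z z' w : ZMod (p ^ r), ReducesTo (p ^ r) (moment₁ (halfNode n) n) a ∧
      ReducesTo (p ^ r) (moment₁ (negHalfNode n) n) b ∧ 3 * a = 2 * p * z ∧ 3 * b = -(p * z') ∧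
      z * z' = 1 ∧ z = (-1) ^ (n / 2) + p * w := by
  obtain ⟨q, z, w, hA, hB, hq, uz, hz⟩ := exists_moment₁_eq_mul hp hn r
  have u3 : IsUnit (3 : ZMod (p ^ r)) := isUnit_three hp (by lia)
  have three_mul := ZMod.mul_inv_of_unit _ u3
  refine ⟨_, _, z, z⁻¹, w,
    hA ▸ ((ReducesTo.ofNat 2).div (.ofNat 3) u3).mul ((ReducesTo.natCast p).mul hq),
    hB ▸ ((ReducesTo.one.neg).div (.ofNat 3) u3).mul ((ReducesTo.natCast p).mul (hq.inv uz)),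
    ?_, ?_, ZMod.mul_inv_of_unit _ uz, hz⟩
  · linear_combination 2 * p * z * three_mul
  · linear_combination -p * z⁻¹ * three_mul

theorem neg_one_pow_sq {R : Type*} [CommRing R] (m : ℕ) : ((-1 : R) ^ m) ^ 2 = 1 := by
  rw [pow_right_comm, neg_one_sq, one_pow]

theorem exists_reducesTo_moment₁_sq (hp : p.Prime) (hn : p = 2 * n + 1) (hp3 : 3 < p) :
    ∃ q : ZMod (p ^ 2), ReducesTo (p ^ 2) (moment₁ 0 n) q ∧ 6 * q = (-1) ^ (n / 2) * p := by
  obtain ⟨a, b, z, z', w, hA, hB, ha, hb, hz, hw⟩ := reducesTo_moment₁_nodes hp hn hp3 2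
  obtain ⟨q, hq, h⟩ := (isQuadraticFamily_moments hp hn hp3 (r := 2) (by lia)).2.1
    |>.exists_reducesTo_sq hp hn hA hB
  refine ⟨q, hq, ?_⟩
  have sign_sq := neg_one_pow_sq (R := ZMod (p ^ 2)) (n / 2)
  set ε : ZMod (p ^ 2) := (-1) ^ (n / 2)
  have hP : (p : ZMod (p ^ 2)) ^ 2 = 0 := natCast_pow_eq_zero p le_rfl
  linear_combination 3 * h + ha + hb + p * z' * (2 * z + ε) * hw + p * z' * sign_sq
    - p * (2 * z - ε) * hz + z' * (2 * z + ε) * w * hP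

theorem exists_reducesTo_moment₁_cube (hp : p.Prime) (hn : p = 2 * n + 1) (hp3 : 3 < p)
    (hC : moment₁ (negSixthNode n) n = 0) :
    ∃ q : ZMod (p ^ 3), ReducesTo (p ^ 3) (moment₁ 0 n) q ∧ 6 * q = (-1) ^ (n / 2) * p := by
  obtain ⟨a, b, z, z', w, hA, hB, ha, hb, hz, hw⟩ := reducesTo_moment₁_nodes hp hn hp3 3
  obtain ⟨q, hq, h⟩ := (isQuadraticFamily_moments hp hn hp3 (r := 3) le_rfl).2.1
    |>.exists_reducesTo_cube hp hn hp3 hA hB (hC ▸ ReducesTo.zero)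
  refine ⟨q, hq, ((isUnit_two hp (by lia)).mul (isUnit_two hp (by lia))).mul_left_cancel ?_⟩
  have sign_sq := neg_one_pow_sq (R := ZMod (p ^ 3)) (n / 2)
  set ε : ZMod (p ^ 3) := (-1) ^ (n / 2)
  have hP : (p : ZMod (p ^ 3)) ^ 3 = 0 := natCast_pow_eq_zero p le_rfl
  linear_combination 3 * h + ha - 2 * hb + 2 * p * z' * (z - ε + p * w) * hw
    - 2 * p * z' * sign_sq - 2 * p * (z - 2 * ε) * hz + 2 * z' * w ^ 2 * hP

end LinearMoment

/-! ### Products to first order and harmonic sums modulo the square of a prime -/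

section HarmonicSums

theorem prod_add_eq_mul_one_add_sum {R ι : Type*} [CommRing R] {ε : R} (hε : ε ^ 2 = 0)
    (s : Finset ι) {a b : ι → R} (h : ∀ i ∈ s, a i * b i = 1) :
    ∏ i ∈ s, (ε + a i) = (∏ i ∈ s, a i) * (1 + ε * ∑ i ∈ s, b i) := by
  induction s using Finset.cons_induction with
  | empty => simp
  | cons i s hi ih =>
    rw [prod_cons, prod_cons, sum_cons, ih fun j hj ↦ h j (mem_cons_of_mem hj)]
    linear_combination (∏ j ∈ s, a j) * (∑ j ∈ s, b j) * hε
      - (∏ j ∈ s, a j) * ε * h i (mem_cons_self i s)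

/-- The harmonic sum `1 + 1/2 + ⋯ + 1/k` modulo `p ^ 2`, meaningful when `k < p`. -/
def harmonicModSq (p k : ℕ) : ZMod (p ^ 2) := ∑ i ∈ range k, ((i + 1 : ℕ) : ZMod (p ^ 2))⁻¹

variable {p n m : ℕ} {c t : ZMod (p ^ 2)} (x : ZMod (p ^ 2))

theorem prod_mul_add_mul_succ (hp : p.Prime) {k : ℕ} (hk : k < p) (hc : c * t = 1) :
    ∏ i ∈ range k, (x * p + c * (i + 1)) =
      c ^ k * k.factorial * (1 + x * p * t * harmonicModSq p k) := by
  have hP : (x * p : ZMod (p ^ 2)) ^ 2 = 0 := by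
    rw [mul_pow, natCast_pow_eq_zero p le_rfl, mul_zero]
  simp only [← Nat.cast_add_one]
  rw [prod_add_eq_mul_one_add_sum (a := fun i ↦ c * (i + 1 : ℕ))
      (b := fun i ↦ t * ((i + 1 : ℕ) : ZMod (p ^ 2))⁻¹) hP,
    prod_mul_distrib, prod_const, card_range, ← Nat.cast_prod, prod_range_add_one_eq_factorial,
    ← mul_sum, harmonicModSq, mul_assoc _ t]
  intro i hi
  have := ZMod.mul_inv_of_unit _ (isUnit_natCast_of_lt (r := 2) hp i.succ_pos
    (by have := mem_range.1 hi; lia))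
  linear_combination c * t * this + hc

theorem four_pow_mul_one_sub_harmonicModSq (hp : p.Prime) (hn : p = 2 * n + 1) (ht : 2 * t = 1) :
    4 ^ n * (1 - (p : ZMod (p ^ 2)) * t * harmonicModSq p n) =
      1 - p * harmonicModSq p n := by
  have cast_p : (p : ZMod (p ^ 2)) = 2 * n + 1 := by
    simpa using congrArg (Nat.cast : ℕ → ZMod (p ^ 2)) hn
  have odd_prod : (progressionProd 2 1 n : ZMod (p ^ 2)) =
      (-1) ^ n * ∏ i ∈ range n, (-1 * (p : ZMod (p ^ 2)) + 2 * (i + 1)) := by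
    rw [progressionProd, ← prod_range_reflect, Nat.cast_prod, ← card_range n, ← prod_const,
      card_range, ← prod_mul_distrib]
    refine prod_congr rfl fun i hi ↦ ?_
    have := mem_range.1 hi
    rw [show n - 1 - i = n - (i + 1) by lia]
    push_cast [Nat.cast_sub (show i + 1 ≤ n by lia)]
    linear_combination -cast_p
  have desc : ((2 * n).descFactorial n : ZMod (p ^ 2)) =
      (-1) ^ n * ∏ i ∈ range n, (-1 * (p : ZMod (p ^ 2)) + 1 * (i + 1)) := by
    rw [Nat.descFactorial_eq_prod_range, Nat.cast_prod, ← card_range n, ← prod_const, card_range,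
      ← prod_mul_distrib]
    refine prod_congr rfl fun i hi ↦ ?_
    have := mem_range.1 hi
    push_cast [Nat.cast_sub (show i ≤ 2 * n by lia)]
    linear_combination -cast_p
  rw [prod_mul_add_mul_succ _ hp (by lia) ht] at odd_prod
  rw [prod_mul_add_mul_succ _ hp (by lia) (mul_one 1)] at desc
  have factorial_split : (2 ^ n * n.factorial * progressionProd 2 1 n : ZMod (p ^ 2)) =
      n.factorial * (2 * n).descFactorial n := by
    have := Nat.factorial_mul_descFactorial (show n ≤ 2 * n by lia)
    rw [show 2 * n - n = n by lia, ← two_pow_mul_factorial_mul_progressionProd] at this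
    simpa using congrArg (Nat.cast : ℕ → ZMod (p ^ 2)) this.symm
  have factorial_unit : IsUnit (n.factorial : ZMod (p ^ 2)) :=
    isUnit_natCast hp (by rw [hp.dvd_factorial]; lia)
  apply ((factorial_unit.pow 2).mul (isUnit_one.neg.pow n)).mul_left_cancel
  rw [odd_prod, desc] at factorial_split
  rw [show (4 : ZMod (p ^ 2)) = 2 * 2 by norm_num, mul_pow]
  linear_combination factorial_split

theorem two_pow_mul_one_sub_harmonicModSq (hp : p.Prime) (hm : p = 4 * m + 3) (ht : 2 * t = 1) :
    2 ^ (2 * m + 1) * (1 - (p : ZMod (p ^ 2)) * t * harmonicModSq p (2 * m + 1)) =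
      (-1) ^ (m + 1) * (1 - p * t * harmonicModSq p m) := by
  have cast_p : (p : ZMod (p ^ 2)) = 4 * m + 3 := by
    simpa using congrArg (Nat.cast : ℕ → ZMod (p ^ 2)) hm
  have upper_half : ∏ j ∈ range (m + 1), (-1 * (p : ZMod (p ^ 2)) + 2 * ((m + j : ℕ) + 1)) =
      (-1) ^ (m + 1) * progressionProd 2 1 (m + 1) := by
    rw [progressionProd, ← prod_range_reflect, Nat.cast_prod, ← card_range (m + 1), ← prod_const,
      card_range, ← prod_mul_distrib]
    refine prod_congr rfl fun i hi ↦ ?_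
    have := mem_range.1 hi
    rw [show m + 1 - 1 - i = m - i by lia]
    push_cast [Nat.cast_sub (show i ≤ m by lia)]
    linear_combination -cast_p
  have split := prod_range_add (fun i ↦ -1 * (p : ZMod (p ^ 2)) + 2 * (i + 1)) m (m + 1)
  rw [upper_half, prod_mul_add_mul_succ _ hp (by lia) ht, prod_mul_add_mul_succ _ hp (by lia) ht,
    show m + (m + 1) = 2 * m + 1 by lia] at split
  have factorial_eq : (2 ^ m * m.factorial * progressionProd 2 1 (m + 1) : ZMod (p ^ 2)) =
      (2 * m + 1).factorial := by
    rw [progressionProd_succ, Nat.factorial_succ, ← two_pow_mul_factorial_mul_progressionProd]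
    push_cast; ring
  have factorial_unit : IsUnit ((2 * m + 1).factorial : ZMod (p ^ 2)) :=
    isUnit_natCast hp (by rw [hp.dvd_factorial]; lia)
  apply factorial_unit.mul_left_cancel
  linear_combination split
    + (-1) ^ (m + 1) * (1 - p * t * harmonicModSq p m) * factorial_eq

theorem neg_one_pow_mul_two_pow_mul_eq (hp : p.Prime) (hm : p = 4 * m + 3) (ht : 2 * t = 1) :
    (-1) ^ m * 2 ^ (2 * m + 1) * (1 + 2 * (p : ZMod (p ^ 2))) * (1 + p * t * harmonicModSq p m) =
      (2 ^ (2 * m + 1)) ^ 2 - 2 - 2 * p := by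
  have hP : (p : ZMod (p ^ 2)) ^ 2 = 0 := natCast_pow_eq_zero p le_rfl
  have h_half := four_pow_mul_one_sub_harmonicModSq (n := 2 * m + 1) hp (by lia) ht
  have h_quarter := two_pow_mul_one_sub_harmonicModSq hp hm ht
  have sign_sq := neg_one_pow_sq (R := ZMod (p ^ 2)) m
  rw [show (4 : ZMod (p ^ 2)) = 2 ^ 2 by norm_num, pow_right_comm] at h_half
  rw [pow_succ (-1 : ZMod (p ^ 2))] at h_quarter
  set ζ : ZMod (p ^ 2) := (-1) ^ m
  set e : ZMod (p ^ 2) := 2 ^ (2 * m + 1)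
  set H := harmonicModSq p (2 * m + 1)
  set K := harmonicModSq p m
  have e_sq : e ^ 2 = 1 - p * t * H := by
    linear_combination (1 + p * t * H) * h_half + (e ^ 2 * t ^ 2 * H ^ 2 - t * H ^ 2) * hP
      + p * H * ht
  have ζ_mul_e : ζ * e = -(1 + p * t * (H - K)) := by
    linear_combination ζ * (1 + p * t * H) * h_quarter
      + (ζ * e * t ^ 2 * H ^ 2 + ζ ^ 2 * t ^ 2 * H * K) * hP
      - (1 + p * t * (H - K)) * sign_sq
  rw [ζ_mul_e, e_sq]
  linear_combination
    2 * t * (K - H) * hP - (1 + 2 * p) * t ^ 2 * (H - K) * K * hP - 2 * t * K * hP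

end HarmonicSums

/-! ### Primes congruent to three modulo four -/

section ThreeModFour

theorem not_dvd_two_pow_mul {p : ℕ} (hp : p.Prime) (h2 : p ≠ 2) (k : ℕ) {a : ℕ} (h : ¬p ∣ a) :
    ¬p ∣ 2 ^ k * a := by
  rw [hp.dvd_mul, not_or]
  exact ⟨fun hk ↦ h2 ((Nat.prime_dvd_prime_iff_eq hp Nat.prime_two).1 (hp.dvd_of_dvd_pow hk)), h⟩

theorem ratCongr_of_reducesTo {p r : ℕ} (k : ℕ) [k.AtLeastTwo]
    (hk : IsUnit (OfNat.ofNat k : ZMod (p ^ r))) {a b : ℚ} {z : ZMod (p ^ r)}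
    (ha : ReducesTo (p ^ r) (OfNat.ofNat k * a) z) (hb : ReducesTo (p ^ r) (OfNat.ofNat k * b) z) :
    ratCongr p r a b := by
  have h : ReducesTo (p ^ r) (a - b) 0 := by
    have := (ha.sub hb).div (.ofNat k) hk
    rwa [sub_self, zero_mul, ← mul_sub, mul_div_cancel_left₀ _ (OfNat.ofNat_ne_zero k)] at this
  simpa [ratCongr] using h.dvd_num

variable {p m : ℕ}

theorem reducesTo_moment₀_zero_of_three_mod_four (hp : p.Prime) (hm : p = 4 * m + 3)
    (hp3 : 3 < p) : ReducesTo (p ^ 2) (moment₀ 0 (2 * m + 1)) 0 := by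
  have unit_den : IsUnit ((2 ^ m * (2 * m).factorial * (3 * m + 2).factorial : ℕ) :
      ZMod (p ^ 2)) := by
    refine isUnit_natCast hp ?_
    rw [mul_assoc]
    refine not_dvd_two_pow_mul hp (by lia) m ?_
    rw [hp.dvd_mul, hp.dvd_factorial, hp.dvd_factorial]
    lia
  have at_half : ReducesTo (p ^ 2) (moment₀ (halfNode (2 * m + 1)) (2 * m + 1)) 0 := by
    rw [moment₀_halfNode_odd, show (4 * m + 3 : ℚ) = p by rw [hm]; push_cast; rfl]
    convert (reducesTo_half (isUnit_two hp (by lia))).mul (((ReducesTo.natCast p).mul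
      ((ReducesTo.natCast ((4 * m + 1).factorial * m.factorial)).div (.natCast _)
        unit_den)).pow 2) using 1
    · push_cast; rfl
    · rw [mul_pow, natCast_pow_eq_zero p le_rfl]; ring
  have at_neg_half : ReducesTo (p ^ 2) (moment₀ (negHalfNode (2 * m + 1)) (2 * m + 1)) 0 :=
    (moments_negHalfNode_odd m).1 ▸ ReducesTo.zero
  obtain ⟨z, hz, h⟩ := (isQuadraticFamily_moments hp (n := 2 * m + 1) (by lia) hp3 (r := 2)
    (by lia)).1 |>.exists_reducesTo_sq hp (by lia) at_half at_neg_half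
  rw [add_zero, (isUnit_two hp (by lia)).mul_right_eq_zero] at h
  exact h ▸ hz

theorem exists_reducesTo_sq_four_thirds_mul_div (hp : p.Prime) (hp3 : p ≠ 3) (r a : ℕ) {b : ℕ}
    (hb : ¬p ∣ b) :
    ∃ z, ReducesTo (p ^ r) ((4 / 3 * (a / b)) ^ 2) (z ^ 2) ∧ b * (3 * z) = 4 * a :=
  have u3 : IsUnit (3 : ZMod (p ^ r)) := isUnit_three hp hp3
  have ub : IsUnit (b : ZMod (p ^ r)) := isUnit_natCast hp hb
  ⟨_, (((ReducesTo.ofNat 4).div (.ofNat 3) u3).mul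
      ((ReducesTo.natCast a).div (.natCast b) ub)).pow 2,
    by linear_combination 4 * a * b * (b : ZMod (p ^ r))⁻¹ * ZMod.mul_inv_of_unit _ u3
      + 4 * a * ZMod.mul_inv_of_unit _ ub⟩

theorem factorial_two_mul_add_one_eq_choose_mul (m : ℕ) :
    (2 * m + 1).factorial = (2 * m + 1).choose m * (m + 1) * m.factorial ^ 2 := by
  rw [← Nat.choose_mul_factorial_mul_factorial (show m ≤ 2 * m + 1 by lia),
    show 2 * m + 1 - m = m + 1 by lia, Nat.factorial_succ]
  ring

variable {t : ZMod (p ^ 2)}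

theorem exists_reducesTo_moment₂_halfNode (hp : p.Prime) (hm : p = 4 * m + 3) (hp3 : 3 < p)
    (ht : 2 * t = 1) :
    ∃ z, 3 * z = 2 ^ m * (2 * m + 1).choose m * (p + 1) * (1 - p * t * harmonicModSq p m) ∧
      ReducesTo (p ^ 2) (moment₂ (halfNode (2 * m + 1)) (2 * m + 1)) (z ^ 2) := by
  have hP : (p : ZMod (p ^ 2)) ^ 2 = 0 := natCast_pow_eq_zero p le_rfl
  have cast_p : (p : ZMod (p ^ 2)) = 4 * m + 3 := by
    simpa using congrArg (Nat.cast : ℕ → ZMod (p ^ 2)) hm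
  have progression : (progressionProd 2 (4 * m + 5) m : ZMod (p ^ 2)) =
      2 ^ m * m.factorial * (1 + p * t * harmonicModSq p m) := by
    rw [progressionProd, Nat.cast_prod, ← one_mul (p : ZMod (p ^ 2)),
      ← prod_mul_add_mul_succ 1 hp (by lia) ht]
    refine prod_congr rfl fun i _ ↦ ?_
    push_cast
    linear_combination -cast_p
  have not_dvd : ¬p ∣ m.factorial * progressionProd 2 (4 * m + 5) m := by
    rw [hp.dvd_mul, hp.dvd_factorial, not_or, progressionProd, hp.prime.dvd_finsetProd_iff]
    refine ⟨by lia, ?_⟩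
    rintro ⟨i, hi, hdvd⟩
    rw [show 4 * m + 5 + 2 * i = p + 2 ^ 1 * (i + 1) by lia, Nat.dvd_add_right (dvd_refl p)] at hdvd
    exact not_dvd_two_pow_mul hp (by lia) 1
      (Nat.not_dvd_of_pos_of_lt i.succ_pos (by have := mem_range.1 hi; lia)) hdvd
  obtain ⟨z, hz, h⟩ := exists_reducesTo_sq_four_thirds_mul_div hp (by lia) 2
    (4 ^ m * (2 * m + 1).factorial) not_dvd
  refine ⟨z, (isUnit_natCast hp not_dvd).mul_left_cancel (h.trans ?_), ?_⟩
  rotate_left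
  · rw [moment₂_halfNode_odd]
    exact_mod_cast hz
  rw [factorial_two_mul_add_one_eq_choose_mul, show 4 ^ m = 2 ^ m * 2 ^ m from mul_pow 2 2 m]
  push_cast
  rw [progression]
  linear_combination (m.factorial ^ 2 * (2 ^ m) ^ 2 * (2 * m + 1).choose m : ZMod (p ^ 2)) *
    (-cast_p + (p + 1) * (t * harmonicModSq p m) ^ 2 * hP)

theorem exists_reducesTo_moment₂_negHalfNode (hp : p.Prime) (hm : p = 4 * m + 3) (hp3 : 3 < p) :
    ∃ z, 3 * z = (-1) ^ m * 2 ^ m * (2 * m + 1).choose m * (p + 1) *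
        (1 + p * harmonicModSq p m) ∧
      ReducesTo (p ^ 2) (moment₂ (negHalfNode (2 * m + 1)) (2 * m + 1)) (z ^ 2) := by
  have hP : (p : ZMod (p ^ 2)) ^ 2 = 0 := natCast_pow_eq_zero p le_rfl
  have cast_p : (p : ZMod (p ^ 2)) = 4 * m + 3 := by
    simpa using congrArg (Nat.cast : ℕ → ZMod (p ^ 2)) hm
  have desc : ((4 * m + 2).descFactorial m : ZMod (p ^ 2)) =
      (-1) ^ m * m.factorial * (1 - p * harmonicModSq p m) := by
    have := prod_mul_add_mul_succ (-1) hp (show m < p by lia) (mul_one 1)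
    rw [one_pow, one_mul, mul_one, neg_one_mul, neg_mul, ← sub_eq_add_neg] at this
    rw [mul_assoc, ← this, Nat.descFactorial_eq_prod_range, Nat.cast_prod, ← card_range m,
      ← prod_const, card_range, ← prod_mul_distrib]
    refine prod_congr rfl fun i hi ↦ ?_
    have := mem_range.1 hi
    push_cast [Nat.cast_sub (show i ≤ 4 * m + 2 by lia)]
    linear_combination -cast_p
  have not_dvd : ¬p ∣ m.factorial * (4 * m + 2).descFactorial m := by
    rw [hp.dvd_mul, hp.dvd_factorial, not_or]
    refine ⟨by lia, fun h ↦ ?_⟩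
    have := (hp.dvd_factorial).1 (h.trans ⟨_, (Nat.factorial_mul_descFactorial
      (show m ≤ 4 * m + 2 by lia)).symm.trans (mul_comm _ _)⟩)
    lia
  obtain ⟨z, hz, h⟩ := exists_reducesTo_sq_four_thirds_mul_div hp (by lia) 2
    (2 ^ m * (2 * m + 1).factorial) not_dvd
  refine ⟨z, (isUnit_natCast hp not_dvd).mul_left_cancel (h.trans ?_), ?_⟩
  rotate_left
  · rw [(moments_negHalfNode_odd m).2]
    exact_mod_cast hz
  rw [factorial_two_mul_add_one_eq_choose_mul]
  push_cast
  rw [desc]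
  have sign_sq := neg_one_pow_sq (R := ZMod (p ^ 2)) m
  linear_combination (m.factorial ^ 2 * 2 ^ m * (2 * m + 1).choose m : ZMod (p ^ 2)) *
    (-cast_p + (p + 1) * harmonicModSq p m ^ 2 * hP - (p + 1) *
      (1 - p * harmonicModSq p m) * (1 + p * harmonicModSq p m) * sign_sq)

theorem exists_reducesTo_moment₂_of_three_mod_four (hp : p.Prime) (hm : p = 4 * m + 3)
    (hp3 : 3 < p) :
    ∃ z : ZMod (p ^ 2), 18 * ((-1) ^ m * z) =
        -((2 * p + 2 - (2 ^ (2 * m + 1)) ^ 2) * (2 * m + 1).choose m ^ 2) ∧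
      ReducesTo (p ^ 2) (moment₂ 0 (2 * m + 1)) z := by
  have u2 : IsUnit (2 : ZMod (p ^ 2)) := isUnit_two hp (by lia)
  have ht := ZMod.mul_inv_of_unit _ u2
  obtain ⟨a, ha, hA⟩ := exists_reducesTo_moment₂_halfNode hp hm hp3 ht
  obtain ⟨b, hb, hB⟩ := exists_reducesTo_moment₂_negHalfNode hp hm hp3
  obtain ⟨z, hz, h⟩ := (isQuadraticFamily_moments hp (n := 2 * m + 1) (by lia) hp3 (r := 2)
    (by lia)).2.2 |>.exists_reducesTo_sq hp (by lia) hA hB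
  refine ⟨z, ?_, hz⟩
  have hP : (p : ZMod (p ^ 2)) ^ 2 = 0 := natCast_pow_eq_zero p le_rfl
  have sign_sq := neg_one_pow_sq (R := ZMod (p ^ 2)) m
  have harmonic := neg_one_pow_mul_two_pow_mul_eq hp hm ht
  rw [show (2 : ZMod (p ^ 2)) ^ (2 * m + 1) = 2 * (2 ^ m) ^ 2 by ring] at harmonic ⊢
  set t : ZMod (p ^ 2) := 2⁻¹
  set H := harmonicModSq p m
  set C : ZMod (p ^ 2) := ((2 * m + 1).choose m : ZMod (p ^ 2))
  set ζ : ZMod (p ^ 2) := (-1) ^ m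
  set f : ZMod (p ^ 2) := 2 ^ m
  have nine_mul_sq_a : 9 * a ^ 2 = f ^ 2 * C ^ 2 * (1 + 2 * p) * (1 - p * H) := by
    linear_combination (3 * a + f * C * (p + 1) * (1 - p * t * H)) * ha + f ^ 2 * C ^ 2 *
      (((1 - p * t * H) ^ 2 + (1 + 2 * p) * t ^ 2 * H ^ 2) * hP - (1 + 2 * p) * p * H * ht)
  have nine_mul_sq_b : 9 * b ^ 2 = f ^ 2 * C ^ 2 * (1 + 2 * p) * (1 + 2 * p * H) := by
    linear_combination (3 * b + ζ * f * C * (p + 1) * (1 + p * H)) * hb + f ^ 2 * C ^ 2 *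
      (((1 + p * H) ^ 2 + (1 + 2 * p) * H ^ 2) * hP + (p + 1) ^ 2 * (1 + p * H) ^ 2 * sign_sq)
  linear_combination 9 * ζ * h + ζ * nine_mul_sq_a + ζ * nine_mul_sq_b + C ^ 2 * harmonic
    - ζ * f ^ 2 * C ^ 2 * (1 + 2 * p) * p * H * ht

theorem reducesTo_R1 (hm : p = 4 * m + 3) (N : ℕ) :
    ReducesTo N (R1 p) ((2 * p + 2 - (2 ^ (2 * m + 1)) ^ 2) * (2 * m + 1).choose m ^ 2) := by
  rw [R1, show p - 1 = (2 * m + 1) * 2 by lia, show (2 * m + 1) * 2 / 2 = 2 * m + 1 by lia,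
    show p / 4 = m by lia, pow_mul]
  exact ((((ReducesTo.ofNat 2).mul (.natCast p)).add (.ofNat 2)).sub
    (((ReducesTo.ofNat 2).pow _).pow 2)).mul ((ReducesTo.natCast _).pow 2)

theorem ratCongr_binomialSum_of_three_mod_four (hp : p.Prime) (h4 : p % 4 = 3) (hp3 : p ≠ 3) :
    ratCongr p 2 ((-1) ^ (p / 4) * binomialSum p 2) (-(1 / 18) * R1 p - p / 27) ∧
      ratCongr p 2 ((-1) ^ (p / 4) * binomialSum p 3) (1 / 108 * R1 p - 5 / 648 * p) := by
  obtain ⟨m, hm⟩ : ∃ m, p = 4 * m + 3 := ⟨p / 4, by lia⟩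
  have h3 : 3 < p := by lia
  obtain ⟨q, hq, eq_q⟩ := exists_reducesTo_moment₁_sq (n := 2 * m + 1) hp (by lia) h3
  obtain ⟨z, eq_z, hz⟩ := exists_reducesTo_moment₂_of_three_mod_four hp hm h3
  obtain ⟨s₂, s₃, h₂, h₃, eq_s₂, eq_s₃⟩ := exists_reducesTo_binomialSum_two_three hp (by lia)
    (by lia) (reducesTo_moment₀_zero_of_three_mod_four hp hm h3) hq hz
  have sign_sq := neg_one_pow_sq (R := ZMod (p ^ 2)) m
  have sign : ReducesTo (p ^ 2) ((-1) ^ m) ((-1) ^ m) := ReducesTo.one.neg.pow m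
  have hR := reducesTo_R1 hm (p ^ 2)
  have u2 : IsUnit (2 : ZMod (p ^ 2)) := isUnit_two hp (by lia)
  have u3 : IsUnit (3 : ZMod (p ^ 2)) := isUnit_three hp hp3
  rw [show (2 * m + 1) / 2 = m by lia] at eq_q
  rw [show p / 4 = m by lia]
  set R : ZMod (p ^ 2) := (2 * p + 2 - (2 ^ (2 * m + 1)) ^ 2) * (2 * m + 1).choose m ^ 2
  set ζ : ZMod (p ^ 2) := (-1) ^ m
  constructor
  · refine ratCongr_of_reducesTo 108 (z := -(6 * R) - 4 * p) ?_ ?_ ?_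
    · convert (u2.pow 2).mul (u3.pow 3) using 1; norm_num
    · convert (ReducesTo.ofNat 108).mul (sign.mul h₂) using 1
      linear_combination -ζ * eq_s₂ - 6 * eq_z + 4 * ζ * eq_q + 4 * p * sign_sq
    · convert ((ReducesTo.ofNat 6).mul hR).neg.sub ((ReducesTo.ofNat 4).mul (.natCast p)) using 1
      ring
  · refine ratCongr_of_reducesTo 648 (z := 6 * R - 5 * p) ?_ ?_ ?_
    · convert (u2.pow 3).mul (u3.pow 4) using 1; norm_num
    · convert (ReducesTo.ofNat 648).mul (sign.mul h₃) using 1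
      linear_combination -9 * ζ * eq_s₃ + ζ * eq_s₂ + 6 * eq_z + 5 * ζ * eq_q + 5 * p * sign_sq
    · convert ((ReducesTo.ofNat 6).mul hR).sub ((ReducesTo.ofNat 5).mul (.natCast p)) using 1
      ring

end ThreeModFour

/-! ### Morita's gamma function modulo a prime power -/

section MoritaGamma

open Classical in
/-- The factor by which Morita's gamma function changes from `x` to `x + 1`: `-x` when `x` is a
unit, and `-1` otherwise. -/
noncomputable def moritaFactor {R : Type*} [Ring R] (x : R) : R := if IsUnit x then -x else -1

/-- Morita's `p`-adic gamma function reduced modulo a power `N` of `p`, as a function on `ZMod N`: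
the product of `moritaFactor j` over the integers `0 ≤ j < x`. -/
noncomputable def moritaGamma {N : ℕ} (x : ZMod N) : ZMod N :=
  ∏ j ∈ range x.val, moritaFactor (j : ZMod N)

section Factor

variable {R : Type*} [Ring R] {x : R}

theorem moritaFactor_of_isUnit (h : IsUnit x) : moritaFactor x = -x := if_pos h

theorem moritaFactor_of_not_isUnit (h : ¬IsUnit x) : moritaFactor x = -1 := if_neg h

theorem isUnit_moritaFactor (x : R) : IsUnit (moritaFactor x) := by
  by_cases h : IsUnit x
  · exact moritaFactor_of_isUnit h ▸ h.neg
  · exact moritaFactor_of_not_isUnit h ▸ isUnit_one.neg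

theorem moritaFactor_zero : moritaFactor (0 : R) = -1 := by
  by_cases h : IsUnit (0 : R)
  · rw [moritaFactor_of_isUnit h, isUnit_zero_iff.1 h]
  · exact moritaFactor_of_not_isUnit h

theorem moritaFactor_neg_sq (x : R) : moritaFactor (-x) ^ 2 = moritaFactor x ^ 2 := by
  by_cases h : IsUnit x
  · rw [moritaFactor_of_isUnit h, moritaFactor_of_isUnit h.neg, neg_sq]
  · rw [moritaFactor_of_not_isUnit h, moritaFactor_of_not_isUnit (IsUnit.neg_iff x |>.not.2 h)]

end Factor

theorem moritaGamma_zero {N : ℕ} : moritaGamma (0 : ZMod N) = 1 := by simp [moritaGamma]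

theorem prod_if_isUnit {R M : Type*} [CommRing R] [Fintype R] [Fintype Rˣ] [CommMonoid M]
    [DecidablePred (IsUnit : R → Prop)] (f : R → M) :
    ∏ x, (if IsUnit x then f x else 1) = ∏ u : Rˣ, f u := by
  refine (Fintype.prod_of_injective (Units.val : Rˣ → R) Units.val_injective (fun u ↦ f u)
    (fun x ↦ if IsUnit x then f x else 1) (fun x hx ↦ if_neg ?_) fun u ↦ ?_).symm
  · rintro ⟨u, rfl⟩
    exact hx ⟨u, rfl⟩
  · exact (if_pos u.isUnit).symm

theorem prod_range_natCast_zmod {N : ℕ} [NeZero N] {M : Type*} [CommMonoid M] (f : ZMod N → M) :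
    ∏ j ∈ range N, f j = ∏ x, f x :=
  prod_nbij' Nat.cast ZMod.val (by simp) (by simp [ZMod.val_lt])
    (by simp +contextual [Nat.mod_eq_of_lt]) (by simp) (by simp)

variable {p r : ℕ} (hp : p.Prime)
include hp

theorem isUnit_or_isNilpotent (x : ZMod (p ^ r)) : IsUnit x ∨ IsNilpotent x := by
  have : NeZero p := ⟨hp.ne_zero⟩
  rw [← ZMod.natCast_zmod_val x]
  by_cases h : p ∣ x.val
  · obtain ⟨c, hc⟩ := h
    exact .inr ⟨r, by rw [hc, Nat.cast_mul, mul_pow, natCast_pow_eq_zero p le_rfl, zero_mul]⟩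
  · exact .inl (isUnit_natCast hp h)

theorem isUnit_castHom_iff (hr : p ∣ p ^ r) (x : ZMod (p ^ r)) :
    IsUnit (ZMod.castHom hr (ZMod p) x) ↔ IsUnit x := by
  have : Fact p.Prime := ⟨hp⟩
  refine ⟨fun h ↦ (isUnit_or_isNilpotent hp x).resolve_right fun nil ↦ ?_, fun h ↦ h.map _⟩
  exact h.ne_zero (nil.map _).eq_zero

variable (hp2 : p ≠ 2)
include hp2

theorem eq_one_or_eq_neg_one_of_mul_self_eq_one {u : ZMod (p ^ r)} (h : u * u = 1) :
    u = 1 ∨ u = -1 := by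
  have factored : (u - 1) * (u + 1) = 0 := by linear_combination h
  obtain unit | nil := isUnit_or_isNilpotent hp (u - 1)
  · exact .inr (eq_neg_of_add_eq_zero_left (unit.mul_right_eq_zero.1 factored))
  · have unit := nil.isUnit_add_left_of_commute (isUnit_two hp hp2) (.all _ _)
    rw [show 2 + (u - 1) = u + 1 by ring] at unit
    exact .inl (sub_eq_zero.1 (unit.mul_left_eq_zero.1 factored))

theorem prod_units_zmod_eq_neg_one [NeZero p] : ∏ u : (ZMod (p ^ r))ˣ, u = -1 := by
  rw [← mul_prod_erase univ _ (mem_univ (-1)), mul_eq_left]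
  refine prod_involution (fun u _ ↦ u⁻¹) (fun u _ ↦ mul_inv_cancel u) (fun u hu hu1 h ↦ ?_)
    (fun u hu ↦ ?_) fun u _ ↦ inv_inv u
  · have mul_self : (u * u : ZMod (p ^ r)) = 1 :=
      congrArg Units.val ((congrArg (u * ·) h.symm).trans (mul_inv_cancel u))
    obtain h | h := eq_one_or_eq_neg_one_of_mul_self_eq_one hp hp2 mul_self
    · exact hu1 (Units.ext h)
    · exact (mem_erase.1 hu).1 (Units.ext h)
  · refine mem_erase.2 ⟨fun h ↦ (mem_erase.1 hu).1 ?_, mem_univ _⟩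
    rw [← inv_inv u, h, inv_neg, inv_one]

theorem prod_moritaFactor [NeZero p] : ∏ x : ZMod (p ^ r), moritaFactor x = 1 := by
  classical
  have factor (x : ZMod (p ^ r)) : moritaFactor x = -1 * if IsUnit x then x else 1 := by
    by_cases h : IsUnit x <;> simp [moritaFactor, h]
  simp only [factor]
  rw [prod_mul_distrib, prod_if_isUnit fun x ↦ x, prod_const, card_univ, ZMod.card,
    ((hp.odd_of_ne_two hp2).pow).neg_one_pow, ← Units.coe_prod, prod_units_zmod_eq_neg_one hp hp2]
  simp

variable (x : ZMod (p ^ r))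

theorem moritaGamma_add_one :
    moritaGamma (x + 1) = moritaGamma x * moritaFactor x := by
  have : NeZero p := ⟨hp.ne_zero⟩
  have prod_succ : ∏ j ∈ range (x.val + 1), moritaFactor (j : ZMod (p ^ r)) =
      moritaGamma x * moritaFactor x := by
    rw [prod_range_succ, ZMod.natCast_zmod_val, moritaGamma]
  rw [← prod_succ, moritaGamma]
  obtain h | h := (Nat.succ_le_of_lt x.val_lt).lt_or_eq
  · rw [show x + 1 = (x.val + 1 : ℕ) by simp, ZMod.val_natCast_of_lt h]
  · have last : x + 1 = 0 := by
      simpa using congrArg (Nat.cast : ℕ → ZMod (p ^ r)) h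
    rw [last, ZMod.val_zero, prod_range_zero, ← Nat.succ_eq_add_one, h, prod_range_natCast_zmod,
      prod_moritaFactor hp hp2]

theorem moritaGamma_add_natCast (k : ℕ) :
    moritaGamma (x + (k : ZMod (p ^ r))) =
      moritaGamma x * ∏ i ∈ range k, moritaFactor (x + i) := by
  induction k with
  | zero => simp
  | succ k ih =>
    rw [prod_range_succ, ← mul_assoc, ← ih, ← moritaGamma_add_one hp hp2, Nat.cast_succ, add_assoc]

theorem moritaGamma_mul_moritaGamma_one_sub_sq :
    (moritaGamma x * moritaGamma (1 - x)) ^ 2 = 1 := by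
  have : NeZero p := ⟨hp.ne_zero⟩
  rw [← ZMod.natCast_zmod_val x]
  induction x.val with
  | zero =>
    have at_one := moritaGamma_add_one hp hp2 (0 : ZMod (p ^ r))
    rw [zero_add, moritaGamma_zero, moritaFactor_zero] at at_one
    rw [Nat.cast_zero, sub_zero, at_one, moritaGamma_zero]
    ring
  | succ k ih =>
    have forward := moritaGamma_add_one hp hp2 (k : ZMod (p ^ r))
    have backward := moritaGamma_add_one hp hp2 (-k : ZMod (p ^ r))
    rw [show (-k + 1 : ZMod (p ^ r)) = 1 - k by ring] at backward
    rw [Nat.cast_succ, forward, sub_add_cancel_right]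
    rw [backward] at ih
    linear_combination ih - (moritaGamma (k : ZMod (p ^ r)) *
      moritaGamma (-(k : ZMod (p ^ r)))) ^ 2 * moritaFactor_neg_sq (k : ZMod (p ^ r))

omit hp hp2 in
theorem isUnit_moritaGamma {N : ℕ} (x : ZMod N) : IsUnit (moritaGamma x) := by
  rw [moritaGamma, IsUnit.prod_iff]
  exact fun _ _ ↦ isUnit_moritaFactor _

end MoritaGamma

section GammaQuadratic

open Polynomial

theorem prod_if_isUnit_X_add_C (p : ℕ) [Fact p.Prime] [DecidablePred (IsUnit : ZMod p → Prop)] :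
    ∏ a : ZMod p, (if IsUnit a then X + C a else 1) = X ^ (p - 1) - 1 := by
  classical
  have nodal := Lagrange.nodal_subgroup_eq_X_pow_card_sub_one (⊤ : Subgroup (ZMod p)ˣ)
  rw [Lagrange.nodal] at nodal
  rw [prod_if_isUnit, ← Equiv.prod_comp (Equiv.neg _), ← ZMod.card_units p]
  simpa [-ZMod.card_units_eq_totient, ← sub_eq_add_neg] using nodal

theorem exists_eval_eq_add_mul_add_sq {R : Type*} [CommRing R] (g : R[X]) (a : R) :
    ∃ c d, ∀ y, ∃ e, g.eval (a * y) = c + d * a * y + e * a ^ 2 := by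
  refine ⟨g.coeff 0, g.divX.coeff 0, fun y ↦ ⟨g.divX.divX.eval (a * y) * y ^ 2, ?_⟩⟩
  nth_rw 1 [← divX_mul_X_add g, ← divX_mul_X_add g.divX]
  simp only [eval_add, eval_mul, eval_X, eval_C]
  ring

variable {p : ℕ} (hp : p.Prime) (hp3 : 3 < p)
include hp

theorem C_dvd_prod_sub {r : ℕ} (hr : r ≠ 0) (x : ZMod (p ^ r))
    [DecidablePred (IsUnit : ZMod (p ^ r) → Prop)] :
    C (p : ZMod (p ^ r)) ∣
      ∏ j ∈ range p, (if IsUnit (x + j) then X + C (x + (j : ZMod (p ^ r))) else 1)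
        - (X ^ (p - 1) - 1) := by
  classical
  have : Fact p.Prime := ⟨hp⟩
  set φ := ZMod.castHom (dvd_pow_self p hr) (ZMod p)
  have ker {z : ZMod (p ^ r)} (h : φ z = 0) : (p : ZMod (p ^ r)) ∣ z := by
    rw [← ZMod.natCast_zmod_val z, map_natCast, ZMod.natCast_eq_zero_iff] at h
    rw [← ZMod.natCast_zmod_val z]
    exact Nat.cast_dvd_cast h
  rw [C_dvd_iff_dvd_coeff]
  refine fun i ↦ ker ?_
  rw [← coeff_map, Polynomial.map_sub, Polynomial.map_prod]
  have reduced : ∏ j ∈ range p,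
      (if IsUnit (x + j) then X + C (x + (j : ZMod (p ^ r))) else 1 : (ZMod (p ^ r))[X]).map φ =
      X ^ (p - 1) - 1 := by
    rw [← prod_if_isUnit_X_add_C p, ← Equiv.prod_comp (Equiv.addLeft (φ x)),
      ← prod_range_natCast_zmod]
    refine prod_congr rfl fun j _ ↦ ?_
    have unit_iff := isUnit_castHom_iff hp (dvd_pow_self p hr) (x + j)
    rw [map_add, map_natCast] at unit_iff
    simp only [Equiv.coe_addLeft, φ, unit_iff]
    split_ifs <;> simp
  rw [reduced]
  simp

include hp3

theorem exists_prod_moritaFactor_eq (x : ZMod (p ^ 3)) :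
    ∃ a b, ∀ y, ∏ j ∈ range p, moritaFactor (x + j + p * y) = 1 + p * a + p ^ 2 * b * y := by
  classical
  have hP : (p : ZMod (p ^ 3)) ^ 3 = 0 := natCast_pow_eq_zero p le_rfl
  obtain ⟨g, hg⟩ := C_dvd_prod_sub hp three_ne_zero x
  obtain ⟨c, d, h⟩ := exists_eval_eq_add_mul_add_sq g (p : ZMod (p ^ 3))
  refine ⟨-c, -d, fun y ↦ ?_⟩
  have factor (j : ℕ) : moritaFactor (x + j + p * y) = -1 *
      (if IsUnit (x + j) then X + C (x + (j : ZMod (p ^ 3))) else 1).eval (p * y) := by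
    have nil : IsNilpotent (p * y : ZMod (p ^ 3)) := ⟨3, by rw [mul_pow, hP, zero_mul]⟩
    by_cases hu : IsUnit (x + j)
    · rw [moritaFactor_of_isUnit (nil.isUnit_add_left_of_commute hu (.all _ _)), if_pos hu]
      simp [add_comm]
    · rw [moritaFactor_of_not_isUnit fun h ↦ hu ?_, if_neg hu]
      · simp
      · simpa using nil.neg.isUnit_add_left_of_commute h (.all _ _)
  have top_vanishes : (p * y : ZMod (p ^ 3)) ^ (p - 1) = 0 := by
    rw [mul_pow, natCast_pow_eq_zero p (by lia), zero_mul]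
  obtain ⟨e, he⟩ := h y
  have eval_prod := congrArg (eval (p * y)) hg
  simp only [eval_sub, eval_mul, eval_C, eval_pow, eval_X, eval_one, top_vanishes, he] at eval_prod
  simp only [factor]
  rw [prod_mul_distrib, prod_const, card_range, (hp.odd_of_ne_two (by lia)).neg_one_pow,
    ← Polynomial.eval_prod]
  linear_combination -eval_prod - e * hP

theorem isQuadraticIn_moritaGamma (x : ZMod (p ^ 3)) :
    IsQuadraticIn (p : ZMod (p ^ 3)) fun y ↦ moritaGamma (x + (p : ZMod (p ^ 3)) * y) := by
  have : NeZero p := ⟨hp.ne_zero⟩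
  have hP : (p : ZMod (p ^ 3)) ^ 3 = 0 := natCast_pow_eq_zero p le_rfl
  have hh := ZMod.mul_inv_of_unit (2 : ZMod (p ^ 3)) (isUnit_two hp (by lia))
  obtain ⟨a, b, block⟩ := exists_prod_moritaFactor_eq hp hp3 x
  set h : ZMod (p ^ 3) := 2⁻¹
  set P : ZMod (p ^ 3) := (p : ZMod (p ^ 3))
  have at_natCast (k : ℕ) (K : ZMod (p ^ 3)) (hK : K = k) : moritaGamma (x + P * K) =
      moritaGamma x * (1 + K * P * a + K * (K - 1) * h * P ^ 2 * (a ^ 2 + b)) := by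
    induction k generalizing K with
    | zero => simp [hK]
    | succ k ih =>
      obtain rfl : K = (k : ZMod (p ^ 3)) + 1 := by simpa using hK
      have step := moritaGamma_add_natCast hp (by lia) (x + P * (k : ZMod (p ^ 3))) p
      simp only [add_right_comm x (P * (k : ZMod (p ^ 3)))] at step
      rw [block, ih _ rfl, add_right_comm] at step
      rw [mul_add_one, ← add_assoc, step]
      generalize (k : ZMod (p ^ 3)) = K
      linear_combination
        moritaGamma x * (K ^ 2 * a * b + K * (K - 1) * h * (a ^ 2 + b) * (a + P * b * K)) * hP
          - moritaGamma x * P ^ 2 * K * (a ^ 2 + b) * hh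
  refine ⟨moritaGamma x, moritaGamma x * (a - h * P * (a ^ 2 + b)),
    moritaGamma x * h * (a ^ 2 + b), fun y ↦ ?_⟩
  simp only [at_natCast y.val y (ZMod.natCast_zmod_val y).symm]
  ring

end GammaQuadratic

/-! ### The quadratic moments at zero as gamma values -/

section GammaProgression

open scoped Nat

variable {p r : ℕ} (hp : p.Prime)
include hp

theorem not_dvd_progressionProd {d a k : ℕ} (h : ∀ i < k, ¬p ∣ a + d * i) :
    ¬p ∣ progressionProd d a k := by
  rw [progressionProd, hp.prime.dvd_finsetProd_iff]
  rintro ⟨i, hi, hdvd⟩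
  exact h i (mem_range.1 hi) hdvd

theorem isUnit_progressionProd {d a k : ℕ} (h : ∀ i < k, ¬p ∣ a + d * i) :
    IsUnit (progressionProd d a k : ZMod (p ^ r)) :=
  isUnit_natCast hp (not_dvd_progressionProd hp h)

variable (hp2 : p ≠ 2) {d a k : ℕ} {x : ZMod (p ^ r)}
include hp2

theorem pow_mul_moritaGamma_add_natCast (hx : d * x = a) (h : ∀ i < k, ¬p ∣ a + d * i) :
    (d : ZMod (p ^ r)) ^ k * moritaGamma (x + (k : ZMod (p ^ r))) =
      (-1) ^ k * moritaGamma x * progressionProd d a k := by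
  induction k with
  | zero => simp [progressionProd]
  | succ k ih =>
    have scaled : d * (x + k) = ((a + d * k : ℕ) : ZMod (p ^ r)) := by
      push_cast
      linear_combination hx
    have unit : IsUnit (x + (k : ZMod (p ^ r))) :=
      isUnit_of_mul_isUnit_right (scaled ▸ isUnit_natCast hp (h k k.lt_succ_self))
    rw [Nat.cast_succ, ← add_assoc, moritaGamma_add_one hp hp2, moritaFactor_of_isUnit unit,
      progressionProd_succ, Nat.cast_mul, ← scaled]
    linear_combination (-(d : ZMod (p ^ r)) * (x + (k : ZMod (p ^ r)))) *
      ih fun i hi ↦ h i (by lia)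

theorem pow_mul_moritaGamma_eq_sub_natCast (hx : d * (1 - x) = a)
    (h : ∀ i < k, ¬p ∣ a + d * i) :
    (d : ZMod (p ^ r)) ^ k * moritaGamma x =
      moritaGamma (x - (k : ZMod (p ^ r))) * progressionProd d a k := by
  induction k with
  | zero => simp [progressionProd]
  | succ k ih =>
    have scaled : d * -(x - ((k + 1 : ℕ) : ZMod (p ^ r))) = ((a + d * k : ℕ) : ZMod (p ^ r)) := by
      push_cast
      linear_combination hx
    have unit : IsUnit (x - ((k + 1 : ℕ) : ZMod (p ^ r))) := IsUnit.neg_iff _ |>.1 <|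
      isUnit_of_mul_isUnit_right (scaled ▸ isUnit_natCast hp (h k k.lt_succ_self))
    have shift : x - (k : ZMod (p ^ r)) = x - ((k + 1 : ℕ) : ZMod (p ^ r)) + 1 := by
      push_cast
      ring
    have ih := ih fun i hi ↦ h i (by lia)
    rw [shift, moritaGamma_add_one hp hp2, moritaFactor_of_isUnit unit] at ih
    rw [progressionProd_succ, Nat.cast_mul, ← scaled]
    linear_combination (d : ZMod (p ^ r)) * ih

theorem moritaGamma_one_sq : moritaGamma (1 : ZMod (p ^ r)) ^ 2 = 1 := by
  simpa [moritaGamma_zero] using moritaGamma_mul_moritaGamma_one_sub_sq hp hp2 (0 : ZMod (p ^ r))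

theorem moritaGamma_one_add_natCast_sq (hk : k < p) :
    moritaGamma (1 + (k : ZMod (p ^ r))) ^ 2 = (k ! : ZMod (p ^ r)) ^ 2 := by
  have up := pow_mul_moritaGamma_add_natCast (d := 1) (a := 1) (k := k) (x := (1 : ZMod (p ^ r)))
    hp hp2 (by simp) fun i hi ↦ Nat.not_dvd_of_pos_of_lt (by lia) (by lia)
  rw [progressionProd_one_one, Nat.cast_one, one_pow, one_mul] at up
  rw [up, mul_pow, mul_pow, neg_one_pow_sq, moritaGamma_one_sq hp hp2]
  ring

theorem moritaGamma_natCast_neg_mul_factorial (hk : k < p) :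
    moritaGamma (0 - (k : ZMod (p ^ r))) * (k ! : ZMod (p ^ r)) = 1 := by
  have down := pow_mul_moritaGamma_eq_sub_natCast (d := 1) (a := 1) (k := k)
    (x := (0 : ZMod (p ^ r))) hp hp2 (by simp) fun i hi ↦ Nat.not_dvd_of_pos_of_lt (by lia) (by lia)
  rw [progressionProd_one_one, Nat.cast_one, one_pow, one_mul, moritaGamma_zero] at down
  exact down.symm

theorem moritaGamma_half_pow_four {h : ZMod (p ^ r)} (hh : 2 * h = 1) : moritaGamma h ^ 4 = 1 := by
  have reflection := moritaGamma_mul_moritaGamma_one_sub_sq hp hp2 h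
  rw [show 1 - h = h by linear_combination -hh] at reflection
  linear_combination reflection

end GammaProgression

section GammaNodes

open scoped Nat

/-- The quotient `Γ(1 + p y) Γ(1/4 + p y / 2) / Γ(3/4 + 3 p y / 2)` of values of Morita's gamma
function, where `h` stands for `1/2`. Its square at `y` is, up to an elementary factor, the moment
`moment₀` at the node `p y`. -/
noncomputable def gammaQuotient {p : ℕ} (h y : ZMod (p ^ 3)) : ZMod (p ^ 3) :=
  moritaGamma (1 + (p : ZMod (p ^ 3)) * y) *
      moritaGamma (h * h + (p : ZMod (p ^ 3)) * (h * y)) *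
    (moritaGamma (3 * h * h + (p : ZMod (p ^ 3)) * (3 * h * y)))⁻¹

theorem mul_inv_eq_mul_inv_of_isUnit {N : ℕ} {a b c d : ZMod N} (hb : IsUnit b) (hd : IsUnit d)
    (h : a * d = c * b) : a * b⁻¹ = c * d⁻¹ := by
  linear_combination -a * b⁻¹ * ZMod.mul_inv_of_unit d hd + b⁻¹ * d⁻¹ * h +
    c * d⁻¹ * ZMod.mul_inv_of_unit b hb

variable {p : ℕ} (hp : p.Prime) (hp3 : 3 < p) {h : ZMod (p ^ 3)}
include hp hp3

theorem isQuadraticIn_gammaQuotient :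
    IsQuadraticIn (p : ZMod (p ^ 3)) (gammaQuotient h) := by
  have hP : (p : ZMod (p ^ 3)) ^ 3 = 0 := natCast_pow_eq_zero p le_rfl
  have quadratic (x k : ZMod (p ^ 3)) := (isQuadraticIn_moritaGamma hp hp3 x).comp_mul_left k
  unfold gammaQuotient
  simpa only [one_mul] using ((quadratic 1 1).mul hP (quadratic (h * h) h)).mul hP
    ((quadratic (3 * h * h) (3 * h)).inv hP (isUnit_moritaGamma _))

variable (hh : 2 * h = 1)
include hh

theorem moritaGamma_quarter_mul_sq :
    (moritaGamma (h * h) * moritaGamma (3 * h * h)) ^ 2 = 1 := by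
  rw [← moritaGamma_mul_moritaGamma_one_sub_sq hp (by lia) (h * h),
    show 1 - h * h = 3 * h * h by linear_combination -(2 * h + 1) * hh]

theorem gammaQuotient_zero_sq_mul :
    gammaQuotient h 0 ^ 2 * moritaGamma (3 * h * h) ^ 4 = 1 := by
  have inverse := ZMod.mul_inv_of_unit _ (isUnit_moritaGamma (3 * h * h))
  rw [gammaQuotient]
  simp only [mul_zero, add_zero]
  generalize (moritaGamma (3 * h * h))⁻¹ = i at *
  linear_combination (moritaGamma (h * h) * moritaGamma (3 * h * h)) ^ 2 *
      (moritaGamma (3 * h * h) ^ 2 * i ^ 2 * moritaGamma_one_sq (r := 3) hp (by lia) +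
        (moritaGamma (3 * h * h) * i + 1) * inverse) +
    moritaGamma_quarter_mul_sq hp hp3 hh

section QuarterNodes

omit hp3
variable {m : ℕ} (hp4 : p = 4 * m + 1)
include hp4

omit hp hh in
theorem natCast_eq_four_mul_add_one : (p : ZMod (p ^ 3)) = 4 * m + 1 := by
  simpa using congrArg (Nat.cast : ℕ → ZMod (p ^ 3)) hp4

theorem exists_reducesTo_moment₀_halfNode :
    ∃ z, ReducesTo (p ^ 3) (moment₀ (halfNode (2 * m)) (2 * m)) z ∧
      z * moritaGamma h ^ 2 = 2 ^ (6 * m) * gammaQuotient h h ^ 2 := by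
  have p_eq := natCast_eq_four_mul_add_one hp4
  have small : ∀ i < m, ¬p ∣ 1 + 2 * i := fun i hi ↦
    Nat.not_dvd_of_pos_of_lt (by lia) (by lia)
  have large : ∀ i < m, ¬p ∣ 4 * m + 3 + 2 * i := fun i hi hdvd ↦ by
    rw [show 4 * m + 3 + 2 * i = p + (2 + 2 * i) by lia, Nat.dvd_add_right (dvd_refl p)] at hdvd
    exact Nat.not_dvd_of_pos_of_lt (by lia) (by lia) hdvd
  have unit := isUnit_progressionProd (r := 3) hp large
  refine ⟨((8 : ZMod (p ^ 3)) ^ m * progressionProd 2 1 m *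
    (progressionProd 2 (4 * m + 3) m : ZMod (p ^ 3))⁻¹) ^ 2, ?_, ?_⟩
  · rw [moment₀_halfNode_even]
    exact ((((ReducesTo.ofNat 8).pow m).mul (.natCast _)).div (.natCast _) unit).pow 2
  have up_half := pow_mul_moritaGamma_add_natCast (d := 2) (a := 1) (x := h) hp (by lia)
    (by simpa using hh) small
  have up_one := pow_mul_moritaGamma_add_natCast (d := 2) (a := 4 * m + 3)
    (x := 1 + (p : ZMod (p ^ 3)) * h) hp (by lia)
    (by push_cast; linear_combination (p : ZMod (p ^ 3)) * hh + p_eq) large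
  have quarter : h * h + (p : ZMod (p ^ 3)) * (h * h) = h + (m : ZMod (p ^ 3)) := by
    linear_combination h * h * p_eq + ((m : ZMod (p ^ 3)) * (2 * h + 1) + h) * hh
  have three_quarters : 3 * h * h + (p : ZMod (p ^ 3)) * (3 * h * h) =
      1 + (p : ZMod (p ^ 3)) * h + (m : ZMod (p ^ 3)) := by
    linear_combination (3 * h * h - h) * p_eq +
      (3 * (m : ZMod (p ^ 3)) * (2 * h + 1) + 3 * h - 2 * (m : ZMod (p ^ 3)) + 1) * hh
  push_cast at up_half up_one
  have quotient : progressionProd 2 1 m * moritaGamma h *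
      (progressionProd 2 (4 * m + 3) m : ZMod (p ^ 3))⁻¹ = gammaQuotient h h := by
    rw [gammaQuotient, quarter, three_quarters]
    refine mul_inv_eq_mul_inv_of_isUnit unit (isUnit_moritaGamma _)
      (((isUnit_two (r := 3) hp (by lia)).pow m).mul_left_cancel ?_)
    linear_combination moritaGamma h * (progressionProd 2 1 m : ZMod (p ^ 3)) * up_one -
      moritaGamma (1 + (p : ZMod (p ^ 3)) * h) *
        (progressionProd 2 (4 * m + 3) m : ZMod (p ^ 3)) * up_half
  rw [← quotient, show (8 : ZMod (p ^ 3)) = 2 ^ 3 by norm_num, ← pow_mul]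
  ring

theorem exists_reducesTo_moment₀_negHalfNode :
    ∃ z, ReducesTo (p ^ 3) (moment₀ (negHalfNode (2 * m)) (2 * m)) z ∧
      2 ^ (6 * m) * z * moritaGamma h ^ 2 = gammaQuotient h (-h) ^ 2 := by
  have p_eq := natCast_eq_four_mul_add_one hp4
  have odd : ∀ i < 2 * m, ¬p ∣ 1 + 2 * i := fun i hi ↦
    Nat.not_dvd_of_pos_of_lt (by lia) (by lia)
  have factorial_unit : IsUnit (m ! : ZMod (p ^ 3)) :=
    isUnit_natCast hp fun h ↦ by have := hp.dvd_factorial.1 h; lia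
  have unit := (((isUnit_two (r := 3) hp (by lia)).pow m).mul factorial_unit).mul
    (isUnit_progressionProd hp odd)
  refine ⟨(((3 * m)! : ZMod (p ^ 3)) *
    (2 ^ m * (m ! : ZMod (p ^ 3)) * (progressionProd 2 1 (2 * m) : ZMod (p ^ 3)))⁻¹) ^ 2, ?_, ?_⟩
  · rw [(moments_negHalfNode_even m).1]
    exact ((ReducesTo.natCast _).div
      ((((ReducesTo.ofNat 2).pow m).mul (.natCast _)).mul (.natCast _)) unit).pow 2
  have down_half := pow_mul_moritaGamma_eq_sub_natCast (d := 2) (a := 1) (x := h) hp (by lia)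
    (by push_cast; linear_combination -hh) odd
  have down_m := moritaGamma_natCast_neg_mul_factorial (r := 3) hp (by lia) (show m < p by lia)
  have down_three_m :=
    moritaGamma_natCast_neg_mul_factorial (r := 3) hp (by lia) (show 3 * m < p by lia)
  have quarter : h * h + (p : ZMod (p ^ 3)) * (h * -h) = 0 - (m : ZMod (p ^ 3)) := by
    linear_combination -h * h * p_eq - (m : ZMod (p ^ 3)) * (2 * h + 1) * hh
  have three_quarters : 3 * h * h + (p : ZMod (p ^ 3)) * (3 * h * -h) =
      0 - ((3 * m : ℕ) : ZMod (p ^ 3)) := by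
    push_cast
    linear_combination -3 * h * h * p_eq - 3 * (m : ZMod (p ^ 3)) * (2 * h + 1) * hh
  have one : 1 + (p : ZMod (p ^ 3)) * -h = h - ((2 * m : ℕ) : ZMod (p ^ 3)) := by
    push_cast
    linear_combination -h * p_eq - (2 * (m : ZMod (p ^ 3)) + 1) * hh
  have quotient : 2 ^ (3 * m) * moritaGamma h * ((3 * m)! : ZMod (p ^ 3)) *
      (2 ^ m * (m ! : ZMod (p ^ 3)) * (progressionProd 2 1 (2 * m) : ZMod (p ^ 3)))⁻¹ =
        gammaQuotient h (-h) := by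
    rw [gammaQuotient, quarter, three_quarters, one]
    refine mul_inv_eq_mul_inv_of_isUnit unit (isUnit_moritaGamma _) ?_
    rw [show 3 * m = m + 2 * m by ring, pow_add]
    rw [show 3 * m = m + 2 * m by ring] at down_three_m
    rw [Nat.cast_ofNat] at down_half
    linear_combination 2 ^ m * 2 ^ (2 * m) * moritaGamma h * down_three_m + 2 ^ m * down_half -
      2 ^ m * moritaGamma (h - ((2 * m : ℕ) : ZMod (p ^ 3))) *
        (progressionProd 2 1 (2 * m) : ZMod (p ^ 3)) * down_m
  rw [← quotient]
  ring

end QuarterNodes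

variable {g : ZMod (p ^ 3)} (hg : 6 * g = 1)
include hg

omit hp3 in
theorem two_pow_mul_moritaGamma_half {m : ℕ} (hp4 : p = 4 * m + 1) :
    2 ^ m * moritaGamma h = moritaGamma (3 * h * h + (p : ZMod (p ^ 3)) * (3 * h * -g)) *
      (progressionProd 2 1 m : ZMod (p ^ 3)) := by
  have h_eq : h = 3 * g := by linear_combination 3 * g * hh - h * hg
  have node : 3 * h * h + (p : ZMod (p ^ 3)) * (3 * h * -g) = h - (m : ZMod (p ^ 3)) := by
    linear_combination -h * h * natCast_eq_four_mul_add_one hp4 + p * h * h_eq +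
      (h - m * (2 * h + 1)) * hh
  rw [node]
  exact_mod_cast pow_mul_moritaGamma_eq_sub_natCast (d := 2) (a := 1) hp (by lia)
    (by push_cast; linear_combination -hh) fun i hi ↦ Nat.not_dvd_of_pos_of_lt (by lia) (by lia)

omit hp3 in
theorem two_pow_mul_sq_eq_gammaQuotient_sq {m : ℕ} (hp4 : p = 4 * m + 1) {den : ZMod (p ^ 3)}
    (unit : IsUnit (2 ^ m * den))
    (h_den : 6 ^ m * (moritaGamma g * moritaGamma (1 - g)) =
      moritaGamma (1 + (p : ZMod (p ^ 3)) * -g) *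
        moritaGamma (h * h + (p : ZMod (p ^ 3)) * (h * -g)) * den) :
    2 ^ (2 * m) * (3 ^ m * (progressionProd 2 1 m : ZMod (p ^ 3)) * (2 ^ m * den)⁻¹) ^ 2 =
      moritaGamma h ^ 2 * gammaQuotient h (-g) ^ 2 := by
  have h_num := two_pow_mul_moritaGamma_half hp hh hg hp4
  have quotient : 2 ^ m * (moritaGamma g * moritaGamma (1 - g)) * 3 ^ m *
      (progressionProd 2 1 m : ZMod (p ^ 3)) * (2 ^ m * den)⁻¹ =
        moritaGamma h * gammaQuotient h (-g) := by
    rw [gammaQuotient, ← mul_assoc (moritaGamma h)]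
    refine mul_inv_eq_mul_inv_of_isUnit unit (isUnit_moritaGamma _) ?_
    rw [show (6 : ZMod (p ^ 3)) = 2 * 3 by norm_num, mul_pow] at h_den
    linear_combination (progressionProd 2 1 m : ZMod (p ^ 3)) *
        moritaGamma (3 * h * h + (p : ZMod (p ^ 3)) * (3 * h * -g)) * h_den -
      moritaGamma (1 + (p : ZMod (p ^ 3)) * -g) *
        moritaGamma (h * h + (p : ZMod (p ^ 3)) * (h * -g)) * den * h_num
  rw [← mul_pow, ← quotient]
  linear_combination
    -(2 ^ m * 3 ^ m * (progressionProd 2 1 m : ZMod (p ^ 3)) * (2 ^ m * den)⁻¹) ^ 2 *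
      moritaGamma_mul_moritaGamma_one_sub_sq hp (by lia) g

omit hp3 in
theorem exists_reducesTo_moment₀_negSixthNode_six_mul {s : ℕ} (hs : p = 12 * s + 1) :
    ∃ z, ReducesTo (p ^ 3) (moment₀ (negSixthNode (6 * s)) (6 * s)) z ∧
      2 ^ (6 * s) * z = moritaGamma h ^ 2 * gammaQuotient h (-g) ^ 2 := by
  have p_eq : (p : ZMod (p ^ 3)) = 12 * s + 1 := by
    simpa using congrArg (Nat.cast : ℕ → ZMod (p ^ 3)) hs
  have h_eq : h = 3 * g := by linear_combination 3 * g * hh - h * hg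
  have one_mod : ∀ i < 2 * s, ¬p ∣ 1 + 6 * i := fun i hi ↦
    Nat.not_dvd_of_pos_of_lt (by lia) (by lia)
  have five_mod : ∀ i < s, ¬p ∣ 5 + 6 * i := fun i hi ↦
    Nat.not_dvd_of_pos_of_lt (by lia) (by lia)
  have unit := ((isUnit_two (r := 3) hp (by lia)).pow (3 * s)).mul
    ((isUnit_progressionProd hp one_mod).mul (isUnit_progressionProd hp five_mod))
  have down_one := pow_mul_moritaGamma_eq_sub_natCast (d := 6) (a := 1) (x := 1 - g) hp (by lia)
    (by push_cast; linear_combination hg) one_mod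
  have down_five := pow_mul_moritaGamma_eq_sub_natCast (d := 6) (a := 5) (x := g) hp (by lia)
    (by push_cast; linear_combination -hg) five_mod
  have one : 1 + (p : ZMod (p ^ 3)) * -g = 1 - g - ((2 * s : ℕ) : ZMod (p ^ 3)) := by
    push_cast
    linear_combination -g * p_eq - 2 * s * hg
  have quarter : h * h + (p : ZMod (p ^ 3)) * (h * -g) = g - (s : ZMod (p ^ 3)) := by
    rw [p_eq, h_eq]
    linear_combination (g - s * (6 * g + 1)) * hg
  have value : moment₀ (negSixthNode (6 * s)) (6 * s) =
      (3 ^ (3 * s) * (progressionProd 2 1 (3 * s) : ℚ) / (2 ^ (3 * s) *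
        ((progressionProd 6 1 (2 * s) : ℚ) * (progressionProd 6 5 s : ℚ)))) ^ 2 := by
    rw [(moments_negSixthNode_six_mul s).1, pow_mul, pow_mul]
    norm_num [mul_assoc]
  rw [value, show 6 * s = 2 * (3 * s) by ring]
  refine ⟨_, ((((ReducesTo.ofNat 3).pow _).mul (.natCast _)).div
    (((ReducesTo.ofNat 2).pow _).mul ((ReducesTo.natCast _).mul (.natCast _))) unit).pow 2,
    two_pow_mul_sq_eq_gammaQuotient_sq hp hh hg (by lia) unit ?_⟩
  rw [one, quarter, show 3 * s = 2 * s + s by ring, pow_add]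
  rw [Nat.cast_ofNat] at down_one down_five
  linear_combination 6 ^ s * moritaGamma g * down_one +
    moritaGamma (1 - g - ((2 * s : ℕ) : ZMod (p ^ 3))) *
      (progressionProd 6 1 (2 * s) : ZMod (p ^ 3)) * down_five

omit hp3 in
theorem exists_reducesTo_moment₀_negSixthNode_six_mul_add_two {s : ℕ} (hs : p = 12 * s + 5) :
    ∃ z, ReducesTo (p ^ 3) (moment₀ (negSixthNode (6 * s + 2)) (6 * s + 2)) z ∧
      2 ^ (6 * s + 2) * z = moritaGamma h ^ 2 * gammaQuotient h (-g) ^ 2 := by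
  have p_eq : (p : ZMod (p ^ 3)) = 12 * s + 5 := by
    simpa using congrArg (Nat.cast : ℕ → ZMod (p ^ 3)) hs
  have h_eq : h = 3 * g := by linear_combination 3 * g * hh - h * hg
  have five_mod : ∀ i < 2 * s, ¬p ∣ 5 + 6 * i := fun i hi ↦
    Nat.not_dvd_of_pos_of_lt (by lia) (by lia)
  have one_mod : ∀ i < s + 1, ¬p ∣ 1 + 6 * i := fun i hi ↦
    Nat.not_dvd_of_pos_of_lt (by lia) (by lia)
  have unit := ((isUnit_two (r := 3) hp (by lia)).pow (3 * s + 1)).mul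
    ((isUnit_progressionProd hp five_mod).mul (isUnit_progressionProd hp one_mod))
  have down_five := pow_mul_moritaGamma_eq_sub_natCast (d := 6) (a := 5) (x := g) hp (by lia)
    (by push_cast; linear_combination -hg) five_mod
  have down_one := pow_mul_moritaGamma_eq_sub_natCast (d := 6) (a := 1) (x := 1 - g) hp (by lia)
    (by push_cast; linear_combination hg) one_mod
  have one : 1 + (p : ZMod (p ^ 3)) * -g = g - ((2 * s : ℕ) : ZMod (p ^ 3)) := by
    push_cast
    linear_combination -g * p_eq - (1 + 2 * s) * hg
  have quarter : h * h + (p : ZMod (p ^ 3)) * (h * -g) =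
      1 - g - ((s + 1 : ℕ) : ZMod (p ^ 3)) := by
    rw [p_eq, h_eq]
    push_cast
    linear_combination -(g + s * (6 * g + 1)) * hg
  have value : moment₀ (negSixthNode (6 * s + 2)) (6 * s + 2) =
      (3 ^ (3 * s + 1) * (progressionProd 2 1 (3 * s + 1) : ℚ) / (2 ^ (3 * s + 1) *
        ((progressionProd 6 5 (2 * s) : ℚ) * (progressionProd 6 1 (s + 1) : ℚ)))) ^ 2 := by
    rw [(moments_negSixthNode_six_mul_add_two s).1, pow_succ 3, pow_succ 2, pow_mul, pow_mul]
    norm_num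
    ring
  rw [value, show 6 * s + 2 = 2 * (3 * s + 1) by ring]
  refine ⟨_, ((((ReducesTo.ofNat 3).pow _).mul (.natCast _)).div
    (((ReducesTo.ofNat 2).pow _).mul ((ReducesTo.natCast _).mul (.natCast _))) unit).pow 2,
    two_pow_mul_sq_eq_gammaQuotient_sq hp hh hg (by lia) unit ?_⟩
  rw [one, quarter, show 3 * s + 1 = 2 * s + (s + 1) by ring, pow_add]
  rw [Nat.cast_ofNat] at down_one down_five
  linear_combination 6 ^ (s + 1) * moritaGamma (1 - g) * down_five +
    moritaGamma (g - ((2 * s : ℕ) : ZMod (p ^ 3))) *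
      (progressionProd 6 5 (2 * s) : ZMod (p ^ 3)) * down_one

omit hp3 hh hg in
theorem exists_eq_three_mul_or_eq_three_mul_add_one {m : ℕ} (hp4 : p = 4 * m + 1) :
    ∃ s, m = 3 * s ∨ m = 3 * s + 1 := by
  have not_dvd : ¬3 ∣ p := fun h ↦ by
    have := (Nat.prime_dvd_prime_iff_eq Nat.prime_three hp).1 h
    lia
  exact ⟨m / 3, by lia⟩

omit hp3 hh hg in
theorem moments_negSixthNode_two_mul_eq_zero {m : ℕ} (hp4 : p = 4 * m + 1) :
    moment₁ (negSixthNode (2 * m)) (2 * m) = 0 ∧ moment₂ (negSixthNode (2 * m)) (2 * m) = 0 := by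
  obtain ⟨s, rfl | rfl⟩ := exists_eq_three_mul_or_eq_three_mul_add_one hp hp4
  · rw [show 2 * (3 * s) = 6 * s by ring]
    exact (moments_negSixthNode_six_mul s).2
  · rw [show 2 * (3 * s + 1) = 6 * s + 2 by ring]
    exact (moments_negSixthNode_six_mul_add_two s).2

omit hp3 in
theorem exists_reducesTo_moment₀_negSixthNode {m : ℕ} (hp4 : p = 4 * m + 1) :
    ∃ z, ReducesTo (p ^ 3) (moment₀ (negSixthNode (2 * m)) (2 * m)) z ∧
      2 ^ (2 * m) * z = moritaGamma h ^ 2 * gammaQuotient h (-g) ^ 2 := by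
  obtain ⟨s, rfl | rfl⟩ := exists_eq_three_mul_or_eq_three_mul_add_one hp hp4
  · rw [show 2 * (3 * s) = 6 * s by ring]
    exact exists_reducesTo_moment₀_negSixthNode_six_mul hp hh hg (by lia)
  · rw [show 2 * (3 * s + 1) = 6 * s + 2 by ring]
    exact exists_reducesTo_moment₀_negSixthNode_six_mul_add_two hp hh hg (by lia)

end GammaNodes

section MomentsAtZero

open scoped Nat

-- Here `E y` is the value at `6 * y` of the truncated binomial series of `(1 + P * δ) ^ (6 * y)`.
theorem exists_isQuadraticIn_one_add_pow {R : Type*} [CommRing R] {P h g : R} (hP : P ^ 3 = 0)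
    (hh : 2 * h = 1) (hg : 6 * g = 1) (δ : R) :
    ∃ E, IsQuadraticIn P E ∧ E 0 = 1 ∧ E h = (1 + P * δ) ^ 3 ∧
      E (-h) * (1 + P * δ) ^ 3 = 1 ∧ E (-g) * (1 + P * δ) = 1 := by
  refine ⟨fun y ↦ 1 + 6 * δ * P * y + (18 * y * y - 3 * y) * P ^ 2 * δ ^ 2,
    ⟨1, 6 * δ - 3 * P * δ ^ 2, 18 * δ ^ 2, fun y ↦ by ring⟩, by ring, ?_, ?_, ?_⟩
  · linear_combination (3 * δ * P + (9 * h + 3) * P ^ 2 * δ ^ 2) * hh - δ ^ 3 * hP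
  · linear_combination (-3 * δ * P + (9 * h + 6) * P ^ 2 * δ ^ 2) * (1 + P * δ) ^ 3 * hh +
      (δ ^ 3 * 10 + 15 * P * δ ^ 4 + 6 * P ^ 2 * δ ^ 5) * hP
  · linear_combination (-δ * P + (3 * g + 1) * P ^ 2 * δ ^ 2) * (1 + P * δ) * hg + δ ^ 3 * hP

variable {p m : ℕ} (hp : p.Prime)
include hp

theorem exists_two_pow_eq (hp4 : p = 4 * m + 1) (r : ℕ) :
    ∃ δ : ZMod (p ^ r), 2 ^ (2 * m) = (-1) ^ m * (1 + p * δ) := by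
  have mod_p : (2 : ZMod p) ^ (2 * m) = (-1) ^ m := by
    have := neg_two_pow_eq (n := 2 * m) hp (by lia)
    rwa [(even_two_mul m).neg_pow, Nat.mul_div_cancel_left m two_pos] at this
  have dvd : (p : ℤ) ∣ 2 ^ (2 * m) - (-1) ^ m := by
    rw [← ZMod.intCast_zmod_eq_zero_iff_dvd]
    push_cast
    rw [mod_p, sub_self]
  obtain ⟨w, hw⟩ := dvd
  refine ⟨(-1) ^ m * w, ?_⟩
  have cast := congrArg (Int.cast : ℤ → ZMod (p ^ r)) hw
  push_cast at cast
  linear_combination cast - p * w * neg_one_pow_sq (R := ZMod (p ^ r)) m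

theorem isUnit_six {r : ℕ} (hp2 : p ≠ 2) (hp3 : p ≠ 3) : IsUnit (6 : ZMod (p ^ r)) := by
  convert (isUnit_two (r := r) hp hp2).mul (isUnit_three (r := r) hp hp3) using 1
  norm_num

variable (hp3 : 3 < p) (hp4 : p = 4 * m + 1) {h : ZMod (p ^ 3)} (hh : 2 * h = 1)
include hp3 hp4 hh

theorem exists_reducesTo_moment₀_zero :
    ∃ z, ReducesTo (p ^ 3) (moment₀ 0 (2 * m)) z ∧
      z * moritaGamma (3 * h * h) ^ 4 = (-1) ^ m * moritaGamma h ^ 2 := by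
  have hn : p = 2 * (2 * m) + 1 := by lia
  have hP : (p : ZMod (p ^ 3)) ^ 3 = 0 := natCast_pow_eq_zero p le_rfl
  obtain ⟨g, hg⟩ := (isUnit_six (r := 3) hp (by lia) (by lia)).exists_right_inv
  obtain ⟨za, ha, value_a⟩ := exists_reducesTo_moment₀_halfNode hp hh hp4
  obtain ⟨zb, hb, value_b⟩ := exists_reducesTo_moment₀_negHalfNode hp hh hp4
  obtain ⟨zc, hc, value_c⟩ := exists_reducesTo_moment₀_negSixthNode hp hh hg hp4
  obtain ⟨z, hz, interpolation⟩ := (isQuadraticFamily_moments hp hn hp3 (r := 3) le_rfl).1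
    |>.exists_reducesTo_cube hp hn hp3 ha hb hc
  refine ⟨z, hz, ?_⟩
  obtain ⟨δ, hδ⟩ := exists_two_pow_eq hp hp4 3
  obtain ⟨E, quadratic, E_zero, E_half, E_neg_half, E_neg_sixth⟩ :=
    exists_isQuadraticIn_one_add_pow hP hh hg δ
  have gamma_sq := isQuadraticIn_gammaQuotient hp hp3 (h := h)
  have values := (quadratic.mul hP (gamma_sq.mul hP gamma_sq)).eight_mul_apply_zero hh hg
  have sign := neg_one_pow_sq (R := ZMod (p ^ 3)) m
  have half_pow := moritaGamma_half_pow_four (r := 3) hp (by lia) hh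
  rw [show 6 * m = 2 * m * 3 by ring, pow_mul, hδ] at value_a value_b
  rw [hδ] at value_c
  generalize (-1 : ZMod (p ^ 3)) ^ m = η at *
  generalize moritaGamma h = H at *
  have at_half : E h * gammaQuotient h h ^ 2 = η * za * H ^ 2 := by
    linear_combination gammaQuotient h h ^ 2 * E_half - η * value_a -
      (1 + p * δ) ^ 3 * gammaQuotient h h ^ 2 * (η ^ 2 + 1) * sign
  have at_neg_half : E (-h) * gammaQuotient h (-h) ^ 2 = η * zb * H ^ 2 := by
    linear_combination -E (-h) * value_b + η ^ 3 * zb * H ^ 2 * E_neg_half +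
      η * zb * H ^ 2 * sign
  have at_neg_sixth : E (-g) * gammaQuotient h (-g) ^ 2 = η * zc * H ^ 2 := by
    linear_combination -E (-g) * H ^ 2 * value_c + η * zc * H ^ 2 * E_neg_sixth -
      E (-g) * gammaQuotient h (-g) ^ 2 * half_pow
  have at_zero : gammaQuotient h 0 ^ 2 = η * z * H ^ 2 := by
    refine ((isUnit_two hp (by lia)).pow 3).mul_left_cancel ?_
    linear_combination values + at_half - 2 * at_neg_half + 9 * at_neg_sixth -
      η * H ^ 2 * interpolation - 8 * gammaQuotient h 0 ^ 2 * E_zero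
  linear_combination η * H ^ 2 * gammaQuotient_zero_sq_mul hp hp3 hh -
    η * H ^ 2 * moritaGamma (3 * h * h) ^ 4 * at_zero -
    z * moritaGamma (3 * h * h) ^ 4 * (H ^ 4 * sign + half_pow)

omit hp4 hh in
theorem natCast_sq_mul_moritaGamma_add (x y : ZMod (p ^ 3)) :
    (p : ZMod (p ^ 3)) ^ 2 * moritaGamma (x + (p : ZMod (p ^ 3)) * y) =
      (p : ZMod (p ^ 3)) ^ 2 * moritaGamma x := by
  have hP : (p : ZMod (p ^ 3)) ^ 3 = 0 := natCast_pow_eq_zero p le_rfl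
  obtain ⟨c, a, b, value⟩ := isQuadraticIn_moritaGamma hp hp3 x
  have value_zero := value 0
  simp only [mul_zero, add_zero] at value_zero
  linear_combination (p : ZMod (p ^ 3)) ^ 2 * (value y - value_zero) +
    (a * y + b * p * y ^ 2) * hP

omit hp4 hh in
theorem natCast_sq_mul_factorial_sq {k : ℕ} (hk : k < p) {x y : ZMod (p ^ 3)}
    (hx : 1 + (k : ZMod (p ^ 3)) = x + (p : ZMod (p ^ 3)) * y) :
    (p : ZMod (p ^ 3)) ^ 2 * (k ! : ZMod (p ^ 3)) ^ 2 =
      (p : ZMod (p ^ 3)) ^ 2 * moritaGamma x ^ 2 := by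
  rw [← moritaGamma_one_add_natCast_sq hp (by lia) hk, hx]
  linear_combination (moritaGamma (x + (p : ZMod (p ^ 3)) * y) + moritaGamma x) *
    natCast_sq_mul_moritaGamma_add hp hp3 x y

theorem natCast_sq_mul_factorial_quotient_sq {t : ZMod (p ^ 3)}
    (ht : t * (2 ^ m * ((2 * m)! : ZMod (p ^ 3)) * ((3 * m)! : ZMod (p ^ 3))) =
      ((4 * m)! : ZMod (p ^ 3)) * (m ! : ZMod (p ^ 3))) :
    (p : ZMod (p ^ 3)) ^ 2 * t ^ 2 = (p : ZMod (p ^ 3)) ^ 2 * (-1) ^ m * moritaGamma h ^ 2 *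
      moritaGamma (3 * h * h) ^ 4 := by
  have hP : (p : ZMod (p ^ 3)) ^ 3 = 0 := natCast_pow_eq_zero p le_rfl
  have p_eq := natCast_eq_four_mul_add_one hp4
  have factorial₁ := natCast_sq_mul_factorial_sq hp hp3 (show m < p by lia) (x := 3 * h * h)
    (y := h * h) (by linear_combination -h * h * p_eq - (2 * h + 1) * (1 + m) * hh)
  have factorial₂ := natCast_sq_mul_factorial_sq hp hp3 (show 2 * m < p by lia) (x := h) (y := h)
    (by push_cast; linear_combination -h * p_eq - (1 + 2 * m) * hh)
  have factorial₃ := natCast_sq_mul_factorial_sq hp hp3 (show 3 * m < p by lia) (x := h * h)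
    (y := 3 * h * h)
    (by push_cast; linear_combination -3 * h * h * p_eq - (2 * h + 1) * (1 + 3 * m) * hh)
  have factorial₄ := natCast_sq_mul_factorial_sq hp hp3 (show 4 * m < p by lia) (x := 0) (y := 1)
    (by push_cast; linear_combination -p_eq)
  rw [moritaGamma_zero] at factorial₄
  obtain ⟨δ, hδ⟩ := exists_two_pow_eq hp hp4 3
  have two_pow : (p : ZMod (p ^ 3)) ^ 2 * (2 ^ m) ^ 2 = (p : ZMod (p ^ 3)) ^ 2 * (-1) ^ m := by
    rw [← pow_mul, mul_comm m, hδ]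
    linear_combination (-1) ^ m * δ * hP
  have sign := neg_one_pow_sq (R := ZMod (p ^ 3)) m
  have half_pow := moritaGamma_half_pow_four (r := 3) hp (by lia) hh
  have reflection := moritaGamma_quarter_mul_sq hp hp3 hh
  generalize (-1 : ZMod (p ^ 3)) ^ m = η at *
  generalize (2 : ZMod (p ^ 3)) ^ m = T at *
  generalize ((2 * m)! : ZMod (p ^ 3)) = F₂ at *
  generalize ((3 * m)! : ZMod (p ^ 3)) = F₃ at *
  generalize (m ! : ZMod (p ^ 3)) = F₁ at *
  have squared := congrArg (fun z ↦ (p : ZMod (p ^ 3)) ^ 2 * z ^ 2) ht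
  have gammas : (p : ZMod (p ^ 3)) ^ 2 * t ^ 2 * η * moritaGamma h ^ 2 * moritaGamma (h * h) ^ 2 =
      (p : ZMod (p ^ 3)) ^ 2 * moritaGamma (3 * h * h) ^ 2 := by
    linear_combination squared - t ^ 2 * F₂ ^ 2 * F₃ ^ 2 * two_pow -
      t ^ 2 * η * F₃ ^ 2 * factorial₂ - t ^ 2 * η * moritaGamma h ^ 2 * factorial₃ +
      F₁ ^ 2 * factorial₄ + factorial₁
  linear_combination η * moritaGamma h ^ 2 * moritaGamma (3 * h * h) ^ 2 * gammas -
    (p : ZMod (p ^ 3)) ^ 2 * t ^ 2 *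
      ((moritaGamma (h * h) * moritaGamma (3 * h * h)) ^ 2 * (moritaGamma h ^ 4 * sign + half_pow) +
        reflection)

theorem exists_reducesTo_moment₂_zero :
    ∃ z, ReducesTo (p ^ 3) (moment₂ 0 (2 * m)) z ∧
      36 * z = (p : ZMod (p ^ 3)) ^ 2 * (-1) ^ m * moritaGamma h ^ 2 *
        moritaGamma (3 * h * h) ^ 4 := by
  have hn : p = 2 * (2 * m) + 1 := by lia
  have unit_two : IsUnit (2 : ZMod (p ^ 3)) := isUnit_two hp (by lia)
  have unit_nine : IsUnit (9 : ZMod (p ^ 3)) := by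
    convert (isUnit_three (r := 3) hp (by lia)).pow 2 using 1
    norm_num
  have factorial_unit {k : ℕ} (hk : k < p) : IsUnit (k ! : ZMod (p ^ 3)) :=
    isUnit_natCast hp fun hdvd ↦ by
      have := hp.dvd_factorial.1 hdvd
      lia
  have unit := ((unit_two.pow m).mul (factorial_unit (k := 2 * m) (by lia))).mul
    (factorial_unit (k := 3 * m) (by lia))
  set t : ZMod (p ^ 3) := ((4 * m)! : ZMod (p ^ 3)) * (m ! : ZMod (p ^ 3)) *
    (2 ^ m * ((2 * m)! : ZMod (p ^ 3)) * ((3 * m)! : ZMod (p ^ 3)))⁻¹ with t_def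
  have square := natCast_sq_mul_factorial_quotient_sq (t := t) hp hp3 hp4 hh <| by
    rw [t_def, mul_assoc, ZMod.inv_mul_of_unit _ unit, mul_one]
  have at_half : ReducesTo (p ^ 3) (moment₂ (halfNode (2 * m)) (2 * m))
      (2 * (9 : ZMod (p ^ 3))⁻¹ * ((p : ZMod (p ^ 3)) * t) ^ 2) := by
    rw [moment₂_halfNode_even, Nat.factorial_succ, Nat.cast_mul, ← hp4, mul_assoc, mul_div_assoc]
    exact ((ReducesTo.ofNat 2).div (.ofNat 9) unit_nine).mul <| ((ReducesTo.natCast _).mul <|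
      ((ReducesTo.natCast _).mul (.natCast _)).div
        ((((ReducesTo.ofNat 2).pow m).mul (.natCast _)).mul (.natCast _)) unit).pow 2
  obtain ⟨z, hz, interpolation⟩ := (isQuadraticFamily_moments hp hn hp3 (r := 3) le_rfl).2.2
    |>.exists_reducesTo_cube hp hn hp3 at_half ((moments_negHalfNode_even m).2 ▸ ReducesTo.zero)
      ((moments_negSixthNode_two_mul_eq_zero hp hp4).2 ▸ ReducesTo.zero)
  refine ⟨z, hz, unit_two.mul_left_cancel ?_⟩
  linear_combination 9 * interpolation + 2 * square +
    2 * ((p : ZMod (p ^ 3)) * t) ^ 2 * ZMod.mul_inv_of_unit _ unit_nine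

end MomentsAtZero

/-! ### A Jacobi sum modulo the cube of a prime -/

section TeichmullerCharacter

theorem dvd_cube (p : ℕ) : p ∣ p ^ 3 := dvd_pow_self p three_ne_zero

theorem natCast_dvd_of_castHom_eq_zero {M N : ℕ} [NeZero N] (h : M ∣ N) {x : ZMod N}
    (hx : ZMod.castHom h (ZMod M) x = 0) : (M : ZMod N) ∣ x := by
  rw [← ZMod.natCast_zmod_val x, map_natCast, ZMod.natCast_eq_zero_iff] at hx
  rw [← ZMod.natCast_zmod_val x]
  exact Nat.cast_dvd_cast hx

theorem two_mul_one_add_mul_pow {R : Type*} [CommRing R] {P : R} (hP : P ^ 3 = 0) (v : R) (n : ℕ) :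
    2 * (1 + P * v) ^ n = 2 + 2 * n * P * v + n * (n - 1) * P ^ 2 * v ^ 2 := by
  induction n with
  | zero => simp
  | succ n ih =>
    rw [pow_succ]
    push_cast
    linear_combination (1 + P * v) * ih + n * (n - 1) * v ^ 3 * hP

variable {p : ℕ} [Fact p.Prime]

theorem pow_sq_eq_of_castHom_eq {a b : ZMod (p ^ 3)}
    (h : ZMod.castHom (dvd_cube p) (ZMod p) a = ZMod.castHom (dvd_cube p) (ZMod p) b) :
    a ^ p ^ 2 = b ^ p ^ 2 := by
  have dvd : (p : ZMod (p ^ 3)) ∣ a - b :=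
    natCast_dvd_of_castHom_eq_zero (dvd_cube p) (by rw [map_sub, h, sub_self])
  have dvd_pow := dvd_sub_pow_of_dvd_sub dvd 2
  rw [natCast_pow_eq_zero p le_rfl, zero_dvd_iff] at dvd_pow
  exact sub_eq_zero.1 dvd_pow

/-- The Teichmüller character modulo `p ^ 3`, sending a residue class to the `p ^ 2`-th power of any
of its lifts. -/
noncomputable def teichmullerChar (p : ℕ) [Fact p.Prime] : MulChar (ZMod p) (ZMod (p ^ 3)) where
  toFun t := (t.val : ZMod (p ^ 3)) ^ p ^ 2
  map_one' := (pow_sq_eq_of_castHom_eq (b := 1) (by simp)).trans (one_pow _)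
  map_mul' s t := by
    rw [← mul_pow]
    refine pow_sq_eq_of_castHom_eq ?_
    rw [map_mul, map_natCast, map_natCast, map_natCast]
    simp only [ZMod.natCast_zmod_val]
  map_nonunit' t ht := by
    have : t = 0 := by simpa using ht
    simp [this, NeZero.ne p]

/-- The Jacobi sum of the quartic and the quadratic power of the Teichmüller character, when
`p = 4 * m + 1`. -/
noncomputable def quarticJacobiSum (p m : ℕ) [Fact p.Prime] : ZMod (p ^ 3) :=
  jacobiSum (teichmullerChar p ^ (3 * m)) (teichmullerChar p ^ (2 * m))

theorem teichmullerChar_castHom (a : ZMod (p ^ 3)) :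
    teichmullerChar p (ZMod.castHom (dvd_cube p) (ZMod p) a) = a ^ p ^ 2 :=
  pow_sq_eq_of_castHom_eq (by simp)

theorem castHom_teichmullerChar (t : ZMod p) :
    ZMod.castHom (dvd_cube p) (ZMod p) (teichmullerChar p t) = t := by
  change ZMod.castHom (dvd_cube p) (ZMod p) ((t.val : ZMod (p ^ 3)) ^ p ^ 2) = t
  rw [map_pow, map_natCast, ZMod.natCast_zmod_val, pow_two, pow_mul, ZMod.pow_card, ZMod.pow_card]

theorem teichmullerChar_neg_one (hp2 : p ≠ 2) : teichmullerChar p (-1) = -1 := by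
  have h := teichmullerChar_castHom (p := p) (-1)
  rwa [map_neg, map_one,
    ((Fact.out : p.Prime).odd_of_ne_two hp2).pow.neg_one_pow] at h

theorem sum_teichmullerChar_pow {n j : ℕ} (hn : p = n + 1) (hj : j ≠ 0) :
    ∑ t : ZMod p, teichmullerChar p t ^ j = if n ∣ j then (p : ZMod (p ^ 3)) - 1 else 0 := by
  split_ifs with hd
  · obtain ⟨c, rfl⟩ := hd
    have value (t : ZMod p) : teichmullerChar p t ^ (n * c) = 1 - if t = 0 then 1 else 0 := by
      split_ifs with h0
      · rw [h0, MulChar.map_zero, zero_pow hj, sub_self]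
      · have fermat := ZMod.pow_card_sub_one_eq_one h0
        rw [show p - 1 = n by lia] at fermat
        rw [pow_mul, ← map_pow, fermat, map_one, one_pow, sub_zero]
    simp [value, ZMod.card]
  · obtain ⟨g, hg⟩ := IsCyclic.exists_generator (α := (ZMod p)ˣ)
    have pow_ne_one : (g : ZMod p) ^ j ≠ 1 := fun h ↦ hd <| by
      have := orderOf_dvd_of_pow_eq_one (G := (ZMod p)ˣ) (x := g) (n := j) (Units.ext (by simpa))
      rwa [orderOf_eq_card_of_forall_mem_zpowers hg, Nat.card_eq_fintype_card, ZMod.card_units,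
        show p - 1 = n by lia] at this
    have invariant : teichmullerChar p g ^ j * ∑ t : ZMod p, teichmullerChar p t ^ j =
        ∑ t : ZMod p, teichmullerChar p t ^ j := by
      rw [mul_sum, ← Equiv.sum_comp (Units.mulLeft g) fun t ↦ teichmullerChar p t ^ j]
      simp [mul_pow]
    have unit : IsUnit (teichmullerChar p g ^ j - 1) := by
      rw [← isUnit_castHom_iff Fact.out (dvd_cube p), map_sub, map_pow, castHom_teichmullerChar,
        map_one]
      exact (sub_ne_zero.2 pow_ne_one).isUnit
    exact unit.mul_right_eq_zero.1 (by linear_combination invariant)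

theorem sum_teichmullerChar_pow_mul_one_sub_pow {n k : ℕ} (hn : p = n + 1) (hk : k ≠ 0) (l : ℕ) :
    ∑ t : ZMod p, teichmullerChar p t ^ k * (1 - teichmullerChar p t) ^ l =
      ((p : ZMod (p ^ 3)) - 1) * ∑ j ∈ range (l + 1) with n ∣ k + j,
        (-1) ^ j * (l.choose j : ZMod (p ^ 3)) := by
  have expand (t : ZMod p) : teichmullerChar p t ^ k * (1 - teichmullerChar p t) ^ l =
      ∑ j ∈ range (l + 1), teichmullerChar p t ^ (k + j) * ((-1) ^ j * (l.choose j)) := by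
    rw [sub_eq_neg_add, add_pow, mul_sum]
    refine sum_congr rfl fun j _ ↦ ?_
    rw [one_pow, neg_pow, pow_add]
    ring
  simp_rw [expand]
  rw [sum_comm, mul_sum, sum_filter]
  refine sum_congr rfl fun j _ ↦ ?_
  rw [← sum_mul, sum_teichmullerChar_pow hn (by lia)]
  split_ifs <;> simp

variable {m : ℕ} (hp4 : p = 4 * m + 1)
include hp4

-- With `u ^ (4 * m) = 1 + p * v`, the right-hand side interpolates the quadratic function
-- `N ↦ (1 + p * v) ^ N` from its values at `0`, `1` and `2`; the left-hand side is its value at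
-- `N = (p ^ 2 - 1) / 2`.
theorem eight_mul_pow_sq_pow {u : ZMod (p ^ 3)} (hu : IsUnit u) :
    8 * (u ^ p ^ 2) ^ (2 * m) = 15 * u ^ (2 * m) - 10 * u ^ (6 * m) + 3 * u ^ (10 * m) := by
  have hP : (p : ZMod (p ^ 3)) ^ 3 = 0 := natCast_pow_eq_zero p le_rfl
  obtain ⟨v, hv⟩ : (p : ZMod (p ^ 3)) ∣ u ^ (4 * m) - 1 := by
    refine natCast_dvd_of_castHom_eq_zero (dvd_cube p) ?_
    have fermat := ZMod.pow_card_sub_one_eq_one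
      (hu.map (ZMod.castHom (dvd_cube p) (ZMod p))).ne_zero
    rw [show p - 1 = 4 * m by lia] at fermat
    rw [map_sub, map_pow, fermat, map_one, sub_self]
  have pow_four : u ^ (4 * m) = 1 + p * v := by linear_combination hv
  have pow_left : (u ^ p ^ 2) ^ (2 * m) = u ^ (2 * m) * (1 + p * v) ^ (2 * m * (p + 1)) := by
    rw [← pow_four, ← pow_mul, ← pow_mul, ← pow_add,
      show p ^ 2 * (2 * m) = 2 * m + 4 * m * (2 * m * (p + 1)) by rw [hp4]; ring]
  have pow_six : u ^ (6 * m) = u ^ (2 * m) * (1 + p * v) := by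
    rw [← pow_four]
    ring
  have pow_ten : u ^ (10 * m) = u ^ (2 * m) * (1 + p * v) ^ 2 := by
    rw [← pow_four]
    ring
  have exponent : 2 * ((2 * m * (p + 1) : ℕ) : ZMod (p ^ 3)) = (p : ZMod (p ^ 3)) ^ 2 - 1 := by
    have : 2 * (2 * m * (p + 1)) + 1 = p ^ 2 := by rw [hp4]; ring
    rw [eq_sub_iff_add_eq]
    exact_mod_cast congrArg (Nat.cast : ℕ → ZMod (p ^ 3)) this
  have expansion := two_mul_one_add_mul_pow hP v (2 * m * (p + 1))
  rw [pow_left, pow_six, pow_ten]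
  generalize 2 * m * (p + 1) = N at *
  linear_combination 4 * u ^ (2 * m) * expansion +
    u ^ (2 * m) * (4 * p * v + (2 * N + p ^ 2 - 1 - 2) * p ^ 2 * v ^ 2) * exponent +
    u ^ (2 * m) * (4 * v + p * v ^ 2 * (p ^ 2 - 4)) * hP

theorem eight_mul_teichmullerChar_one_sub_pow (hm : m ≠ 0) (t : ZMod p) :
    8 * teichmullerChar p (1 - t) ^ (2 * m) = 15 * (1 - teichmullerChar p t) ^ (2 * m) -
      10 * (1 - teichmullerChar p t) ^ (6 * m) + 3 * (1 - teichmullerChar p t) ^ (10 * m) := by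
  by_cases ht : t = 1
  · subst ht
    simp only [sub_self, map_one, MulChar.map_zero]
    rw [zero_pow (by lia), zero_pow (by lia), zero_pow (by lia)]
    ring
  have reduction : ZMod.castHom (dvd_cube p) (ZMod p) (1 - teichmullerChar p t) = 1 - t := by
    rw [map_sub, map_one, castHom_teichmullerChar]
  rw [← eight_mul_pow_sq_pow hp4, ← teichmullerChar_castHom, reduction]
  rw [← isUnit_castHom_iff Fact.out (dvd_cube p), reduction]
  exact (sub_ne_zero.2 (Ne.symm ht)).isUnit

omit [Fact p.Prime] hp4 in
theorem sum_filter_dvd_three_mul_add {M : Type*} [AddCommMonoid M] (hm : m ≠ 0) (K : ℕ)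
    (f : ℕ → M) : ∑ j ∈ range (K * m + 1) with 4 * m ∣ 3 * m + j, f j =
      ∑ a ∈ range (K + 1) with 4 ∣ 3 + a, f (a * m) := by
  have dvd_iff (a : ℕ) : 4 * m ∣ 3 * m + a * m ↔ 4 ∣ 3 + a := by
    rw [← add_mul, Nat.mul_dvd_mul_iff_right (Nat.pos_of_ne_zero hm)]
  have le_iff (a : ℕ) : a * m < K * m + 1 ↔ a < K + 1 := by
    rw [Nat.lt_succ_iff, Nat.lt_succ_iff, Nat.mul_le_mul_right_iff (Nat.pos_of_ne_zero hm)]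
  refine (sum_nbij (· * m) (fun a ha ↦ ?_) (fun a _ b _ h ↦ Nat.eq_of_mul_eq_mul_right
    (Nat.pos_of_ne_zero hm) h) (fun j hj ↦ ?_) fun _ _ ↦ rfl).symm
  · simpa [dvd_iff, le_iff] using ha
  · have dvd : m ∣ j := (Nat.dvd_add_right (dvd_mul_left m 3)).1
      ((dvd_mul_left m 4).trans (mem_filter.1 hj).2)
    obtain ⟨a, rfl⟩ := exists_eq_mul_left_of_dvd dvd
    rw [mem_coe, mem_filter, mem_range, dvd_iff, le_iff] at hj
    exact ⟨a, by simpa using hj, rfl⟩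

theorem eight_mul_quarticJacobiSum (hm : m ≠ 0) :
    8 * quarticJacobiSum p m =
      ((p : ZMod (p ^ 3)) - 1) * (-1) ^ m *
        (15 * ((2 * m).choose m : ZMod (p ^ 3)) - 20 * ((6 * m).choose m : ZMod (p ^ 3)) +
          6 * ((10 * m).choose m : ZMod (p ^ 3)) +
          3 * ((10 * m).choose (5 * m) : ZMod (p ^ 3))) := by
  have binomial (K : ℕ) :
      ∑ t, teichmullerChar p t ^ (3 * m) * (1 - teichmullerChar p t) ^ (K * m) =
        ((p : ZMod (p ^ 3)) - 1) * ∑ a ∈ range (K + 1) with 4 ∣ 3 + a,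
          (-1) ^ (a * m) * ((K * m).choose (a * m) : ZMod (p ^ 3)) := by
    rw [sum_teichmullerChar_pow_mul_one_sub_pow hp4 (by lia), sum_filter_dvd_three_mul_add hm]
  have expand : 8 * quarticJacobiSum p m =
      15 * (∑ t, teichmullerChar p t ^ (3 * m) * (1 - teichmullerChar p t) ^ (2 * m)) -
        10 * (∑ t, teichmullerChar p t ^ (3 * m) * (1 - teichmullerChar p t) ^ (6 * m)) +
        3 * (∑ t, teichmullerChar p t ^ (3 * m) * (1 - teichmullerChar p t) ^ (10 * m)) := by
    rw [quarticJacobiSum, jacobiSum, mul_sum, mul_sum, mul_sum, mul_sum, ← sum_sub_distrib,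
      ← sum_add_distrib]
    refine sum_congr rfl fun t _ ↦ ?_
    rw [MulChar.pow_apply' _ (by lia), MulChar.pow_apply' _ (by lia)]
    linear_combination teichmullerChar p t ^ (3 * m) *
      eight_mul_teichmullerChar_one_sub_pow hp4 hm t
  have symm_six : (6 * m).choose (5 * m) = (6 * m).choose m := Nat.choose_symm_of_eq_add (by ring)
  have symm_ten : (10 * m).choose (9 * m) = (10 * m).choose m :=
    Nat.choose_symm_of_eq_add (by ring)
  have sign (k : ℕ) : (-1 : ZMod (p ^ 3)) ^ ((2 * k + 1) * m) = (-1) ^ m := by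
    rw [pow_mul, (odd_two_mul_add_one k).neg_one_pow]
  rw [expand, binomial, binomial, binomial,
    show {a ∈ range (2 + 1) | 4 ∣ 3 + a} = {1} by decide,
    show {a ∈ range (6 + 1) | 4 ∣ 3 + a} = {1, 5} by decide,
    show {a ∈ range (10 + 1) | 4 ∣ 3 + a} = {1, 5, 9} by decide,
    sum_singleton, sum_pair (by simp), sum_insert (by simp), sum_pair (by simp), symm_six, symm_ten,
    sign 2, sign 4, one_mul]
  ring

end TeichmullerCharacter

section TwoSquares

theorem mul_eq_mul_of_dvd_of_sq_add_sq {p a b c d : ℤ} (hp : 0 < p) (hab : a ^ 2 + b ^ 2 = p)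
    (hcd : c ^ 2 + d ^ 2 = p) (ne : a * c + b * d ≠ 0) (dvd : p ∣ a * d - b * c) :
    a * d = b * c := by
  have brahmagupta : (a * c + b * d) ^ 2 + (a * d - b * c) ^ 2 = p ^ 2 := by
    linear_combination (c ^ 2 + d ^ 2) * hab + p * hcd
  have pos : 0 < (a * c + b * d) ^ 2 := by positivity
  exact sub_eq_zero.1 (Int.eq_zero_of_abs_lt_dvd dvd (abs_lt_of_sq_lt_sq (by lia) hp.le))

theorem sq_eq_sq_of_odd_of_sq_add_sq {p : ℕ} (hp : p.Prime) (hp2 : p ≠ 2) {a b c d : ℤ}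
    (hab : a ^ 2 + b ^ 2 = p) (hcd : c ^ 2 + d ^ 2 = p) (ha : Odd a) (hc : Odd c) :
    a ^ 2 = c ^ 2 := by
  have odd_p : Odd (p : ℤ) := by exact_mod_cast hp.odd_of_ne_two hp2
  have even_of {x y : ℤ} (h : x ^ 2 + y ^ 2 = p) (hx : Odd x) : Even y := by
    rw [← h, Int.odd_add] at odd_p
    exact (Int.even_pow.1 (odd_p.1 hx.pow)).1
  have ne (s : ℤ) : a * c + s * (b * d) ≠ 0 := fun h ↦ by
    have odd_sum := (ha.mul hc).add_even (((even_of hab ha).mul_right d).mul_left s)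
    simp [h] at odd_sum
  have hp0 : 0 < (p : ℤ) := by exact_mod_cast hp.pos
  have product : (p : ℤ) * (a ^ 2 - c ^ 2) = (a * d - b * c) * (a * d + b * c) := by
    linear_combination c ^ 2 * hab - a ^ 2 * hcd
  have product_zero : (a * d - b * c) * (a * d + b * c) = 0 := by
    obtain dvd | dvd := (Nat.prime_iff_prime_int.1 hp).dvd_or_dvd (Dvd.intro _ product)
    · have := mul_eq_mul_of_dvd_of_sq_add_sq hp0 hab hcd (by simpa using ne 1) dvd
      rw [this, sub_self, zero_mul]
    · have := mul_eq_mul_of_dvd_of_sq_add_sq hp0 (a := a) (b := -b) (by rwa [neg_sq]) hcd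
        (by simpa using ne (-1)) (by simpa using dvd)
      rw [this]
      ring
  rw [product_zero] at product
  exact sub_eq_zero.1 ((mul_eq_zero.1 product).resolve_left hp0.ne')

end TwoSquares

section GaussianJacobiSum

theorem isPrimitiveRoot_gaussianInt_sqrtd :
    IsPrimitiveRoot (Zsqrtd.sqrtd : GaussianInt) 4 := by
  refine IsPrimitiveRoot.mk_of_lt _ (by norm_num) (by decide) fun k h0 h4 ↦ ?_
  interval_cases k <;> decide

theorem jacobiSum_mul_star_jacobiSum {F : Type*} [Field F] [Fintype F] {χ ψ : MulChar F GaussianInt}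
    (hF : ringChar F ≠ 0) (hχ : χ ≠ 1) (hψ : ψ ≠ 1) (hχψ : χ * ψ ≠ 1) :
    jacobiSum χ ψ * star (jacobiSum χ ψ) = Fintype.card F := by
  apply GaussianInt.toComplex_injective
  have ne_one {φ : MulChar F GaussianInt} (h : φ ≠ 1) : φ.ringHomComp GaussianInt.toComplex ≠ 1 :=
    (MulChar.ringHomComp_ne_one_iff GaussianInt.toComplex_injective).2 h
  have norm := jacobiSum_mul_jacobiSum_inv (by rw [ringChar.eq_zero]; exact hF.symm) (ne_one hχ)
    (ne_one hψ) (by rw [← MulChar.ringHomComp_mul]; exact ne_one hχψ)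
  have inv_eq (φ : MulChar F ℂ) : φ⁻¹ = φ.ringHomComp (starRingEnd ℂ) :=
    (MulChar.star_eq_inv φ).symm
  rwa [inv_eq, inv_eq, jacobiSum_ringHomComp _ _ (starRingEnd ℂ), jacobiSum_ringHomComp,
    ← GaussianInt.toComplex_star, ← map_mul, ← map_natCast GaussianInt.toComplex] at norm

theorem odd_re_jacobiSum {F : Type*} [Field F] [Fintype F] {χ ψ : MulChar F GaussianInt}
    (hF : 4 ∣ Fintype.card F - 1) (hχ : χ ^ 4 = 1) (hψ : ψ ^ 4 = 1) : Odd (jacobiSum χ ψ).re := by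
  obtain ⟨z, -, hz⟩ := exists_jacobiSum_eq_neg_one_add (by norm_num) hχ hψ hF
    isPrimitiveRoot_gaussianInt_sqrtd
  rw [show (Zsqrtd.sqrtd - 1 : GaussianInt) ^ 2 = ⟨0, -2⟩ by decide] at hz
  exact ⟨z.im - 1, by rw [hz]; simp; ring⟩

variable {p m : ℕ} [Fact p.Prime] (hp4 : p = 4 * m + 1)
include hp4

theorem pow_two_mul_eq_neg_one_of_generator {g : (ZMod p)ˣ} (hg : ∀ x, x ∈ Subgroup.zpowers g) :
    (g : ZMod p) ^ (2 * m) = -1 := by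
  obtain h | h := ZMod.pow_div_two_eq_neg_one_or_one p g.ne_zero
  · have dvd := orderOf_dvd_of_pow_eq_one (G := (ZMod p)ˣ) (x := g) (n := p / 2)
      (Units.ext (by simpa using h))
    have := (Fact.out : p.Prime).one_lt
    have := Nat.le_of_dvd (by lia) dvd
    rw [orderOf_eq_card_of_forall_mem_zpowers hg, Nat.card_eq_fintype_card, ZMod.card_units] at this
    lia
  · rwa [show p / 2 = 2 * m by lia] at h

theorem exists_quarticChar_ringHomComp_eq :
    ∃ (χ : MulChar (ZMod p) GaussianInt) (φ : GaussianInt →+* ZMod (p ^ 3)),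
      IsPrimitiveRoot χ 4 ∧ χ.ringHomComp φ = teichmullerChar p ^ (3 * m) := by
  obtain ⟨g, hg⟩ := IsCyclic.exists_generator (α := (ZMod p)ˣ)
  have prim := isPrimitiveRoot_gaussianInt_sqrtd
  have card : Fintype.card (ZMod p)ˣ = 4 * m := by
    rw [ZMod.card_units]
    lia
  have root : (prim.toRootsOfUnity : GaussianIntˣ) ∈
      rootsOfUnity (Fintype.card (ZMod p)ˣ) GaussianInt :=
    rootsOfUnity_le_of_dvd (card ▸ dvd_mul_right 4 m) prim.toRootsOfUnity.2
  have sq_eq : (teichmullerChar p ^ (3 * m)) g * (teichmullerChar p ^ (3 * m)) g =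
      ((-1 : ℤ) : ZMod (p ^ 3)) := by
    rw [MulChar.pow_apply_coe, ← map_pow, ← map_mul, ← pow_add,
      show 3 * m + 3 * m = 2 * m * 3 by ring, pow_mul, pow_two_mul_eq_neg_one_of_generator hp4 hg,
      (show Odd 3 by decide).neg_one_pow, teichmullerChar_neg_one (by lia), Int.cast_neg,
      Int.cast_one]
  have χg := MulChar.ofRootOfUnity_spec root hg
  rw [IsPrimitiveRoot.val_toRootsOfUnity_coe] at χg
  have pow_eq_one_iff (k : ℕ) : MulChar.ofRootOfUnity root hg ^ k = 1 ↔ 4 ∣ k := by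
    rw [MulChar.eq_iff hg, MulChar.pow_apply_coe, χg, MulChar.one_apply_coe,
      prim.pow_eq_one_iff_dvd]
  refine ⟨MulChar.ofRootOfUnity root hg, Zsqrtd.lift ⟨_, sq_eq⟩,
    ⟨(pow_eq_one_iff 4).2 dvd_rfl, fun k ↦ (pow_eq_one_iff k).1⟩, ?_⟩
  rw [MulChar.eq_iff hg, MulChar.ringHomComp_apply, χg]
  simp [Zsqrtd.lift]

theorem exists_sq_add_sq_eq_and_quarticJacobiSum_add_eq :
    ∃ a b : ℤ, Odd a ∧ a ^ 2 + b ^ 2 = p ∧ ∃ z : ZMod (p ^ 3),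
      quarticJacobiSum p m * z = (p : ZMod (p ^ 3)) ∧
        quarticJacobiSum p m + z = 2 * (a : ZMod (p ^ 3)) := by
  obtain ⟨χ, φ, prim, comp⟩ := exists_quarticChar_ringHomComp_eq hp4
  have comp_sq : (χ ^ 2).ringHomComp φ = teichmullerChar p ^ (2 * m) := by
    have card : Fintype.card (ZMod p)ˣ = 4 * m := by
      rw [ZMod.card_units]
      lia
    rw [← MulChar.ringHomComp_pow, comp, ← pow_mul, show 3 * m * 2 = 4 * m + 2 * m by ring,
      pow_add, ← card, MulChar.pow_card_eq_one, one_mul]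
  have norm : jacobiSum χ (χ ^ 2) * star (jacobiSum χ (χ ^ 2)) = p := by
    rw [jacobiSum_mul_star_jacobiSum, ZMod.card]
    · rw [ZMod.ringChar_zmod_n]
      exact NeZero.ne p
    · exact prim.ne_one (by norm_num)
    · exact prim.pow_ne_one_of_pos_of_lt (by norm_num) (by norm_num)
    · rw [← pow_succ']
      exact prim.pow_ne_one_of_pos_of_lt (by norm_num) (by norm_num)
  have odd : Odd (jacobiSum χ (χ ^ 2)).re := odd_re_jacobiSum (by rw [ZMod.card]; exact ⟨m, by lia⟩)
    prim.pow_eq_one (by rw [← pow_mul, mul_comm, pow_mul, prim.pow_eq_one, one_pow])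
  rw [quarticJacobiSum, ← comp_sq, ← comp, jacobiSum_ringHomComp]
  generalize jacobiSum χ (χ ^ 2) = J at norm odd ⊢
  refine ⟨J.re, J.im, odd, ?_, φ (star J), ?_, ?_⟩
  · have := congrArg Zsqrtd.re norm
    simp at this
    lia
  · rw [← map_mul, norm, map_natCast]
  · rw [← map_add, ← map_intCast φ, ← map_ofNat φ 2, ← map_mul]
    congr 1
    ext <;> simp
    ring

end GaussianJacobiSum

/-! ### Binomial coefficients and the gamma function -/

section FactorialGamma

/-- The product of the positive integers up to `N` that are not divisible by `p`; up to sign it is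
the value at `N + 1` of Morita's `p`-adic gamma function. -/
def primeFreeFactorial (p N : ℕ) : ℕ := ∏ i ∈ range N, if p ∣ i + 1 then 1 else i + 1

theorem primeFreeFactorial_succ (p N : ℕ) :
    primeFreeFactorial p (N + 1) = primeFreeFactorial p N * if p ∣ N + 1 then 1 else N + 1 :=
  prod_range_succ _ _

theorem primeFreeFactorial_mul_pow_mul_factorial (p N : ℕ) :
    primeFreeFactorial p N * p ^ (N / p) * (N / p).factorial = N.factorial := by
  induction N with
  | zero => simp [primeFreeFactorial]
  | succ N ih =>
    rw [Nat.factorial_succ, primeFreeFactorial_succ, ← ih]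
    by_cases h : p ∣ N + 1
    · have quotient : N + 1 = p * (N / p + 1) := by
        rw [← Nat.succ_div_of_dvd h, Nat.mul_div_cancel' h]
      rw [if_pos h, Nat.succ_div_of_dvd h, Nat.factorial_succ]
      calc primeFreeFactorial p N * 1 * p ^ (N / p + 1) * ((N / p + 1) * (N / p).factorial)
        _ = p * (N / p + 1) * (primeFreeFactorial p N * p ^ (N / p) * (N / p).factorial) := by ring
        _ = _ := by rw [← quotient]
    · rw [if_neg h, Nat.succ_div_of_not_dvd h]
      ring

theorem choose_mul_primeFreeFactorial {p : ℕ} (hp : 0 < p) {a b i j : ℕ} (ha : a / p = i)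
    (hb : b / p = j) (hab : (a + b) / p = i + j) :
    (a + b).choose a * (primeFreeFactorial p a * primeFreeFactorial p b) =
      (i + j).choose i * primeFreeFactorial p (a + b) := by
  have factorials := Nat.add_choose_mul_factorial_mul_factorial a b
  rw [← primeFreeFactorial_mul_pow_mul_factorial p (a + b),
    ← primeFreeFactorial_mul_pow_mul_factorial p a, ← primeFreeFactorial_mul_pow_mul_factorial p b,
    ha, hb, hab, ← Nat.add_choose_mul_factorial_mul_factorial i j, pow_add] at factorials
  refine Nat.eq_of_mul_eq_mul_right
    (by positivity : 0 < p ^ i * p ^ j * i.factorial * j.factorial) ?_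
  rw [Nat.choose_symm_add, Nat.choose_symm_add (a := i)]
  linarith

variable {p : ℕ} (hp : p.Prime) (hp2 : p ≠ 2) {r : ℕ}
include hp hp2

theorem moritaGamma_one_add_natCast (hr : r ≠ 0) (N : ℕ) :
    moritaGamma (1 + (N : ZMod (p ^ r))) =
      -((-1) ^ N * (primeFreeFactorial p N : ZMod (p ^ r))) := by
  induction N with
  | zero =>
    have at_one := moritaGamma_add_one hp hp2 (0 : ZMod (p ^ r))
    rw [moritaGamma_zero, moritaFactor_zero, zero_add] at at_one
    simp [primeFreeFactorial, at_one]
  | succ N ih =>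
    have cast : 1 + (N : ZMod (p ^ r)) = ((N + 1 : ℕ) : ZMod (p ^ r)) := by
      rw [Nat.cast_succ, add_comm]
    rw [← cast, add_comm, moritaGamma_add_one hp hp2, ih, primeFreeFactorial_succ]
    by_cases h : p ∣ N + 1
    · have not_isUnit : ¬IsUnit (1 + (N : ZMod (p ^ r))) := fun unit ↦
        (ZMod.isUnit_natCast_iff_not_dvd_pow hp (Nat.pos_of_ne_zero hr)).1 (cast ▸ unit) h
      rw [moritaFactor_of_not_isUnit not_isUnit, if_pos h, mul_one]
      ring
    · have isUnit : IsUnit (1 + (N : ZMod (p ^ r))) := cast ▸ isUnit_natCast hp h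
      rw [moritaFactor_of_isUnit isUnit, if_neg h, Nat.cast_mul, ← cast]
      ring

theorem choose_mul_moritaGamma (hr : r ≠ 0) {a b i j : ℕ} (ha : a / p = i) (hb : b / p = j)
    (hab : (a + b) / p = i + j) :
    ((a + b).choose a : ZMod (p ^ r)) *
        (moritaGamma (1 + (a : ZMod (p ^ r))) * moritaGamma (1 + (b : ZMod (p ^ r)))) =
      -((i + j).choose i : ZMod (p ^ r)) * moritaGamma (1 + ((a + b : ℕ) : ZMod (p ^ r))) := by
  have key := congrArg (Nat.cast : ℕ → ZMod (p ^ r))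
    (choose_mul_primeFreeFactorial hp.pos ha hb hab)
  rw [moritaGamma_one_add_natCast hp hp2 hr, moritaGamma_one_add_natCast hp hp2 hr,
    moritaGamma_one_add_natCast hp hp2 hr, pow_add]
  push_cast at key ⊢
  linear_combination (-1) ^ a * (-1) ^ b * key

theorem mul_moritaGamma_add_one_of_mul_eq {x c a y : ZMod (p ^ r)} (ha : IsUnit a)
    (h : c * x = -(a - p * y)) :
    c * moritaGamma (x + 1) = moritaGamma x * (a - (p : ZMod (p ^ r)) * y) := by
  have nil : IsNilpotent (-((p : ZMod (p ^ r)) * y)) :=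
    (Commute.all _ _).isNilpotent_mul_right ⟨r, natCast_pow_eq_zero p le_rfl⟩ |>.neg
  have unit : IsUnit (c * x) := by
    rw [h, sub_eq_add_neg]
    exact (nil.isUnit_add_left_of_commute ha (.all _ _)).neg
  rw [moritaGamma_add_one hp hp2, moritaFactor_of_isUnit (isUnit_of_mul_isUnit_right unit)]
  linear_combination (-moritaGamma x) * h

end FactorialGamma

section ChowlaDworkEvans

variable {p m : ℕ} (hp : p.Prime) (hp4 : p = 4 * m + 1) {h Q : ZMod (p ^ 3)} (hh : 2 * h = 1)
  (hQ : 4 * Q = (p : ZMod (p ^ 3)))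
include hp hp4 hh hQ

theorem natCast_eq_quarter_sub_sq : (m : ZMod (p ^ 3)) = Q - h * h := by
  refine ((isUnit_two hp (by lia)).pow 2).mul_left_cancel ?_
  linear_combination (-1) * hQ - natCast_eq_four_mul_add_one hp4 + (2 * h + 1) * hh

theorem one_add_natCast_eq : 1 + (m : ZMod (p ^ 3)) = 3 * h * h + Q := by
  linear_combination natCast_eq_quarter_sub_sq hp hp4 hh hQ - (2 * h + 1) * hh

theorem moritaGamma_one_add_five_mul :
    moritaGamma (3 * h * h + 5 * Q) * 4 =
      moritaGamma (1 + ((5 * m : ℕ) : ZMod (p ^ 3))) * (1 - 20 * Q) := by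
  have m_eq := natCast_eq_quarter_sub_sq hp hp4 hh hQ
  have shift := mul_moritaGamma_add_one_of_mul_eq hp (by lia) isUnit_one (c := 4) (y := 5)
    (x := 1 + ((5 * m : ℕ) : ZMod (p ^ 3)))
    (by push_cast; linear_combination (-5) * natCast_eq_four_mul_add_one hp4)
  rw [show 1 + ((5 * m : ℕ) : ZMod (p ^ 3)) + 1 = 3 * h * h + 5 * Q by
    push_cast; linear_combination 5 * m_eq - 2 * (2 * h + 1) * hh, ← hQ] at shift
  linear_combination shift

theorem moritaGamma_one_add_six_mul :
    moritaGamma (h + 6 * Q) * 2 =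
      moritaGamma (1 + ((6 * m : ℕ) : ZMod (p ^ 3))) * (1 - 12 * Q) := by
  have m_eq := natCast_eq_quarter_sub_sq hp hp4 hh hQ
  have shift := mul_moritaGamma_add_one_of_mul_eq hp (by lia) isUnit_one (c := 2) (y := 3)
    (x := 1 + ((6 * m : ℕ) : ZMod (p ^ 3)))
    (by push_cast; linear_combination (-3) * natCast_eq_four_mul_add_one hp4)
  rw [show 1 + ((6 * m : ℕ) : ZMod (p ^ 3)) + 1 = h + 6 * Q by
    push_cast; linear_combination 6 * m_eq - (3 * h + 2) * hh, ← hQ] at shift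
  linear_combination shift

theorem moritaGamma_one_add_ten_mul :
    moritaGamma (h + 10 * Q) * 4 =
      moritaGamma (1 + ((10 * m : ℕ) : ZMod (p ^ 3))) * (3 - 20 * Q) * (1 - 20 * Q) := by
  have m_eq := natCast_eq_quarter_sub_sq hp hp4 hh hQ
  have p_eq := natCast_eq_four_mul_add_one hp4
  have u3 : IsUnit (3 : ZMod (p ^ 3)) := isUnit_three hp (by lia)
  have shift := mul_moritaGamma_add_one_of_mul_eq hp (by lia) u3 (c := 2) (y := 5)
    (x := 1 + ((10 * m : ℕ) : ZMod (p ^ 3))) (by push_cast; linear_combination (-5) * p_eq)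
  have shift' := mul_moritaGamma_add_one_of_mul_eq hp (by lia) isUnit_one (c := 2) (y := 5)
    (x := 1 + ((10 * m : ℕ) : ZMod (p ^ 3)) + 1) (by push_cast; linear_combination (-5) * p_eq)
  rw [show 1 + ((10 * m : ℕ) : ZMod (p ^ 3)) + 1 + 1 = h + 10 * Q by
    push_cast; linear_combination 10 * m_eq - (5 * h + 3) * hh, ← hQ] at shift'
  rw [← hQ] at shift
  linear_combination 2 * shift' + (1 - 20 * Q) * shift

variable (hm : 2 < m)
include hm

theorem moritaGamma_one_add_nine_mul :
    moritaGamma (3 * h * h + 9 * Q) * 16 =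
      moritaGamma (1 + ((9 * m : ℕ) : ZMod (p ^ 3))) * (5 - 36 * Q) * (1 - 36 * Q) := by
  have m_eq := natCast_eq_quarter_sub_sq hp hp4 hh hQ
  have p_eq := natCast_eq_four_mul_add_one hp4
  have u5 : IsUnit (5 : ZMod (p ^ 3)) := isUnit_natCast_of_lt (a := 5) hp (by lia) (by lia)
  have shift := mul_moritaGamma_add_one_of_mul_eq hp (by lia) u5 (c := 4) (y := 9)
    (x := 1 + ((9 * m : ℕ) : ZMod (p ^ 3))) (by push_cast; linear_combination (-9) * p_eq)
  have shift' := mul_moritaGamma_add_one_of_mul_eq hp (by lia) isUnit_one (c := 4) (y := 9)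
    (x := 1 + ((9 * m : ℕ) : ZMod (p ^ 3)) + 1) (by push_cast; linear_combination (-9) * p_eq)
  rw [show 1 + ((9 * m : ℕ) : ZMod (p ^ 3)) + 1 + 1 = 3 * h * h + 9 * Q by
    push_cast; linear_combination 9 * m_eq - 3 * (2 * h + 1) * hh, ← hQ] at shift'
  rw [← hQ] at shift
  linear_combination 4 * shift' + (1 - 36 * Q) * shift

theorem choose_two_mul_mul_moritaGamma :
    ((2 * m).choose m : ZMod (p ^ 3)) * moritaGamma (3 * h * h + Q) ^ 2 =
      -moritaGamma (h + 2 * Q) := by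
  have arg : 1 + ((2 * m : ℕ) : ZMod (p ^ 3)) = h + 2 * Q := by
    push_cast
    linear_combination 2 * natCast_eq_quarter_sub_sq hp hp4 hh hQ - (h + 1) * hh
  have small : m / p = 0 := Nat.div_eq_of_lt (by lia)
  have binomial := choose_mul_moritaGamma hp (by lia) three_ne_zero small small
    (Nat.div_eq_of_lt (by lia))
  rw [← two_mul, one_add_natCast_eq hp hp4 hh hQ, arg] at binomial
  rw [sq, binomial]
  simp

theorem choose_six_mul_mul_moritaGamma :
    ((6 * m).choose m : ZMod (p ^ 3)) *
        (moritaGamma (3 * h * h + Q) * moritaGamma (3 * h * h + 5 * Q)) * 2 * (1 - 12 * Q) =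
      -moritaGamma (h + 6 * Q) * (1 - 20 * Q) := by
  have binomial := choose_mul_moritaGamma hp (by lia) three_ne_zero
    (show m / p = 0 from Nat.div_eq_of_lt (by lia))
    (show 5 * m / p = 1 from Nat.div_eq_of_lt_le (by lia) (by lia))
    (Nat.div_eq_of_lt_le (by lia) (by lia))
  rw [show m + 5 * m = 6 * m by ring, one_add_natCast_eq hp hp4 hh hQ, Nat.choose_zero_right,
    Nat.cast_one] at binomial
  have five := moritaGamma_one_add_five_mul hp hp4 hh hQ
  have six := moritaGamma_one_add_six_mul hp hp4 hh hQ
  refine (isUnit_two hp (by lia)).mul_left_cancel ?_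
  linear_combination (1 - 20 * Q) * (1 - 12 * Q) * binomial + (1 - 20 * Q) * six +
    (6 * m).choose m * moritaGamma (3 * h * h + Q) * (1 - 12 * Q) * five

theorem choose_ten_mul_mul_moritaGamma :
    ((10 * m).choose m : ZMod (p ^ 3)) *
        (moritaGamma (3 * h * h + Q) * moritaGamma (3 * h * h + 9 * Q)) *
          4 * (3 - 20 * Q) * (1 - 20 * Q) =
      -moritaGamma (h + 10 * Q) * (5 - 36 * Q) * (1 - 36 * Q) := by
  have binomial := choose_mul_moritaGamma hp (by lia) three_ne_zero
    (show m / p = 0 from Nat.div_eq_of_lt (by lia))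
    (show 9 * m / p = 2 from Nat.div_eq_of_lt_le (by lia) (by lia))
    (Nat.div_eq_of_lt_le (by lia) (by lia))
  rw [show m + 9 * m = 10 * m by ring, one_add_natCast_eq hp hp4 hh hQ, Nat.choose_zero_right,
    Nat.cast_one] at binomial
  have nine := moritaGamma_one_add_nine_mul hp hp4 hh hQ hm
  have ten := moritaGamma_one_add_ten_mul hp hp4 hh hQ
  refine ((isUnit_two hp (by lia)).pow 2).mul_left_cancel ?_
  linear_combination (5 - 36 * Q) * (1 - 36 * Q) * (3 - 20 * Q) * (1 - 20 * Q) * binomial +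
    (10 * m).choose m * moritaGamma (3 * h * h + Q) * (3 - 20 * Q) * (1 - 20 * Q) * nine +
    (5 - 36 * Q) * (1 - 36 * Q) * ten

theorem choose_ten_mul_five_mul_mul_moritaGamma :
    ((10 * m).choose (5 * m) : ZMod (p ^ 3)) * moritaGamma (3 * h * h + 5 * Q) ^ 2 *
        2 * (3 - 20 * Q) * (1 - 20 * Q) =
      -moritaGamma (h + 10 * Q) * (1 - 20 * Q) ^ 2 := by
  have quotient : 5 * m / p = 1 := Nat.div_eq_of_lt_le (by lia) (by lia)
  have binomial := choose_mul_moritaGamma hp (by lia) three_ne_zero quotient quotient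
    (Nat.div_eq_of_lt_le (by lia) (by lia))
  rw [show 5 * m + 5 * m = 10 * m by ring, show Nat.choose (1 + 1) 1 = 2 from rfl,
    Nat.cast_ofNat] at binomial
  have five := moritaGamma_one_add_five_mul hp hp4 hh hQ
  have ten := moritaGamma_one_add_ten_mul hp hp4 hh hQ
  refine ((isUnit_two hp (by lia)).pow 3).mul_left_cancel ?_
  linear_combination (1 - 20 * Q) ^ 2 * (3 - 20 * Q) * (1 - 20 * Q) * binomial +
    (10 * m).choose (5 * m) * (3 - 20 * Q) * (1 - 20 * Q) *
      (4 * moritaGamma (3 * h * h + 5 * Q) +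
        moritaGamma (1 + ((5 * m : ℕ) : ZMod (p ^ 3))) * (1 - 20 * Q)) * five +
    2 * (1 - 20 * Q) ^ 2 * ten

end ChowlaDworkEvans

section JacobiSumValue

/-- Up to units, the four terms in parentheses are the binomial coefficients in the expansion of
`quarticJacobiSum` when `a` and `c` interpolate gamma values and inverse gamma values. -/
theorem IsQuadraticIn.choose_combination {R : Type*} [CommRing R] {Q : R} {a c : R → R}
    (hQ : Q ^ 3 = 0) (ha : IsQuadraticIn Q a) (hc : IsQuadraticIn Q c) :
    (1 - 4 * Q) * (60 * (1 - 12 * Q) * (3 - 20 * Q) * (1 - 20 * Q) * a 2 * c 1 ^ 2 -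
      40 * (3 - 20 * Q) * (1 - 20 * Q) ^ 2 * a 6 * c 1 * c 5 +
      6 * (1 - 12 * Q) * (5 - 36 * Q) * (1 - 36 * Q) * a 10 * c 1 * c 9 +
      6 * (1 - 12 * Q) * (1 - 20 * Q) ^ 2 * a 10 * c 5 ^ 2) =
    32 * (1 - 12 * Q) * (3 - 20 * Q) * (1 - 20 * Q) * a 0 * c 0 ^ 2 := by
  obtain ⟨a₀, a₁, a₂, ha⟩ := ha
  obtain ⟨c₀, c₁, c₂, hc⟩ := hc
  simp only [ha, hc]
  clear ha hc
  grind

variable {p m : ℕ} [Fact p.Prime] {h Q : ZMod (p ^ 3)} (hh : 2 * h = 1)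
include hh

theorem isQuadraticIn_moritaGamma_quarter (hp3 : 3 < p) (hQ : 4 * Q = (p : ZMod (p ^ 3)))
    (x : ZMod (p ^ 3)) : IsQuadraticIn Q fun n ↦ moritaGamma (x + n * Q) := by
  obtain ⟨c, a, b, eq⟩ := isQuadraticIn_moritaGamma Fact.out hp3 x
  have Q_eq : Q = p * (h * h) := by linear_combination h * h * hQ - Q * (2 * h + 1) * hh
  refine ⟨c, a, b, fun n ↦ ?_⟩
  dsimp only at eq ⊢
  rw [show x + n * Q = x + p * (h * h * n) by rw [Q_eq]; ring, eq, Q_eq]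
  ring

theorem quarticJacobiSum_eq_choose_combination (hm : 2 < m) (hp4 : p = 4 * m + 1)
    (hQ : 4 * Q = (p : ZMod (p ^ 3))) {c : ZMod (p ^ 3) → ZMod (p ^ 3)}
    (hc : ∀ n, moritaGamma (3 * h * h + n * Q) * c n = 1) :
    2 ^ 5 * (1 - 12 * Q) * (3 - 20 * Q) * (1 - 20 * Q) * quarticJacobiSum p m =
      (-1) ^ m * ((1 - 4 * Q) *
        (60 * (1 - 12 * Q) * (3 - 20 * Q) * (1 - 20 * Q) * moritaGamma (h + 2 * Q) * c 1 ^ 2 -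
          40 * (3 - 20 * Q) * (1 - 20 * Q) ^ 2 * moritaGamma (h + 6 * Q) * c 1 * c 5 +
          6 * (1 - 12 * Q) * (5 - 36 * Q) * (1 - 36 * Q) * moritaGamma (h + 10 * Q) * c 1 * c 9 +
          6 * (1 - 12 * Q) * (1 - 20 * Q) ^ 2 * moritaGamma (h + 10 * Q) * c 5 ^ 2)) := by
  have hp : p.Prime := Fact.out
  have inv₁ := hc 1
  rw [one_mul] at inv₁
  have choose_two : ((2 * m).choose m : ZMod (p ^ 3)) = -moritaGamma (h + 2 * Q) * c 1 ^ 2 := by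
    linear_combination c 1 ^ 2 * choose_two_mul_mul_moritaGamma hp hp4 hh hQ hm -
      (2 * m).choose m * (moritaGamma (3 * h * h + Q) * c 1 + 1) * inv₁
  have choose_six : ((6 * m).choose m : ZMod (p ^ 3)) * 2 * (1 - 12 * Q) =
      -moritaGamma (h + 6 * Q) * (1 - 20 * Q) * (c 1 * c 5) := by
    linear_combination c 1 * c 5 * choose_six_mul_mul_moritaGamma hp hp4 hh hQ hm -
      (6 * m).choose m * 2 * (1 - 12 * Q) *
        (inv₁ * (moritaGamma (3 * h * h + 5 * Q) * c 5) + hc 5)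
  have choose_ten : ((10 * m).choose m : ZMod (p ^ 3)) * 4 * (3 - 20 * Q) * (1 - 20 * Q) =
      -moritaGamma (h + 10 * Q) * (5 - 36 * Q) * (1 - 36 * Q) * (c 1 * c 9) := by
    linear_combination c 1 * c 9 * choose_ten_mul_mul_moritaGamma hp hp4 hh hQ hm -
      (10 * m).choose m * 4 * (3 - 20 * Q) * (1 - 20 * Q) *
        (inv₁ * (moritaGamma (3 * h * h + 9 * Q) * c 9) + hc 9)
  have choose_ten_five :
      ((10 * m).choose (5 * m) : ZMod (p ^ 3)) * 2 * (3 - 20 * Q) * (1 - 20 * Q) =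
        -moritaGamma (h + 10 * Q) * (1 - 20 * Q) ^ 2 * c 5 ^ 2 := by
    linear_combination c 5 ^ 2 * choose_ten_mul_five_mul_mul_moritaGamma hp hp4 hh hQ hm -
      (10 * m).choose (5 * m) * 2 * (3 - 20 * Q) * (1 - 20 * Q) *
        (moritaGamma (3 * h * h + 5 * Q) * c 5 + 1) * hc 5
  have jacobi := eight_mul_quarticJacobiSum hp4 (by lia)
  rw [← hQ] at jacobi
  linear_combination 4 * (1 - 12 * Q) * (3 - 20 * Q) * (1 - 20 * Q) * jacobi +
    (4 * Q - 1) * (-1) ^ m *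
      (60 * (1 - 12 * Q) * (3 - 20 * Q) * (1 - 20 * Q) * choose_two -
        40 * (3 - 20 * Q) * (1 - 20 * Q) * choose_six + 6 * (1 - 12 * Q) * choose_ten +
        6 * (1 - 12 * Q) * choose_ten_five)

theorem quarticJacobiSum_mul_moritaGamma_sq (hm : 2 < m) (hp4 : p = 4 * m + 1) :
    quarticJacobiSum p m * moritaGamma (3 * h * h) ^ 2 = (-1) ^ m * moritaGamma h := by
  have hp : p.Prime := Fact.out
  obtain ⟨Q, hQ⟩ : ∃ Q : ZMod (p ^ 3), 4 * Q = (p : ZMod (p ^ 3)) :=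
    ⟨(p : ZMod (p ^ 3)) * (h * h), by linear_combination (2 * h + 1) * p * hh⟩
  have hQ3 : Q ^ 3 = 0 := by
    refine (((isUnit_two hp (by lia)).pow 2).pow 3).mul_left_cancel ?_
    linear_combination ((4 * Q) ^ 2 + (4 * Q) * p + p ^ 2) * hQ + natCast_pow_eq_zero p le_rfl
  have quadratic := isQuadraticIn_moritaGamma_quarter hh (by lia) hQ
  obtain ⟨c, hc, inv⟩ := (quadratic (3 * h * h)).exists_mul_eq_one hQ3 (isUnit_moritaGamma _)
  have expansion := IsQuadraticIn.choose_combination hQ3 (quadratic h) hc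
  have inv₀ := inv 0
  simp only [zero_mul, add_zero] at inv₀ expansion
  have unit_sub {u : ZMod (p ^ 3)} (hu : IsUnit u) (k : ZMod (p ^ 3)) : IsUnit (u - k * Q) := by
    rw [sub_eq_add_neg]
    exact ((Commute.all k Q).isNilpotent_mul_left ⟨3, hQ3⟩).neg.isUnit_add_left_of_commute hu
      (.all _ _)
  have unit : IsUnit (2 ^ 5 * (1 - 12 * Q) * (3 - 20 * Q) * (1 - 20 * Q)) :=
    ((((isUnit_two hp (by lia)).pow 5).mul (unit_sub isUnit_one _)).mul
      (unit_sub (isUnit_three hp (by lia)) _)).mul (unit_sub isUnit_one _)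
  refine unit.mul_left_cancel ?_
  linear_combination moritaGamma (3 * h * h) ^ 2 *
      (quarticJacobiSum_eq_choose_combination hh hm hp4 hQ inv + (-1) ^ m * expansion) +
    2 ^ 5 * (1 - 12 * Q) * (3 - 20 * Q) * (1 - 20 * Q) * moritaGamma h * (-1) ^ m *
      (moritaGamma (3 * h * h) * c 0 + 1) * inv₀

end JacobiSumValue

/-! ### Primes congruent to one modulo four -/

section OneModFour

theorem ratCongr_binomialSum_five {x y : ℤ} (hxy : 5 = x ^ 2 + 4 * y ^ 2) :
    ratCongr 5 3 ((-1) ^ (5 / 4) * binomialSum 5 2)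
        (x ^ 2 / 27 - (5 : ℕ) / 18 + (5 : ℕ) ^ 2 / (216 * x ^ 2)) ∧
      ratCongr 5 3 ((-1) ^ (5 / 4) * binomialSum 5 3)
        (-x ^ 2 / 162 - (5 : ℕ) / 216 - (5 : ℕ) ^ 2 / (1296 * x ^ 2)) := by
  have sq_eq : (x : ℚ) ^ 2 = 1 := by
    have : y ^ 2 ≤ 1 := by nlinarith only [hxy, sq_nonneg x]
    have : -1 ≤ y := by nlinarith
    have : y ≤ 1 := by nlinarith
    have : -2 ≤ x := by nlinarith
    have : x ≤ 2 := by nlinarith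
    interval_cases y <;> interval_cases x <;> simp_all
  have value_two : (-1) ^ (5 / 4) * binomialSum 5 2 -
      (1 / 27 - (5 : ℕ) / 18 + (5 : ℕ) ^ 2 / (216 * 1)) = mkRat 73973125 536870912 := by
    rw [Rat.mkRat_eq_div]
    norm_num [binomialSum, sum_range_succ, Nat.choose]
  have value_three : (-1) ^ (5 / 4) * binomialSum 5 3 -
      (-1 / 162 - (5 : ℕ) / 216 - (5 : ℕ) ^ 2 / (1296 * 1)) = mkRat 71190125 1207959552 := by
    rw [Rat.mkRat_eq_div]
    norm_num [binomialSum, sum_range_succ, Nat.choose]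
  rw [ratCongr, ratCongr, sq_eq, value_two, value_three]
  decide +kernel

variable {p m : ℕ} [Fact p.Prime] (hm : 2 < m) (hp4 : p = 4 * m + 1)
include hm hp4

theorem isUnit_quarticJacobiSum : IsUnit (quarticJacobiSum p m) := by
  have hp : p.Prime := Fact.out
  have hh : 2 * (2 : ZMod (p ^ 3))⁻¹ = 1 := ZMod.mul_inv_of_unit 2 (isUnit_two hp (by lia))
  refine isUnit_of_mul_isUnit_left (y := moritaGamma (3 * 2⁻¹ * 2⁻¹) ^ 2) ?_
  rw [quarticJacobiSum_mul_moritaGamma_sq hh hm hp4]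
  exact (isUnit_one.neg.pow m).mul (isUnit_moritaGamma _)

theorem reducesTo_moment₀_zero_of_one_mod_four :
    ReducesTo (p ^ 3) (moment₀ 0 (2 * m)) ((-1) ^ m * quarticJacobiSum p m ^ 2) := by
  have hp : p.Prime := Fact.out
  have hh : 2 * (2 : ZMod (p ^ 3))⁻¹ = 1 := ZMod.mul_inv_of_unit 2 (isUnit_two hp (by lia))
  obtain ⟨z, hz, eq_z⟩ := exists_reducesTo_moment₀_zero hp (by lia) hp4 hh
  have jacobi := quarticJacobiSum_mul_moritaGamma_sq hh hm hp4
  convert hz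
  refine ((isUnit_moritaGamma (3 * 2⁻¹ * 2⁻¹)).pow 4).mul_right_cancel ?_
  linear_combination (-1) ^ m * (quarticJacobiSum p m * moritaGamma (3 * 2⁻¹ * 2⁻¹) ^ 2 +
    (-1) ^ m * moritaGamma 2⁻¹) * jacobi +
    (-1) ^ m * moritaGamma 2⁻¹ ^ 2 * neg_one_pow_sq (R := ZMod (p ^ 3)) m - eq_z

variable {w : ZMod (p ^ 3)} (hw : quarticJacobiSum p m * w = 1)
include hw

theorem exists_reducesTo_moment₂_zero_of_one_mod_four :
    ∃ z, ReducesTo (p ^ 3) (moment₂ 0 (2 * m)) z ∧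
      36 * z = (-1) ^ m * (p : ZMod (p ^ 3)) ^ 2 * w ^ 2 := by
  have hp : p.Prime := Fact.out
  have hh : 2 * (2 : ZMod (p ^ 3))⁻¹ = 1 := ZMod.mul_inv_of_unit 2 (isUnit_two hp (by lia))
  obtain ⟨z, hz, eq_z⟩ := exists_reducesTo_moment₂_zero hp (by lia) hp4 hh
  refine ⟨z, hz, ?_⟩
  have jacobi := quarticJacobiSum_mul_moritaGamma_sq hh hm hp4
  have half := moritaGamma_half_pow_four hp (by lia) hh
  have sign_sq := neg_one_pow_sq (R := ZMod (p ^ 3)) m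
  set S := quarticJacobiSum p m
  set a : ZMod (p ^ 3) := moritaGamma 2⁻¹
  set b : ZMod (p ^ 3) := moritaGamma (3 * 2⁻¹ * 2⁻¹)
  set ζ : ZMod (p ^ 3) := (-1) ^ m
  have sq_mul : S ^ 2 * b ^ 4 = a ^ 2 := by
    linear_combination (S * b ^ 2 + ζ * a) * jacobi + a ^ 2 * sign_sq
  have sq_mul_pow : b ^ 4 * a ^ 2 = w ^ 2 := by
    linear_combination w ^ 2 * a ^ 2 * sq_mul - b ^ 4 * a ^ 2 * (S * w + 1) * hw + w ^ 2 * half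
  linear_combination eq_z + p ^ 2 * ζ * sq_mul_pow

variable {x y : ℤ} (hxy : p = x ^ 2 + 4 * y ^ 2)
include hxy

omit hm in
-- For `J` the Jacobi sum in `ℤ[i]`, this is `(J + star J) ^ 2 = (2 * re J) ^ 2`.
theorem four_mul_sq_eq_quarticJacobiSum :
    4 * (x : ZMod (p ^ 3)) ^ 2 = quarticJacobiSum p m ^ 2 + 2 * p + p ^ 2 * w ^ 2 := by
  obtain ⟨a, b, odd_a, hab, z, mul_eq, add_eq⟩ :=
    exists_sq_add_sq_eq_and_quarticJacobiSum_add_eq hp4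
  have odd_x : Odd x := by
    refine Int.not_even_iff_odd.1 fun ⟨k, hk⟩ ↦ ?_
    rw [hk] at hxy
    ring_nf at hxy
    lia
  have sq_eq := sq_eq_sq_of_odd_of_sq_add_sq Fact.out (by lia) hab
    (show x ^ 2 + (2 * y) ^ 2 = p by rw [hxy]; ring) odd_a odd_x
  have cast_sq_eq : (a : ZMod (p ^ 3)) ^ 2 = (x : ZMod (p ^ 3)) ^ 2 := by
    exact_mod_cast congrArg (Int.cast : ℤ → ZMod (p ^ 3)) sq_eq
  obtain rfl : z = p * w := by linear_combination w * mul_eq - z * hw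
  rw [← cast_sq_eq]
  linear_combination 2 * mul_eq -
    (2 * (a : ZMod (p ^ 3)) + quarticJacobiSum p m + p * w) * add_eq

theorem isUnit_sq_of_one_mod_four : IsUnit ((x : ZMod (p ^ 3)) ^ 2) := by
  refine isUnit_of_mul_isUnit_right (x := 4) ?_
  rw [four_mul_sq_eq_quarticJacobiSum hp4 hw hxy]
  have nil : IsNilpotent (2 * p + (p : ZMod (p ^ 3)) ^ 2 * w ^ 2) := by
    rw [show 2 * p + (p : ZMod (p ^ 3)) ^ 2 * w ^ 2 = p * (2 + p * w ^ 2) by ring]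
    exact (Commute.all _ _).isNilpotent_mul_right ⟨3, natCast_pow_eq_zero p le_rfl⟩
  rw [add_assoc]
  exact nil.isUnit_add_left_of_commute ((isUnit_quarticJacobiSum hm hp4).pow 2) (.all _ _)

theorem exists_reducesTo_inv_sq : ∃ z, ReducesTo (p ^ 3) ((x : ℚ) ^ 2)⁻¹ z ∧
    (p : ZMod (p ^ 3)) ^ 2 * z = 4 * (p : ZMod (p ^ 3)) ^ 2 * w ^ 2 := by
  have unit := isUnit_sq_of_one_mod_four hm hp4 hw hxy
  refine ⟨_, ((ReducesTo.intCast x).pow 2).inv unit, ?_⟩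
  have four_mul_sq := four_mul_sq_eq_quarticJacobiSum hp4 hw hxy
  have hP : (p : ZMod (p ^ 3)) ^ 3 = 0 := natCast_pow_eq_zero p le_rfl
  have inv := ZMod.mul_inv_of_unit _ unit
  set ι := ((x : ZMod (p ^ 3)) ^ 2)⁻¹
  linear_combination -ι * w ^ 2 * p ^ 2 * four_mul_sq -
    ι * p ^ 2 * (quarticJacobiSum p m * w + 1) * hw + 4 * p ^ 2 * w ^ 2 * inv -
    ι * w ^ 2 * (2 + p * w ^ 2) * hP

omit hw in
theorem ratCongr_binomialSum_of_one_mod_four :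
    ratCongr p 3 ((-1) ^ m * binomialSum p 2)
        (x ^ 2 / 27 - p / 18 + p ^ 2 / (216 * x ^ 2)) ∧
      ratCongr p 3 ((-1) ^ m * binomialSum p 3)
        (-x ^ 2 / 162 - p / 216 - p ^ 2 / (1296 * x ^ 2)) := by
  have hp : p.Prime := Fact.out
  obtain ⟨w, hw⟩ := (isUnit_quarticJacobiSum hm hp4).exists_right_inv
  have hn : p = 2 * (2 * m) + 1 := by lia
  obtain ⟨q, hq, eq_q⟩ := exists_reducesTo_moment₁_cube hp hn (by lia)
    (moments_negSixthNode_two_mul_eq_zero hp hp4).1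
  obtain ⟨z, hz, eq_z⟩ := exists_reducesTo_moment₂_zero_of_one_mod_four hm hp4 hw
  obtain ⟨ι, hι, eq_ι⟩ := exists_reducesTo_inv_sq hm hp4 hw hxy
  obtain ⟨s₂, s₃, h₂, h₃, eq_s₂, eq_s₃⟩ := exists_reducesTo_binomialSum_two_three hp hn le_rfl
    (reducesTo_moment₀_zero_of_one_mod_four hm hp4) hq hz
  have four_mul_sq := four_mul_sq_eq_quarticJacobiSum hp4 hw hxy
  have sign : ReducesTo (p ^ 3) ((-1) ^ m) ((-1) ^ m) := ReducesTo.one.neg.pow m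
  have sign_sq := neg_one_pow_sq (R := ZMod (p ^ 3)) m
  have red_x : ReducesTo (p ^ 3) ((x : ℚ) ^ 2) ((x : ZMod (p ^ 3)) ^ 2) :=
    (ReducesTo.intCast x).pow 2
  have red_p : ReducesTo (p ^ 3) p p := .natCast p
  have u2 : IsUnit (2 : ZMod (p ^ 3)) := isUnit_two hp (by lia)
  have u3 : IsUnit (3 : ZMod (p ^ 3)) := isUnit_three hp (by lia)
  rw [Nat.mul_div_cancel_left m two_pos] at eq_q
  set S := quarticJacobiSum p m
  set ζ : ZMod (p ^ 3) := (-1) ^ m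
  constructor
  · refine ratCongr_of_reducesTo 216
      (z := 8 * (x : ZMod (p ^ 3)) ^ 2 - 12 * p + p ^ 2 * ι) ?_ ?_ ?_
    · convert (u2.pow 3).mul (u3.pow 3) using 1; norm_num
    · convert (ReducesTo.ofNat 216).mul (sign.mul h₂) using 1
      linear_combination -2 * ζ * eq_s₂ + 8 * ζ * eq_q - 6 * ζ * eq_z + 2 * four_mul_sq + eq_ι -
        (2 * S ^ 2 - 8 * p + 6 * p ^ 2 * w ^ 2) * sign_sq
    · convert (((ReducesTo.ofNat 8).mul red_x).sub ((ReducesTo.ofNat 12).mul red_p)).add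
        ((red_p.pow 2).mul hι) using 1
      ring
  · refine ratCongr_of_reducesTo 1296
      (z := -(8 * (x : ZMod (p ^ 3)) ^ 2) - 6 * p - p ^ 2 * ι) ?_ ?_ ?_
    · convert (u2.pow 4).mul (u3.pow 4) using 1; norm_num
    · convert (ReducesTo.ofNat 1296).mul (sign.mul h₃) using 1
      linear_combination -18 * ζ * eq_s₃ + 18 * ζ * eq_q + 18 * p * sign_sq + 2 * ζ * eq_s₂ -
        8 * ζ * eq_q + 6 * ζ * eq_z - 2 * four_mul_sq - eq_ι +
        (2 * S ^ 2 - 8 * p + 6 * p ^ 2 * w ^ 2) * sign_sq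
    · convert (((ReducesTo.ofNat 8).mul red_x).neg.sub ((ReducesTo.ofNat 6).mul red_p)).sub
        ((red_p.pow 2).mul hι) using 1
      ring

end OneModFour

theorem statement2 (p : ℕ) (hp : p.Prime) (hp2 : p ≠ 2) :
    (∀ x y : ℤ, p % 4 = 1 → (p : ℤ) = x^2 + 4*y^2 →
      ratCongr p 3
        ((-1:ℚ)^(p/4) *
          ∑ k ∈ Finset.range p, (k:ℚ)^2 * ((2*k).choose k : ℚ)^3 / (-512)^k)
        ((x:ℚ)^2/27 - (p:ℚ)/18 + (p:ℚ)^2/(216*(x:ℚ)^2)) ∧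
      ratCongr p 3
        ((-1:ℚ)^(p/4) *
          ∑ k ∈ Finset.range p, (k:ℚ)^3 * ((2*k).choose k : ℚ)^3 / (-512)^k)
        (-(x:ℚ)^2/162 - (p:ℚ)/216 - (p:ℚ)^2/(1296*(x:ℚ)^2))) ∧
    (p % 4 = 3 → p ≠ 3 →
      ratCongr p 2
        ((-1:ℚ)^(p/4) *
          ∑ k ∈ Finset.range p, (k:ℚ)^2 * ((2*k).choose k : ℚ)^3 / (-512)^k)
        (-(1/18)*R1 p - (p:ℚ)/27) ∧
      ratCongr p 2
        ((-1:ℚ)^(p/4) *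
          ∑ k ∈ Finset.range p, (k:ℚ)^3 * ((2*k).choose k : ℚ)^3 / (-512)^k)
        (1/108*R1 p - 5/648*(p:ℚ))) := by
  refine ⟨fun x y h1 hxy ↦ ?_, ratCongr_binomialSum_of_three_mod_four hp⟩
  have := Fact.mk hp
  rcases eq_or_ne p 5 with rfl | h5
  · exact ratCongr_binomialSum_five hxy
  · have h9 : p ≠ 9 := by
      rintro rfl
      norm_num at hp
    have two_le := hp.two_le
    exact ratCongr_binomialSum_of_one_mod_four (by lia) (by lia) hxy
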